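/- arXiv:2103.12917 — 3 statements merged into one kernel-verified Lean document; each statement's English description precedes it below -/
import Mathlib

section
/- Let κ be an infinite cardinal with κ^ω = κ and G = ℤ^(κ). Let (p_k : k ∈ ω) be pairwise Rudin–Keisler incomparable selective ultrafilters on ω, and for each k ∈ ω let ℱ^k be a countable subset of G^ω such that the classes [f]_{p_k} (f ∈ ℱ^k) are pairwise distinct and {[f]_{p_k} : f ∈ ℱ^k} ∪ {[χ⃗_ξ]_{p_k} : ξ < κ} is a ℚ-linearly independent subset of Ult(ℚ, p_k). For every f ∈ ⋃_k ℱ^k let ξ_f < κ be given. Let d, d' ∈ G be nonzero with disjoint supports, and let D ⊆ κ be a countably infinite set containing ω ∪ supp d ∪ supp d', containing ⋃_{n∈ω} supp f(n) for every f ∈ ⋃_k ℱ^k, and containing ξ_f for every f ∈ ⋃_k ℱ^k. Then there exists a group homomorphism φ : ℤ^(D) → 𝕋 such that φ(d) ≠ 0, φ(d') ≠ 0, and for every k ∈ ω and f ∈ ℱ^k the sequence (φ(f(n)) : n ∈ ω) has p_k-limit φ(χ_{ξ_f}) in 𝕋. -/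
open Cardinal Filter Set Pointwise

noncomputable section

/-- A free (nonprincipal) ultrafilter on ω. -/
def IsFreeUltrafilter (p : Ultrafilter ℕ) : Prop := ∀ n : ℕ, p ≠ pure n

/-- A selective ultrafilter on ω. -/
def IsSelective (p : Ultrafilter ℕ) : Prop :=
  IsFreeUltrafilter p ∧
  ∀ A : ℕ → Set ℕ,
    (∀ k, (A k).Nonempty) → (Pairwise fun k l => Disjoint (A k) (A l)) →
    (⋃ k, A k) = Set.univ →
    (∃ k, A k ∈ p) ∨ ∃ B ∈ p, ∀ k, ∃! n, n ∈ B ∩ A k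

/-- Rudin–Keisler order: `U ≤ V` iff `V = f_*(U)` for some `f`. -/
def RKle (U V : Ultrafilter ℕ) : Prop := ∃ f : ℕ → ℕ, Ultrafilter.map f U = V

/-- Rudin–Keisler incomparability. -/
def RKIncomp (U V : Ultrafilter ℕ) : Prop := ¬ RKle U V ∧ ¬ RKle V U

/-- The index set of order type (the initial ordinal of) `κ`. -/
abbrev Idx (κ : Cardinal) : Type _ := ↥(Set.Iio κ.ord)

/-- The free abelian group `ℤ^(κ)` of finitely supported integer functions on `κ`. -/
abbrev GZ (κ : Cardinal) := Idx κ →₀ ℤ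

/-- The ℚ-vector space `ℚ^(κ)` of finitely supported rational functions on `κ`. -/
abbrev GQ (κ : Cardinal) := Idx κ →₀ ℚ

/-- The canonical embedding `ℤ^(κ) → ℚ^(κ)`. -/
def toQ (κ : Cardinal) (f : GZ κ) : GQ κ :=
  Finsupp.mapRange (Int.cast : ℤ → ℚ) Int.cast_zero f

/-- The characteristic function `χ_ξ`. -/
def chi (κ : Cardinal) (ξ : Idx κ) : GZ κ := Finsupp.single ξ 1

/-- The class `[f]_p` of a sequence `f : ω → ℤ^(κ)` in the ultrapower
`Ult(ℚ, p) = (ℚ^(κ))^ω / p`, realized as a germ. -/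
def cls (κ : Cardinal) (p : Ultrafilter ℕ) (f : ℕ → GZ κ) :
    Filter.Germ (↑p : Filter ℕ) (GQ κ) :=
  (↑(fun n => toQ κ (f n)) : Filter.Germ (↑p : Filter ℕ) (GQ κ))

/-- The class `[χ⃗_ξ]_p` of the constant sequence with value `χ_ξ`. -/
def clsChi (κ : Cardinal) (p : Ultrafilter ℕ) (ξ : Idx κ) :
    Filter.Germ (↑p : Filter ℕ) (GQ κ) :=
  cls κ p (fun _ => chi κ ξ)

/-- `cls` as an additive homomorphism. -/
def clsHom (κ : Cardinal) (p : Ultrafilter ℕ) :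
    (ℕ → GZ κ) →+ Filter.Germ (↑p : Filter ℕ) (GQ κ) :=
  AddMonoidHom.mk' (cls κ p) (by
    intro a b
    unfold cls
    have h : (fun n => toQ κ ((a + b) n)) =
        (fun n => toQ κ (a n)) + (fun n => toQ κ (b n)) := by
      funext n
      simp only [Pi.add_apply, toQ]
      exact Finsupp.mapRange_add (fun x y => by push_cast; ring) _ _
    rw [h, ← Filter.Germ.coe_add])

/-- `Ult(ℤ, p)`: the subgroup of `Ult(ℚ, p)` consisting of classes of
integer-valued sequences. -/
def UltZ (κ : Cardinal) (p : Ultrafilter ℕ) :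
    AddSubgroup (Filter.Germ (↑p : Filter ℕ) (GQ κ)) :=
  (clsHom κ p).range

/-- `ℱ` is linearly independent mod `A*`. -/
def LinIndepMod (κ : Cardinal) (A : Set ℕ) (F : Set (ℕ → GZ κ)) : Prop :=
  ∀ p : Ultrafilter ℕ, IsFreeUltrafilter p → A ∈ p →
    (∀ f ∈ F, ∀ g ∈ F, f ≠ g → cls κ p f ≠ cls κ p g) ∧
    LinearIndependent ℚ
      (Sum.elim (fun f : F => cls κ p ↑f) (fun ξ : Idx κ => clsChi κ p ξ))

/-- `ℰ` is maximal (w.r.t. inclusion) among subsets linearly independent mod `A*`. -/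
def MaximalLinIndepMod (κ : Cardinal) (A : Set ℕ) (E : Set (ℕ → GZ κ)) : Prop :=
  LinIndepMod κ A E ∧ ∀ E' : Set (ℕ → GZ κ), LinIndepMod κ A E' → E ⊆ E' → E' = E

/-- A finite tower in ω: a finite decreasing sequence of infinite subsets of ω. -/
def IsTower (T : List (Set ℕ)) : Prop :=
  (∀ A ∈ T, A.Infinite) ∧
  ∀ i : ℕ, ∀ h : i + 1 < T.length, T.get ⟨i + 1, h⟩ ⊆ T.get ⟨i, Nat.lt_of_succ_lt h⟩

/-- `l(T)`: the last term of a finite tower, with `l(∅) = ω`. -/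
def lastOf (T : List (Set ℕ)) : Set ℕ := T.getLastD Set.univ

/-- `x` is a `p`-limit of the sequence `s`. -/
def IsPLim {X : Type*} [TopologicalSpace X] (p : Ultrafilter ℕ) (s : ℕ → X) (x : X) : Prop :=
  ∀ U ∈ nhds x, {n | s n ∈ U} ∈ p

/-- Countable compactness: every countable open cover has a finite subcover. -/
def CountablyCompactSp (X : Type*) [TopologicalSpace X] : Prop :=
  ∀ 𝒰 : Set (Set X), 𝒰.Countable → (∀ u ∈ 𝒰, IsOpen u) → ⋃₀ 𝒰 = Set.univ →
    ∃ ℱ ⊆ 𝒰, ℱ.Finite ∧ ⋃₀ ℱ = Set.univ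


/-- membership in `ℤ^(D)` from a support condition. -/
lemma mem_suppD {κ : Cardinal} {D : Set (Idx κ)} {x : GZ κ}
    (h : ↑x.support ⊆ D) : x ∈ Finsupp.supported ℤ ℤ D :=
  (Finsupp.mem_supported ℤ x).2 h

lemma chi_mem_suppD {κ : Cardinal} {D : Set (Idx κ)} {ξ : Idx κ}
    (h : ξ ∈ D) : chi κ ξ ∈ Finsupp.supported ℤ ℤ D := by
  apply (Finsupp.mem_supported ℤ _).2
  intro a ha
  have : a ∈ ({ξ} : Finset (Idx κ)) := Finsupp.support_single_subset ha
  rw [Finset.mem_singleton] at this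
  subst this
  exact h

lemma aux_fin_notMem {p : Ultrafilter ℕ} (hp : IsFreeUltrafilter p) {s : Set ℕ} (hs : s.Finite) :
    sᶜ ∈ p := by
  rw [Ultrafilter.compl_mem_iff_notMem]
  intro h
  obtain ⟨x, _, hx⟩ := Ultrafilter.eq_pure_of_finite_mem hs h
  exact hp x hx

lemma aux_ramsey {p : Ultrafilter ℕ} (hp : IsSelective p) (g : ℕ → ℕ) :
    (∃ c, g ⁻¹' {c} ∈ p) ∨ ∃ B ∈ p, Set.InjOn g B := by
  by_cases hfin : (Set.range g).Finite
  · left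
    have h1 : Set.range g ∈ Ultrafilter.map g p := by
      rw [Ultrafilter.mem_map]; simp only [Set.preimage_range]; exact Filter.univ_mem
    obtain ⟨x, _, hx⟩ := Ultrafilter.eq_pure_of_finite_mem hfin h1
    refine ⟨x, ?_⟩
    rw [← Ultrafilter.mem_map, hx]
    exact Ultrafilter.mem_pure.2 rfl
  · have hinf : (Set.range g).Infinite := hfin
    have := hinf.to_subtype
    obtain ⟨e⟩ : Nonempty (Set.range g ≃ ℕ) := nonempty_equiv_of_countable
    have h1 : ∀ k, (g ⁻¹' {((e.symm k : Set.range g) : ℕ)}).Nonempty := by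
      intro k
      obtain ⟨n, hn⟩ := (e.symm k).2
      exact ⟨n, by simp [hn]⟩
    have h2 : Pairwise fun k l => Disjoint (g ⁻¹' {((e.symm k : Set.range g) : ℕ)})
        (g ⁻¹' {((e.symm l : Set.range g) : ℕ)}) := by
      intro k l hkl
      rw [Set.disjoint_left]
      intro n hn hn'
      apply hkl
      apply e.symm.injective
      apply Subtype.ext
      rw [← (show g n = _ from hn), ← (show g n = _ from hn')]
    have h3 : (⋃ k, g ⁻¹' {((e.symm k : Set.range g) : ℕ)}) = Set.univ := by
      ext n
      simp only [Set.mem_iUnion, Set.mem_univ, iff_true]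
      exact ⟨e ⟨g n, n, rfl⟩, by simp⟩
    rcases hp.2 _ h1 h2 h3 with ⟨k, hk⟩ | ⟨B, hB, h⟩
    · left; exact ⟨_, hk⟩
    · right
      refine ⟨B, hB, ?_⟩
      intro a ha b hb hab
      have := h (e ⟨g a, a, rfl⟩)
      refine this.unique ⟨ha, ?_⟩ ⟨hb, ?_⟩
      · simp
      · simp [hab]

lemma aux_ppoint {p : Ultrafilter ℕ} (hp : IsSelective p) (A : ℕ → Set ℕ) (hA : ∀ N, A N ∈ p) :
    ∃ X ∈ p, ∀ N, (X \ A N).Finite := by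
  classical
  let A' : ℕ → Set ℕ := fun N => A N ∩ {n | N < n}
  have hA' : ∀ N, A' N ∈ p := fun N => by
    refine Filter.inter_mem (hA N) ?_
    have := aux_fin_notMem hp.1 (Set.finite_le_nat N)
    have he : {n | N < n} = {i | i ≤ N}ᶜ := by ext n; simp
    rw [he]; exact this
  have hex : ∀ n, ∃ N, n ∉ A' N := fun n => ⟨n, by simp [A']⟩
  let g : ℕ → ℕ := fun n => Nat.find (hex n)
  rcases aux_ramsey hp g with ⟨c, hc⟩ | ⟨B, hB, hinj⟩
  · exfalso
    obtain ⟨n, hn1, hn2⟩ := Ultrafilter.nonempty_of_mem (Filter.inter_mem hc (hA' c))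
    have : g n = c := hn1
    exact Nat.find_spec (hex n) (by rw [show Nat.find (hex n) = c from this]; exact hn2)
  · refine ⟨B, hB, fun N => ?_⟩
    refine Set.Finite.of_finite_image (f := g) ?_ (hinj.mono Set.sdiff_subset)
    refine (Set.finite_le_nat N).subset ?_
    rintro _ ⟨n, hn, rfl⟩
    exact Nat.find_min' (hex n) (fun h => hn.2 h.1)

lemma aux_sep {p q : Ultrafilter ℕ} (h : ¬ RKle p q) (a b : ℕ → ℕ) {Y : Set ℕ} (hY : Y ∈ q)
    (hb : Set.InjOn b Y) : ∃ U ∈ p, ∃ V ∈ q, ∀ m ∈ U, ∀ n ∈ V, a m ≠ b n := by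
  have hne : Ultrafilter.map a p ≠ Ultrafilter.map b q := by
    intro heq
    apply h
    refine ⟨Function.invFunOn b Y ∘ a, ?_⟩
    rw [← Ultrafilter.map_map, heq, Ultrafilter.map_map]
    apply Ultrafilter.coe_injective
    rw [Ultrafilter.coe_map]
    have : (Function.invFunOn b Y ∘ b) =ᶠ[(q : Filter ℕ)] id := by
      filter_upwards [hY] with n hn
      exact hb.leftInvOn_invFunOn hn
    rw [Filter.map_congr this, Filter.map_id]
  have : ∃ W, W ∈ Ultrafilter.map a p ∧ W ∉ Ultrafilter.map b q := by
    by_contra hcon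
    push Not at hcon
    apply hne
    apply Ultrafilter.coe_injective
    exact (Ultrafilter.eq_of_le (f := Ultrafilter.map b q) (g := Ultrafilter.map a p)
      (fun s hs => hcon s hs)) ▸ rfl
  obtain ⟨W, h1, h2⟩ := this
  refine ⟨a ⁻¹' W, h1, b ⁻¹' Wᶜ, ?_, ?_⟩
  · rw [← Ultrafilter.mem_map, Ultrafilter.compl_mem_iff_notMem]; exact h2
  · intro m hm n hn he
    exact hn (by rw [← he]; exact hm)

/-- interval function -/
lemma aux_interval (h : ℕ → ℕ) (hmono : Monotone h) (hlt : ∀ n, n < h n) :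
    ∃ j : ℕ → ℕ, Monotone j ∧ (∀ c, (j ⁻¹' {c}).Finite) ∧
      ∀ n' n, j n' + 2 ≤ j n → h n' ≤ n := by
  let a : ℕ → ℕ := fun i => h^[i] 0
  have ha : ∀ i, a (i+1) = h (a i) := fun i => Function.iterate_succ_apply' h i 0
  have hsm : StrictMono a := strictMono_nat_of_lt_succ fun i => by rw [ha]; exact hlt _
  have hex : ∀ n, ∃ i, n < a (i+1) := fun n => ⟨n, lt_of_lt_of_le (Nat.lt_succ_self n) (hsm.id_le _)⟩
  let j : ℕ → ℕ := fun n => Nat.find (hex n)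
  have hj : ∀ n, n < a (j n + 1) := fun n => Nat.find_spec (hex n)
  have hj2 : ∀ n i, i < j n → a (i+1) ≤ n := fun n i hi => not_lt.1 (Nat.find_min (hex n) hi)
  refine ⟨j, ?_, ?_, ?_⟩
  · intro m n hmn
    exact Nat.find_min' (hex m) (lt_of_le_of_lt hmn (hj n))
  · intro c
    refine (Set.finite_lt_nat (a (c+1))).subset ?_
    intro n hn
    have : j n = c := hn
    rw [← this]; exact hj n
  · intro n' n hle
    calc h n' ≤ h (a (j n' + 1)) := hmono (hj n').le
      _ = a (j n' + 1 + 1) := (ha _).symm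
      _ ≤ n := hj2 n _ (by omega)

lemma aux_comb (p : ℕ → Ultrafilter ℕ) (hsel : ∀ k, IsSelective (p k))
    (hinc : ∀ k l, k ≠ l → RKIncomp (p k) (p l)) (A : ℕ → ℕ → Set ℕ)
    (hA : ∀ N k, A N k ∈ p k) :
    ∃ B : ℕ → Set ℕ, (∀ k, B k ∈ p k) ∧ (∀ k l n, n ∈ B k → n ∈ B l → k = l) ∧
      ∀ k l n n', n ∈ B k → n' ∈ B l → n' < n → n ∈ A n' k := by
  classical
  choose X hX hXfin using fun k => aux_ppoint (hsel k) (fun N => A N k) (fun N => hA N k)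
  have hb : ∀ k N, ∃ b, ∀ n ∈ X k, b ≤ n → n ∈ A N k := by
    intro k N
    obtain ⟨b, hb⟩ := (hXfin k N).bddAbove
    refine ⟨b + 1, fun n hn hbn => ?_⟩
    by_contra hcon
    have := hb ⟨hn, hcon⟩
    omega
  choose b hb using hb
  -- common bound
  let h : ℕ → ℕ := fun N => N + 1 + ∑ k ∈ Finset.range (N+1), ∑ i ∈ Finset.range (N+1), b k i
  have hmono : Monotone h := by
    intro M N hMN
    simp only [h]
    refine add_le_add (by omega) ?_
    have hr : Finset.range (M+1) ⊆ Finset.range (N+1) := Finset.range_mono (by omega)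
    refine (Finset.sum_le_sum_of_subset hr).trans ?_
    exact Finset.sum_le_sum fun k _ => Finset.sum_le_sum_of_subset hr
  have hlt : ∀ n, n < h n := fun n => by simp only [h]; omega
  have hbh : ∀ k N M, k ≤ M → N ≤ M → b k N ≤ h M := by
    intro k N M hk hN
    have h1 : b k N ≤ ∑ i ∈ Finset.range (M+1), b k i :=
      Finset.single_le_sum (f := fun i => b k i) (fun _ _ => Nat.zero_le _) (Finset.mem_range.2 (by omega))
    have h2 : ∑ i ∈ Finset.range (M+1), b k i ≤ ∑ k ∈ Finset.range (M+1), ∑ i ∈ Finset.range (M+1), b k i :=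
      Finset.single_le_sum (f := fun k => ∑ i ∈ Finset.range (M+1), b k i)
        (fun _ _ => Nat.zero_le _) (Finset.mem_range.2 (by omega))
    simp only [h]; omega
  obtain ⟨j, hjm, hjf, hjh⟩ := aux_interval h hmono hlt
  have hY : ∀ k, ∃ Y ∈ p k, Set.InjOn j Y := by
    intro k
    rcases aux_ramsey (hsel k) j with ⟨c, hc⟩ | hY
    · exact absurd hc (Ultrafilter.compl_mem_iff_notMem.1 (aux_fin_notMem (hsel k).1 (hjf c)))
    · exact hY
  choose Y hYp hYinj using hY
  have hpar : ∀ k, ∃ P ∈ p k, ∀ n ∈ P, ∀ n' ∈ P, j n % 2 = j n' % 2 := by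
    intro k
    rcases Ultrafilter.mem_or_compl_mem (p k) {n | j n % 2 = 0} with hP | hP
    · exact ⟨_, hP, fun n hn n' hn' => by simp at hn hn'; omega⟩
    · exact ⟨_, hP, fun n hn n' hn' => by simp at hn hn'; omega⟩
  choose P hP hPp using hpar
  let close : ℕ → ℕ → Prop := fun m n => j m ≤ j n + 1 ∧ j n ≤ j m + 1
  have hpair : ∀ k l, ∃ U : Set ℕ × Set ℕ, k ≠ l → U.1 ∈ p k ∧ U.2 ∈ p l ∧
      ∀ m ∈ U.1, ∀ n ∈ U.2, ¬ close m n := by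
    intro k l
    by_cases hkl : k = l
    · exact ⟨(∅, ∅), fun h => absurd hkl h⟩
    have hn := (hinc k l hkl).1
    obtain ⟨U1, hU1, V1, hV1, h1⟩ := aux_sep hn j j (hYp l) (hYinj l)
    obtain ⟨U2, hU2, V2, hV2, h2⟩ := aux_sep hn (fun n => j n + 1) j (hYp l) (hYinj l)
    obtain ⟨U3, hU3, V3, hV3, h3⟩ := aux_sep hn j (fun n => j n + 1) (hYp l)
      (fun x hx y hy hxy => hYinj l hx hy (by simpa using hxy))
    refine ⟨(U1 ∩ U2 ∩ U3, V1 ∩ V2 ∩ V3), fun _ => ⟨Filter.inter_mem (Filter.inter_mem hU1 hU2) hU3,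
      Filter.inter_mem (Filter.inter_mem hV1 hV2) hV3, ?_⟩⟩
    rintro m ⟨⟨m1, m2⟩, m3⟩ n ⟨⟨n1, n2⟩, n3⟩ ⟨c1, c2⟩
    have e1 := h1 m m1 n n1
    have e2 := h2 m m2 n n2
    have e3 := h3 m m3 n n3
    omega
  choose U hU using hpair
  -- V k l ∈ p k, for k ≠ l; V k l, V l k have no close pairs
  let V : ℕ → ℕ → Set ℕ := fun k l => if k < l then (U k l).1 else if l < k then (U l k).2 else Set.univ
  have hV : ∀ k l, V k l ∈ p k := by
    intro k l
    simp only [V]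
    split_ifs with h1 h2
    · exact (hU k l h1.ne).1
    · exact (hU l k h2.ne).2.1
    · exact Filter.univ_mem
  have hVV : ∀ l k, l < k → ∀ m ∈ V l k, ∀ n ∈ V k l, ¬ close m n := by
    intro l k hlk m hm n hn
    simp only [V, if_pos hlk, if_neg (not_lt.2 hlk.le)] at hm hn
    exact (hU l k hlk.ne).2.2 m hm n hn
  choose Z hZ hZfin using fun k => aux_ppoint (hsel k) (V k) (hV k)
  let Q : ℕ → ℕ → Set ℕ := fun l k => {n | ∃ m ∈ Z l \ V l k, close m n}
  have hQ : ∀ l k, (Q l k).Finite := by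
    intro l k
    have : Q l k ⊆ ⋃ m ∈ Z l \ V l k, ⋃ c ∈ Finset.range (j m + 2), j ⁻¹' {c} := by
      rintro n ⟨m, hm, hc⟩
      simp only [Set.mem_iUnion]
      exact ⟨m, hm, j n, Finset.mem_range.2 (by have := hc.2; omega), rfl⟩
    refine Set.Finite.subset ?_ this
    refine (hZfin l k).biUnion fun m _ => ?_
    exact (Finset.finite_toSet _).biUnion fun c _ => hjf c
  let B : ℕ → Set ℕ := fun k => (X k ∩ Y k ∩ P k ∩ Z k ∩ {n | n < h k}ᶜ) ∩
    ⋂ l ∈ Finset.range k, (V k l ∩ (Q l k)ᶜ)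
  have hBB : ∀ k l n n', n ∈ B k → n' ∈ B l → l < k → ¬ close n' n := by
    intro k l n n' hn hn' hlk hc
    have h1 := hn.2
    simp only [Set.mem_iInter] at h1
    obtain ⟨h2, h3⟩ := h1 l (Finset.mem_range.2 hlk)
    by_cases h4 : n' ∈ V l k
    · exact hVV l k hlk n' h4 n h2 hc
    · exact h3 ⟨n', ⟨hn'.1.1.2, h4⟩, hc⟩
  have hBB' : ∀ k l n n', n ∈ B k → n' ∈ B l → k ≠ l → ¬ close n' n := by
    intro k l n n' hn hn' hkl
    rcases lt_or_gt_of_ne hkl with h1 | h1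
    · intro hc; exact hBB l k n' n hn' hn h1 ⟨hc.2, hc.1⟩
    · exact hBB k l n n' hn hn' h1
  refine ⟨B, ?_, ?_, ?_⟩
  · intro k
    refine Filter.inter_mem (Filter.inter_mem (Filter.inter_mem (Filter.inter_mem
      (Filter.inter_mem (hX k) (hYp k)) (hP k)) (hZ k)) ?_) ?_
    · exact aux_fin_notMem (hsel k).1 (Set.finite_lt_nat _)
    · rw [Filter.biInter_finset_mem]
      intro l _
      exact Filter.inter_mem (hV k l) (aux_fin_notMem (hsel k).1 (hQ l k))
  · intro k l n hn hn'
    by_contra hkl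
    exact hBB' k l n n hn hn' hkl ⟨by omega, by omega⟩
  · intro k l n n' hn hn' hlt'
    have hnc : ¬ close n' n := by
      by_cases hkl : k = l
      · subst hkl
        intro hc
        have h1 := hPp k n hn.1.1.1.2 n' hn'.1.1.1.2
        have h2 : j n = j n' := by have := hc.1; have := hc.2; omega
        have := hYinj k hn.1.1.1.1.2 hn'.1.1.1.1.2 h2
        omega
      · exact hBB' k l n n' hn hn' hkl
    have hjle := hjm hlt'.le
    have h1 : h n' ≤ n := hjh n' n (by
      by_contra hcon
      exact hnc ⟨by omega, by omega⟩)
    have h2 : h k ≤ n := not_lt.1 hn.1.2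
    apply hb k n' n hn.1.1.1.1.1
    rcases le_total k n' with h3 | h3
    · exact (hbh k n' n' h3 le_rfl).trans h1
    · exact (hbh k n' k le_rfl h3).trans h2

open MeasureTheory in
/-- uniform probability measure on `(0, δ]` -/
def auxRho (δ : ℝ) : Measure ℝ := (ENNReal.ofReal δ)⁻¹ • (volume.restrict (Set.Ioc 0 δ))

open MeasureTheory in
lemma auxRho_prob {δ : ℝ} (hδ : 0 < δ) : IsProbabilityMeasure (auxRho δ) := by
  constructor
  simp only [auxRho, Measure.smul_apply, Measure.restrict_apply MeasurableSet.univ, Set.univ_inter,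
    Real.volume_Ioc, sub_zero, smul_eq_mul]
  exact ENNReal.inv_mul_cancel (by simpa using hδ) ENNReal.ofReal_ne_top

open MeasureTheory in
lemma auxRho_ae {δ : ℝ} : ∀ᵐ u ∂(auxRho δ), u ∈ Set.Ioc 0 δ := by
  unfold auxRho
  exact Measure.ae_smul_measure (ae_restrict_mem measurableSet_Ioc) _

open MeasureTheory in
lemma auxRho_integral {δ : ℝ} (hδ : 0 < δ) {a : ℤ} (ha : a ≠ 0) :
    ∫ u, fourier (T := (1:ℝ)) a (u : AddCircle (1:ℝ)) ∂(auxRho δ) =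
      (δ : ℂ)⁻¹ * ((Complex.exp (2 * Real.pi * Complex.I * a * δ) - 1) /
        (2 * Real.pi * Complex.I * a)) := by
  unfold auxRho
  rw [integral_smul_measure, ← intervalIntegral.integral_of_le hδ.le]
  have hc : (2 * Real.pi * Complex.I * a : ℂ) ≠ 0 := by
    have : (a : ℂ) ≠ 0 := by exact_mod_cast ha
    have h2 : (Real.pi : ℂ) ≠ 0 := by exact_mod_cast Real.pi_ne_zero
    simp [this, h2]
  have := integral_exp_mul_complex (a := 0) (b := δ) hc
  have h2 : ∀ x : ℝ, fourier (T := (1:ℝ)) a (x : AddCircle (1:ℝ)) =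
      Complex.exp (2 * Real.pi * Complex.I * a * x) := by
    intro x; rw [fourier_coe_apply]; simp
  simp_rw [h2]
  rw [this]
  simp [ENNReal.toReal_ofReal hδ.le]

open MeasureTheory in
lemma auxRho_integral_one {a : ℤ} (ha : a ≠ 0) :
    ∫ u, fourier (T := (1:ℝ)) a (u : AddCircle (1:ℝ)) ∂(auxRho 1) = 0 := by
  rw [auxRho_integral one_pos ha]
  have : Complex.exp (2 * Real.pi * Complex.I * a * (1:ℝ)) = 1 := by
    rw [Complex.exp_eq_one_iff]; exact ⟨a, by push_cast; ring⟩
  rw [this]; simp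

open MeasureTheory in
lemma auxRho_integral_le {δ : ℝ} (hδ : 0 < δ) {a : ℤ} (ha : a ≠ 0) :
    ‖∫ u, fourier (T := (1:ℝ)) a (u : AddCircle (1:ℝ)) ∂(auxRho δ)‖ ≤ δ⁻¹ * (1 / |(a:ℝ)|) := by
  rw [auxRho_integral hδ ha, norm_mul, norm_inv, Complex.norm_real, Real.norm_of_nonneg hδ.le]
  gcongr
  rw [norm_div]
  have h1 : ‖Complex.exp (2 * Real.pi * Complex.I * a * δ) - 1‖ ≤ 2 := by
    refine (norm_sub_le _ _).trans ?_
    have : (2 * Real.pi * Complex.I * a * δ : ℂ) = ((2 * Real.pi * a * δ : ℝ) : ℂ) * Complex.I := by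
      push_cast; ring
    rw [this, Complex.norm_exp_ofReal_mul_I]; norm_num
  have h2 : ‖(2 * Real.pi * Complex.I * a : ℂ)‖ = 2 * Real.pi * |(a:ℝ)| := by
    simp [abs_of_pos Real.pi_pos]
  rw [h2]
  have h3 : 0 < |(a:ℝ)| := abs_pos.2 (by exact_mod_cast ha)
  rw [div_le_div_iff₀ (by positivity) h3]
  nlinarith [Real.pi_gt_three]

open MeasureTheory in
lemma auxRho_integral_norm_le {δ : ℝ} (hδ : 0 < δ) (a : ℤ) :
    ‖∫ u, fourier (T := (1:ℝ)) a (u : AddCircle (1:ℝ)) ∂(auxRho δ)‖ ≤ 1 := by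
  have := auxRho_prob hδ
  refine (norm_integral_le_of_norm_le_const (C := 1) (Filter.Eventually.of_forall fun u => ?_)).trans ?_
  · rw [fourier_apply]; exact (Circle.norm_coe _).le
  · simp

open MeasureTheory in
/-- Haar integral of nontrivial monomials -/
lemma aux_haar_mFourier {ι : Type*} [Fintype ι] {m : ι → ℤ} (hm : m ≠ 0) :
    ∫ x, UnitAddTorus.mFourier m x ∂(Measure.pi (fun _ : ι => (volume : Measure UnitAddCircle))) = 0 := by
  obtain ⟨i, hi⟩ := Function.ne_iff.1 hm
  change ∫ x : ι → UnitAddCircle, ∏ i, fourier (T := (1:ℝ)) (m i) (x i) ∂_ = 0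
  rw [integral_fintype_prod_eq_prod (fun i x => fourier (T := (1:ℝ)) (m i) x)]
  apply Finset.prod_eq_zero (Finset.mem_univ i)
  rw [← UnitAddCircle.intervalIntegral_preimage 0, intervalIntegral.integral_of_le (by norm_num)]
  have := auxRho_integral_one (a := m i) hi
  simpa [auxRho] using this

open MeasureTheory in
lemma aux_weyl {ι : Type*} [Fintype ι] (p : Filter ℕ) (μ : ℕ → Measure (UnitAddTorus ι))
    (hμ : ∀ n, IsProbabilityMeasure (μ n))
    (h : ∀ m : ι → ℤ, m ≠ 0 → Tendsto (fun n => ∫ x, UnitAddTorus.mFourier m x ∂(μ n)) p (nhds 0))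
    (F : C(UnitAddTorus ι, ℂ)) :
    Tendsto (fun n => ∫ x, F x ∂(μ n)) p
      (nhds (∫ x, F x ∂(Measure.pi (fun _ : ι => (volume : Measure UnitAddCircle))))) := by
  set ν : Measure (UnitAddTorus ι) := Measure.pi (fun _ : ι => (volume : Measure UnitAddCircle)) with hν
  have hP : IsProbabilityMeasure (volume : Measure UnitAddCircle) := ⟨UnitAddCircle.measure_univ⟩
  have hνP : IsProbabilityMeasure ν := by rw [hν]; infer_instance
  have hIntegrable : ∀ (G : C(UnitAddTorus ι, ℂ)) (ρ : Measure (UnitAddTorus ι)) [IsProbabilityMeasure ρ],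
      Integrable (fun x => G x) ρ := by
    intro G ρ _
    refine Integrable.of_bound G.continuous.aestronglyMeasurable ‖G‖
      (Filter.Eventually.of_forall fun x => G.norm_coe_le_norm x)
  have hspan : ∀ G ∈ Submodule.span ℂ (Set.range (UnitAddTorus.mFourier (d := ι))),
      Tendsto (fun n => ∫ x, G x ∂(μ n)) p (nhds (∫ x, G x ∂ν)) := by
    intro G hG
    induction hG using Submodule.span_induction with
    | mem G hG =>
      obtain ⟨m, rfl⟩ := hG
      by_cases hm : m = 0
      · subst hm
        simp [UnitAddTorus.mFourier_zero, tendsto_const_nhds]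
      · rw [hν, aux_haar_mFourier hm]; exact h m hm
    | zero => simp [tendsto_const_nhds]
    | add G H _ _ hG hH =>
      have := hG.add hH
      simp only [ContinuousMap.add_apply]
      rw [integral_add (hIntegrable G ν) (hIntegrable H ν)]
      refine this.congr fun n => ?_
      rw [integral_add (hIntegrable G _) (hIntegrable H _)]
    | smul c G _ hG =>
      simp only [ContinuousMap.smul_apply, integral_smul]
      exact hG.const_smul c
  have hdiff : ∀ (G H : C(UnitAddTorus ι, ℂ)) (ρ : Measure (UnitAddTorus ι)) [IsProbabilityMeasure ρ],
      ‖∫ x, G x ∂ρ - ∫ x, H x ∂ρ‖ ≤ ‖G - H‖ := by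
    intro G H ρ _
    rw [← integral_sub (hIntegrable G ρ) (hIntegrable H ρ)]
    refine (norm_integral_le_of_norm_le_const (C := ‖G - H‖) (Filter.Eventually.of_forall fun u => ?_)).trans ?_
    · exact (G - H).norm_coe_le_norm u
    · simp
  rw [Metric.tendsto_nhds]
  intro ε hε
  have hF : F ∈ (Submodule.span ℂ (Set.range (UnitAddTorus.mFourier (d := ι)))).topologicalClosure := by
    rw [UnitAddTorus.span_mFourier_closure_eq_top]; trivial
  obtain ⟨G, hG, hFG⟩ := Metric.mem_closure_iff.1 hF (ε/3) (by positivity)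
  rw [dist_eq_norm] at hFG
  filter_upwards [Metric.tendsto_nhds.1 (hspan G hG) (ε/3) (by positivity)] with n hn
  have e1 := hdiff F G (μ n)
  have e2 := hdiff F G ν
  rw [← dist_eq_norm] at e1 e2
  rw [dist_comm] at e2
  have t1 := dist_triangle4 (∫ x, F x ∂(μ n)) (∫ x, G x ∂(μ n)) (∫ x, G x ∂ν) (∫ x, F x ∂ν)
  linarith

open MeasureTheory in
lemma aux_hit {ι : Type*} [Fintype ι] (p : Filter ℕ) (μ : ℕ → Measure (UnitAddTorus ι))
    (hμ : ∀ n, IsProbabilityMeasure (μ n))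
    (h : ∀ m : ι → ℤ, m ≠ 0 → Tendsto (fun n => ∫ x, UnitAddTorus.mFourier m x ∂(μ n)) p (nhds 0))
    (y : UnitAddTorus ι) {r : ℝ} (hr : 0 < r) : ∀ᶠ n in p, μ n (Metric.ball y r) ≠ 0 := by
  have hP : IsProbabilityMeasure (volume : Measure UnitAddCircle) := ⟨UnitAddCircle.measure_univ⟩
  let b : UnitAddTorus ι → ℝ := fun x => max 0 (r - dist x y)
  have hb : Continuous b := by fun_prop
  let F : C(UnitAddTorus ι, ℂ) := ⟨fun x => (b x : ℂ), by fun_prop⟩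
  have hpos : 0 < ∫ x, b x ∂(Measure.pi (fun _ : ι => (volume : Measure UnitAddCircle))) := by
    refine hb.integral_pos_of_hasCompactSupport_nonneg_nonzero (x := y) ?_ ?_ ?_
    · exact HasCompactSupport.of_compactSpace _
    · intro x; exact le_max_left _ _
    · simp [b]; exact hr
  have hT := aux_weyl p μ hμ h F
  have hne : ∫ x, F x ∂(Measure.pi (fun _ : ι => (volume : Measure UnitAddCircle))) ≠ 0 := by
    have he : ∫ x, F x ∂(Measure.pi (fun _ : ι => (volume : Measure UnitAddCircle))) =
        ((∫ x, b x ∂(Measure.pi (fun _ : ι => (volume : Measure UnitAddCircle))) : ℝ) : ℂ) :=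
      integral_ofReal (𝕜 := ℂ) (f := b)
    rw [he]
    exact_mod_cast hpos.ne'
  filter_upwards [hT.eventually_ne hne] with n hn h0
  apply hn
  apply integral_eq_zero_of_ae
  have : ∀ᵐ x ∂(μ n), x ∉ Metric.ball y r := measure_eq_zero_iff_ae_notMem.1 h0
  filter_upwards [this] with x hx
  rw [Metric.mem_ball, not_lt] at hx
  simp [F, b, hx]

lemma aux_toCircle_sum {ι : Type*} (s : Finset ι) (a : ι → AddCircle (1:ℝ)) :
    ((AddCircle.toCircle (∑ i ∈ s, a i) : Circle) : ℂ) = ∏ i ∈ s, ((AddCircle.toCircle (a i) : Circle) : ℂ) := by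
  classical
  induction s using Finset.induction_on with
  | empty => simp
  | insert i s hi ih => rw [Finset.sum_insert hi, Finset.prod_insert hi, AddCircle.toCircle_add, Circle.coe_mul, ih]

open MeasureTheory in
lemma aux_measure {ι S : Type*} [Fintype ι] [Fintype S] (c : ι → S → ℤ) (ε : S → ℝ) (hε : ∀ s, 0 < ε s) :
    ∃ μ : Measure (UnitAddTorus ι), IsProbabilityMeasure μ ∧
      (∀ U : Set (UnitAddTorus ι), IsOpen U → μ U ≠ 0 → ∃ u : S → ℝ, (∀ s, u s ∈ Set.Ioc 0 (ε s)) ∧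
        (fun i => ∑ s, c i s • ((u s : ℝ) : AddCircle (1:ℝ))) ∈ U) ∧
      ∀ m : ι → ℤ, ∫ x, UnitAddTorus.mFourier m x ∂μ =
        ∏ s, ∫ u, fourier (T := (1:ℝ)) (∑ i, m i * c i s) (u : AddCircle (1:ℝ)) ∂(auxRho (ε s)) := by
  have hP := fun s => auxRho_prob (hε s)
  let Φ : (S → ℝ) → UnitAddTorus ι := fun u i => ∑ s, c i s • ((u s : ℝ) : AddCircle (1:ℝ))
  have hΦ : Continuous Φ := by
    refine continuous_pi fun i => continuous_finsetSum _ fun s _ => ?_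
    exact Continuous.zsmul ((AddCircle.continuous_mk' _).comp (continuous_apply s)) _
  refine ⟨Measure.map Φ (Measure.pi fun s => auxRho (ε s)), ?_, ?_, ?_⟩
  · exact Measure.isProbabilityMeasure_map hΦ.measurable.aemeasurable
  · intro U hU hne
    rw [Measure.map_apply hΦ.measurable hU.measurableSet] at hne
    by_contra hcon
    push Not at hcon
    apply hne
    rw [measure_eq_zero_iff_ae_notMem]
    have : ∀ᵐ u ∂(Measure.pi fun s => auxRho (ε s)), ∀ s, u s ∈ Set.Ioc 0 (ε s) := by
      rw [ae_all_iff]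
      intro s
      exact Measure.tendsto_eval_ae_ae.eventually auxRho_ae
    filter_upwards [this] with u hu
    exact hcon u hu
  · intro m
    rw [integral_map hΦ.measurable.aemeasurable
      (UnitAddTorus.mFourier m).continuous.aestronglyMeasurable]
    rw [← integral_fintype_prod_eq_prod (fun s (u : ℝ) =>
      fourier (T := (1:ℝ)) (∑ i, m i * c i s) (u : AddCircle (1:ℝ)))]
    congr 1
    funext u
    change ∏ i, fourier (T := (1:ℝ)) (m i) (∑ s, c i s • ((u s : ℝ) : AddCircle (1:ℝ))) = _
    simp only [fourier_apply]
    rw [← aux_toCircle_sum, ← aux_toCircle_sum]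
    congr 2
    simp only [Finset.smul_sum, Finset.sum_smul, smul_smul]
    rw [Finset.sum_comm]

lemma aux_core {I : Type*} {ι : Type*} [Fintype ι] (p : Ultrafilter ℕ) (f : ι → ℕ → I →₀ ℤ)
    (E : Finset I) {δ : ℝ} (hδ : 0 < δ)
    (h : ∀ m : ι → ℤ, m ≠ 0 → ∀ M : ℕ, {n | (∃ ξ, ξ ∉ E ∧ (∑ i, m i • f i n) ξ ≠ 0) ∨
      ∃ ξ ∈ E, (M : ℤ) < |(∑ i, m i • f i n) ξ|} ∈ p) :
    {n | ∀ (x : I → AddCircle (1:ℝ)) (y : ι → AddCircle (1:ℝ)), ∃ x' : I → AddCircle (1:ℝ),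
      (∀ ξ ∈ E, ‖x' ξ - x ξ‖ ≤ δ) ∧
      ∀ i, ‖Finsupp.linearCombination ℤ x' (f i n) - y i‖ ≤ δ} ∈ p := by
  classical
  let S : ℕ → Finset I := fun n => E ∪ Finset.univ.biUnion fun i => (f i n).support
  let ε : I → ℝ := fun ξ => if ξ ∈ E then δ else 1
  have hε : ∀ ξ, 0 < ε ξ := fun ξ => by simp only [ε]; split_ifs <;> simp [hδ]
  choose μ hμP hμU hμF using fun n => aux_measure (ι := ι) (S := S n) (fun i s => f i n s)
    (fun s => ε s) (fun s => hε s)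
  have hgs : ∀ (m : ι → ℤ) n ξ, (∑ i, m i • f i n) ξ = ∑ i, m i * f i n ξ := by
    intro m n ξ
    simp [Finsupp.finsetSum_apply]
  have hF : ∀ m : ι → ℤ, m ≠ 0 →
      Tendsto (fun n => ∫ x, UnitAddTorus.mFourier m x ∂(μ n)) p (nhds 0) := by
    intro m hm
    rw [Metric.tendsto_nhds]
    intro η hη
    obtain ⟨M, hM⟩ := exists_nat_gt (δ⁻¹ * η⁻¹)
    have hM0 : (0:ℝ) < M := lt_trans (by positivity) hM
    filter_upwards [h m hm M] with n hn
    rw [dist_zero_right, hμF]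
    have hle : ∀ s : S n, ‖∏ s : S n, ∫ u, fourier (T := (1:ℝ)) (∑ i, m i * f i n s) (u : AddCircle (1:ℝ)) ∂(auxRho (ε s))‖
        ≤ ‖∫ u, fourier (T := (1:ℝ)) (∑ i, m i * f i n s) (u : AddCircle (1:ℝ)) ∂(auxRho (ε s))‖ := by
      intro s
      rw [norm_prod, ← Finset.mul_prod_erase _ _ (Finset.mem_univ s)]
      refine mul_le_of_le_one_right (norm_nonneg _) ?_
      exact Finset.prod_le_one (fun _ _ => norm_nonneg _) fun t _ => auxRho_integral_norm_le (hε t) _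
    rcases hn with ⟨ξ, hξE, hξ⟩ | ⟨ξ, hξE, hξ⟩
    · rw [hgs] at hξ
      have hξS : ξ ∈ S n := by
        obtain ⟨i, _, hi⟩ := Finset.exists_ne_zero_of_sum_ne_zero hξ
        refine Finset.mem_union_right _ (Finset.mem_biUnion.2 ⟨i, Finset.mem_univ _, ?_⟩)
        rw [Finsupp.mem_support_iff]
        exact right_ne_zero_of_mul hi
      refine (hle ⟨ξ, hξS⟩).trans_lt ?_
      simp only [ε, if_neg hξE]
      rw [auxRho_integral_one hξ]; simpa using hη
    · rw [hgs] at hξ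
      have hξS : ξ ∈ S n := Finset.mem_union_left _ hξE
      refine (hle ⟨ξ, hξS⟩).trans_lt ?_
      simp only [ε, if_pos hξE]
      have hne : (∑ i, m i * f i n ξ) ≠ 0 := by
        intro h0; rw [h0] at hξ; simp at hξ; omega
      refine (auxRho_integral_le hδ hne).trans_lt ?_
      have hMr : (M : ℝ) < |((∑ i, m i * f i n ξ : ℤ) : ℝ)| := by exact_mod_cast hξ
      calc δ⁻¹ * (1 / |((∑ i, m i * f i n ξ : ℤ) : ℝ)|) ≤ δ⁻¹ * (1 / M) := by gcongr
        _ < η := by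
          rw [mul_one_div, div_lt_iff₀ hM0]
          calc δ⁻¹ = η * (δ⁻¹ * η⁻¹) := by field_simp
            _ < η * M := by gcongr
  -- finite net
  obtain ⟨t, _, htf, ht⟩ := finite_cover_balls_of_compact (isCompact_univ : IsCompact (Set.univ : Set (UnitAddTorus ι)))
    (half_pos hδ)
  have hall : ∀ᶠ n in (p : Filter ℕ), ∀ y ∈ t, μ n (Metric.ball y (δ/2)) ≠ 0 := by
    rw [Filter.eventually_all_finite htf]
    intro y _
    exact aux_hit _ μ hμP hF y (half_pos hδ)
  filter_upwards [hall] with n hn x y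
  let w : UnitAddTorus ι := fun i => y i - Finsupp.linearCombination ℤ x (f i n)
  have hw := ht (Set.mem_univ w)
  simp only [Set.mem_iUnion] at hw
  obtain ⟨v, hvt, hv⟩ := hw
  obtain ⟨u, hu, huv⟩ := hμU n _ Metric.isOpen_ball (hn v hvt)
  let z : I → AddCircle (1:ℝ) := fun ξ => if hξ : ξ ∈ S n then ((u ⟨ξ, hξ⟩ : ℝ) : AddCircle (1:ℝ)) else 0
  have hz : ∀ i, Finsupp.linearCombination ℤ z (f i n) =
      ∑ s : S n, f i n s • ((u s : ℝ) : AddCircle (1:ℝ)) := by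
    intro i
    rw [Finsupp.linearCombination_apply, Finsupp.sum_of_support_subset (s := S n)]
    · rw [← Finset.sum_coe_sort]
      refine Finset.sum_congr rfl fun s _ => ?_
      simp [z]
    · intro ξ hξ
      exact Finset.mem_union_right _ (Finset.mem_biUnion.2 ⟨i, Finset.mem_univ _, hξ⟩)
    · simp
  refine ⟨x + z, ?_, ?_⟩
  · intro ξ hξ
    have hξS : ξ ∈ S n := Finset.mem_union_left _ hξ
    simp only [Pi.add_apply, add_sub_cancel_left, z, dif_pos hξS]
    have h1 := hu ⟨ξ, hξS⟩
    simp only [ε, if_pos hξ] at h1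
    rw [AddCircle.norm_eq]
    simp only [inv_one, one_mul, mul_one]
    have := round_le (u ⟨ξ, hξS⟩) 0
    simp at this
    refine this.trans ?_
    rw [abs_of_pos h1.1]; exact h1.2
  · intro i
    have hadd : Finsupp.linearCombination ℤ (x + z) (f i n) =
        Finsupp.linearCombination ℤ x (f i n) + Finsupp.linearCombination ℤ z (f i n) := by
      simp [Finsupp.linearCombination_apply, Finsupp.sum, smul_add, Finset.sum_add_distrib]
    have h1 : dist (Finsupp.linearCombination ℤ z (f i n)) (w i) < δ := by
      rw [hz]
      have h2 := (dist_le_pi_dist _ _ i).trans_lt (Metric.mem_ball.1 huv)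
      have h3 := (dist_le_pi_dist _ _ i).trans_lt (Metric.mem_ball'.1 hv)
      have h4 := dist_triangle (∑ s : S n, f i n s • ((u s : ℝ) : AddCircle (1:ℝ))) (v i) (w i)
      linarith
    rw [dist_eq_norm] at h1
    rw [hadd]
    refine le_of_eq_of_le ?_ h1.le
    congr 1
    simp only [w]; abel

lemma aux_li {κ : Cardinal} {p : Ultrafilter ℕ} {F : Set (ℕ → GZ κ)}
    (hli : LinearIndependent ℚ
      (Sum.elim (fun f : F => cls κ p ↑f) (fun ξ : Idx κ => clsChi κ p ξ)))
    {ι : Type*} [Fintype ι] (e : ι → F) (he : Function.Injective e) (E : Finset (Idx κ))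
    (m : ι → ℤ) (hm : m ≠ 0) (M : ℕ) :
    {n | (∃ ξ, ξ ∉ E ∧ (∑ i, m i • (e i : ℕ → GZ κ) n) ξ ≠ 0) ∨
      ∃ ξ ∈ E, (M : ℤ) < |(∑ i, m i • (e i : ℕ → GZ κ) n) ξ|} ∈ p := by
  classical
  rw [← compl_compl {n | _ ∨ _}, Ultrafilter.compl_mem_iff_notMem]
  intro hmem
  set g : ℕ → GZ κ := fun n => ∑ i, m i • (e i : ℕ → GZ κ) n with hg
  let V : Finset (GZ κ) := E.finsupp (fun _ => Finset.Icc (-(M:ℤ)) M)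
  have hV : (V : Set (GZ κ)) ∈ Ultrafilter.map g p := by
    rw [Ultrafilter.mem_map]
    filter_upwards [hmem] with n hn
    simp only [Set.mem_compl_iff, Set.mem_setOf_eq, not_or, not_exists, not_and, not_lt, not_not] at hn
    rw [Set.mem_preimage, Finset.mem_coe, Finset.mem_finsupp_iff]
    refine ⟨fun ξ hξ => ?_, fun ξ hξ => ?_⟩
    · by_contra hcon
      exact (Finsupp.mem_support_iff.1 hξ) (hn.1 ξ hcon)
    · rw [Finset.mem_Icc, ← abs_le]; exact hn.2 ξ hξ
  obtain ⟨c, _, hc⟩ := Ultrafilter.eq_pure_of_finite_mem V.finite_toSet hV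
  have hgc : ∀ᶠ n in (p : Filter ℕ), g n = c := by
    have : ({c} : Set (GZ κ)) ∈ Ultrafilter.map g p := by rw [hc]; exact Ultrafilter.mem_pure.2 rfl
    exact this
  have h1 : clsHom κ p g = ∑ i, m i • cls κ p (e i) := by
    have : g = ∑ i, m i • (e i : ℕ → GZ κ) := by
      funext n; simp [hg]
    rw [this, map_sum]
    exact Finset.sum_congr rfl fun i _ => map_zsmul _ _ _
  have h2 : clsHom κ p g = clsHom κ p (fun _ => c) := by
    change cls κ p g = cls κ p (fun _ => c)
    unfold cls
    rw [Filter.Germ.coe_eq]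
    filter_upwards [hgc] with n hn
    rw [hn]
  have h3 : clsHom κ p (fun _ => c) = ∑ ξ ∈ c.support, c ξ • clsChi κ p ξ := by
    have : (fun _ => c : ℕ → GZ κ) = ∑ ξ ∈ c.support, c ξ • (fun _ => chi κ ξ : ℕ → GZ κ) := by
      funext n
      simp only [Finset.sum_apply, Pi.smul_apply, chi, Finsupp.smul_single, smul_eq_mul, mul_one]
      exact (Finsupp.sum_single c).symm
    rw [this, map_sum]
    exact Finset.sum_congr rfl fun i _ => map_zsmul _ _ _
  have hinj : Function.Injective (Sum.map e (id : Idx κ → Idx κ)) := he.sumMap Function.injective_id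
  have hli2 := hli.comp _ hinj
  rw [linearIndependent_iff'] at hli2
  have hz := hli2 (Finset.univ.disjSum c.support)
    (Sum.elim (fun i => (m i : ℚ)) (fun ξ => -(c ξ : ℚ))) (by
      rw [Finset.sum_disjSum]
      simp only [Function.comp, Sum.elim_inl, Sum.elim_inr, Sum.map_inl, Sum.map_inr, id, neg_smul,
        Finset.sum_neg_distrib]
      rw [add_neg_eq_zero]
      simp only [Int.cast_smul_eq_zsmul]
      exact h1.symm.trans (h2.trans h3))
  obtain ⟨i, hi⟩ := Function.ne_iff.1 hm
  have := hz (Sum.inl i) (by simp)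
  simp at this
  exact hi this

/-- ℓ¹ norm -/
def auxL1 {I : Type*} (g : I →₀ ℤ) : ℝ := ∑ ξ ∈ g.support, |(g ξ : ℝ)|

lemma auxL1_nonneg {I : Type*} (g : I →₀ ℤ) : 0 ≤ auxL1 g :=
  Finset.sum_nonneg fun _ _ => abs_nonneg _

lemma auxL1_bound {I : Type*} (g : I →₀ ℤ) (x x' : I → AddCircle (1:ℝ)) {C : ℝ}
    (h : ∀ ξ ∈ g.support, ‖x ξ - x' ξ‖ ≤ C) :
    ‖Finsupp.linearCombination ℤ x g - Finsupp.linearCombination ℤ x' g‖ ≤ auxL1 g * C := by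
  simp only [Finsupp.linearCombination_apply, Finsupp.sum]
  rw [← Finset.sum_sub_distrib, auxL1, Finset.sum_mul]
  refine (norm_sum_le _ _).trans (Finset.sum_le_sum fun ξ hξ => ?_)
  rw [← smul_sub]
  refine (norm_zsmul_le _ _).trans ?_
  rw [Int.norm_eq_abs]
  exact mul_le_mul_of_nonneg_left (h ξ hξ) (abs_nonneg _)

lemma aux_half {I : Type*} (g : I →₀ ℤ) (x : I → AddCircle (1:ℝ)) (ξ : I) (hξ : ξ ∈ g.support)
    (hx : x ξ = ((1 / (2 * (g ξ : ℝ)) : ℝ) : AddCircle (1:ℝ)))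
    (h : ∀ η ∈ g.support, η ≠ ξ → x η = 0) :
    ‖Finsupp.linearCombination ℤ x g‖ = 1 / 2 := by
  rw [Finsupp.linearCombination_apply, Finsupp.sum, Finset.sum_eq_single ξ]
  · rw [hx, ← AddCircle.coe_zsmul]
    have : g ξ • (1 / (2 * (g ξ : ℝ)) : ℝ) = 1 / 2 := by
      have : (g ξ : ℝ) ≠ 0 := by exact_mod_cast Finsupp.mem_support_iff.1 hξ
      rw [zsmul_eq_mul]; field_simp
    rw [this]
    simpa using AddCircle.norm_half_period_eq (1:ℝ)
  · intro η hη hne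
    rw [h η hη hne, smul_zero]
  · intro h0; exact absurd hξ h0

lemma aux_start {I : Type*} (d d' : I →₀ ℤ) (hd : d ≠ 0) (hd' : d' ≠ 0)
    (hdd' : Disjoint d.support d'.support) :
    ∃ x : I → AddCircle (1:ℝ), ‖Finsupp.linearCombination ℤ x d‖ = 1 / 2 ∧
      ‖Finsupp.linearCombination ℤ x d'‖ = 1 / 2 := by
  classical
  obtain ⟨ξ, hξ⟩ := Finsupp.support_nonempty_iff.2 hd
  obtain ⟨ξ', hξ'⟩ := Finsupp.support_nonempty_iff.2 hd'
  rw [Finset.disjoint_left] at hdd'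
  refine ⟨fun η => if η = ξ then ((1 / (2 * (d ξ : ℝ)) : ℝ) : AddCircle (1:ℝ)) else
    if η = ξ' then ((1 / (2 * (d' ξ' : ℝ)) : ℝ) : AddCircle (1:ℝ)) else 0, ?_, ?_⟩
  · refine aux_half d _ ξ hξ (by simp) ?_
    intro η hη hne
    have : η ≠ ξ' := fun h => hdd' hη (h ▸ hξ')
    simp [hne, this]
  · have hne : ξ' ≠ ξ := fun h => hdd' hξ (h ▸ hξ')
    refine aux_half d' _ ξ' hξ' (by simp [hne]) ?_
    intro η hη hne
    have : η ≠ ξ := fun h => hdd' hξ (h ▸ hη)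
    simp [hne, this]

/-- coordinatewise limits -/
lemma aux_limit {I : Type*} (X : ℕ → I → AddCircle (1:ℝ)) (E : ℕ → Finset I) (δ : ℕ → ℝ)
    (hE : Monotone E) (hδ : ∀ i, δ (i+1) ≤ δ i / 2)
    (hX : ∀ i, ∀ ξ ∈ E i, ‖X (i+1) ξ - X i ξ‖ ≤ δ i) :
    ∃ x : I → AddCircle (1:ℝ), ∀ i, ∀ ξ ∈ E i, ‖x ξ - X i ξ‖ ≤ 2 * δ i := by
  have hpow : ∀ i j, δ (i + j) ≤ δ i / 2 ^ j := by
    intro i j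
    induction j with
    | zero => simp
    | succ j ih =>
      have := hδ (i + j)
      rw [← add_assoc]
      refine this.trans ?_
      rw [pow_succ, ← div_div]; gcongr
  have hstep : ∀ i, ∀ ξ ∈ E i, ∀ j, dist (X (i + j) ξ) (X (i + (j + 1)) ξ) ≤ 2 * δ i / 2 / 2 ^ j := by
    intro i ξ hξ j
    rw [dist_comm, dist_eq_norm, mul_div_cancel_left₀ _ two_ne_zero]
    exact (hX (i+j) ξ (hE (by omega) hξ)).trans (hpow i j)
  have hlim : ∀ ξ, ∃ a, ∀ i, ξ ∈ E i → Tendsto (fun n => X n ξ) atTop (nhds a) := by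
    intro ξ
    by_cases h : ∃ i, ξ ∈ E i
    · obtain ⟨i, hi⟩ := h
      have hc := cauchySeq_of_le_geometric_two (f := fun j => X (i + j) ξ) (hstep i ξ hi)
      obtain ⟨a, ha⟩ := cauchySeq_tendsto_of_complete hc
      refine ⟨a, fun _ _ => ?_⟩
      have : Tendsto (fun j => X (j + i) ξ) atTop (nhds a) := by simpa [add_comm] using ha
      exact (tendsto_add_atTop_iff_nat i).1 this
    · exact ⟨0, fun i hi => absurd ⟨i, hi⟩ h⟩
  choose x hx using hlim
  refine ⟨x, fun i ξ hξ => ?_⟩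
  have h1 : Tendsto (fun j => X (i + j) ξ) atTop (nhds (x ξ)) := by
    have := (tendsto_add_atTop_iff_nat i).2 (hx ξ i hξ)
    simpa [add_comm] using this
  have := dist_le_of_le_geometric_two_of_tendsto₀ (f := fun j => X (i + j) ξ) (hstep i ξ hξ) h1
  rw [dist_comm, dist_eq_norm] at this
  simpa using this

lemma aux_main (κ : Cardinal)
    (p : ℕ → Ultrafilter ℕ) (hsel : ∀ k, IsSelective (p k))
    (hinc : ∀ k l, k ≠ l → RKIncomp (p k) (p l))
    (F : ℕ → Set (ℕ → GZ κ)) (hFc : ∀ k, (F k).Countable)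
    (hFli : ∀ k, LinearIndependent ℚ
      (Sum.elim (fun f : F k => cls κ (p k) ↑f) (fun ξ : Idx κ => clsChi κ (p k) ξ)))
    (ξf : (ℕ → GZ κ) → Idx κ)
    (d d' : GZ κ) (hd : d ≠ 0) (hd' : d' ≠ 0)
    (hdd' : Disjoint d.support d'.support) :
    ∃ x : Idx κ → AddCircle (1:ℝ), Finsupp.linearCombination ℤ x d ≠ 0 ∧
      Finsupp.linearCombination ℤ x d' ≠ 0 ∧
      ∀ k, ∀ f ∈ F k, IsPLim (p k) (fun n => Finsupp.linearCombination ℤ x (f n)) (x (ξf f)) := by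
  classical
  obtain ⟨FF, hFF⟩ : ∃ FF : ℕ → (ℕ → GZ κ), insert 0 (⋃ k, F k) = Set.range FF :=
    ((Set.countable_iUnion hFc).insert 0).exists_eq_range (Set.insert_nonempty _ _)
  let W : ℕ → ℝ := fun N => 1 + auxL1 d + auxL1 d' +
    ∑ i ∈ Finset.range (N+1), ∑ n ∈ Finset.range (N+1), auxL1 (FF i n)
  have hL := fun g : GZ κ => auxL1_nonneg g
  have hSnn : ∀ N, 0 ≤ ∑ i ∈ Finset.range (N+1), ∑ n ∈ Finset.range (N+1), auxL1 (FF i n) :=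
    fun N => Finset.sum_nonneg fun i _ => Finset.sum_nonneg fun n _ => hL _
  have hW1 : ∀ N, 1 ≤ W N := fun N => by
    simp only [W]; linarith [hL d, hL d', hSnn N]
  have hWd : ∀ N, auxL1 d ≤ W N := fun N => by
    simp only [W]; linarith [hL d, hL d', hSnn N]
  have hWd' : ∀ N, auxL1 d' ≤ W N := fun N => by
    simp only [W]; linarith [hL d, hL d', hSnn N]
  have hWf : ∀ N i n, i ≤ N → n ≤ N → auxL1 (FF i n) ≤ W N := by
    intro N i n hi hn
    have h1 : auxL1 (FF i n) ≤ ∑ n ∈ Finset.range (N+1), auxL1 (FF i n) :=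
      Finset.single_le_sum (f := fun n => auxL1 (FF i n)) (fun _ _ => hL _) (Finset.mem_range.2 (by omega))
    have h2 : ∑ n ∈ Finset.range (N+1), auxL1 (FF i n) ≤
        ∑ i ∈ Finset.range (N+1), ∑ n ∈ Finset.range (N+1), auxL1 (FF i n) :=
      Finset.single_le_sum (f := fun i => ∑ n ∈ Finset.range (N+1), auxL1 (FF i n))
        (fun _ _ => Finset.sum_nonneg fun n _ => hL _) (Finset.mem_range.2 (by omega))
    simp only [W]; linarith [hL d, hL d']
  have hWm : Monotone W := by
    intro M N hMN
    have hr : Finset.range (M+1) ⊆ Finset.range (N+1) := Finset.range_mono (by omega)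
    simp only [W]
    refine add_le_add le_rfl ?_
    refine (Finset.sum_le_sum_of_subset_of_nonneg hr
      fun i _ _ => Finset.sum_nonneg fun n _ => hL _).trans ?_
    exact Finset.sum_le_sum fun i _ => Finset.sum_le_sum_of_subset_of_nonneg hr fun n _ _ => hL _
  let δ : ℕ → ℝ := fun N => (1/2)^N / (16 * W N)
  have hWpos : ∀ N, 0 < W N := fun N => lt_of_lt_of_le one_pos (hW1 N)
  have hδpos : ∀ N, 0 < δ N := fun N => div_pos (by positivity) (by linarith [hWpos N])
  have hδ2 : ∀ M N, M < N → δ N ≤ δ M / 2 := by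
    intro M N hMN
    simp only [δ]
    rw [div_right_comm]
    have hM := hWpos M
    gcongr
    · have : (1/2:ℝ)^N ≤ (1/2)^(M+1) := pow_le_pow_of_le_one (by norm_num) (by norm_num) hMN
      rw [pow_succ] at this; linarith
    · exact hWm hMN.le
  have hδW : ∀ N, δ N * W N = (1/2)^N / 16 := by
    intro N
    have := (hWpos N).ne'
    simp only [δ]; field_simp
  have hδle : ∀ N, δ N ≤ (1/2)^N / 16 := by
    intro N; rw [← hδW]
    exact le_mul_of_one_le_right (hδpos N).le (hW1 N)
  let E : ℕ → Finset (Idx κ) := fun N => (d.support ∪ d'.support) ∪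
    (Finset.range (N+1)).biUnion fun i => {ξf (FF i)} ∪
      (Finset.range (N+1)).biUnion fun n => (FF i n).support
  have hEm : Monotone E := by
    intro M N hMN
    have hr : Finset.range (M+1) ⊆ Finset.range (N+1) := Finset.range_mono (by omega)
    refine Finset.union_subset_union le_rfl ?_
    refine (Finset.biUnion_subset_biUnion_of_subset_left _ hr).trans ?_
    refine Finset.biUnion_mono fun i _ => ?_
    exact Finset.union_subset_union le_rfl (Finset.biUnion_subset_biUnion_of_subset_left _ hr)
  have hEξ : ∀ N i, i ≤ N → ξf (FF i) ∈ E N := by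
    intro N i hi
    refine Finset.mem_union_right _ (Finset.mem_biUnion.2 ⟨i, Finset.mem_range.2 (by omega), ?_⟩)
    simp
  have hEf : ∀ N i n, i ≤ N → n ≤ N → (FF i n).support ⊆ E N := by
    intro N i n hi hn ξ hξ
    refine Finset.mem_union_right _ (Finset.mem_biUnion.2 ⟨i, Finset.mem_range.2 (by omega), ?_⟩)
    exact Finset.mem_union_right _ (Finset.mem_biUnion.2 ⟨n, Finset.mem_range.2 (by omega), hξ⟩)
  let A : ℕ → ℕ → Set ℕ := fun N k => {n | ∀ (x : Idx κ → AddCircle (1:ℝ))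
    (y : (ℕ → GZ κ) → AddCircle (1:ℝ)), ∃ x' : Idx κ → AddCircle (1:ℝ),
      (∀ ξ ∈ E N, ‖x' ξ - x ξ‖ ≤ δ N) ∧ ∀ i ≤ N, FF i ∈ F k →
        ‖Finsupp.linearCombination ℤ x' (FF i n) - y (FF i)‖ ≤ δ N}
  have hA : ∀ N k, A N k ∈ p k := by
    intro N k
    let Φ : Finset (ℕ → GZ κ) := ((Finset.range (N+1)).image FF).filter (· ∈ F k)
    let e : Φ → F k := fun f => ⟨f, (Finset.mem_filter.1 f.2).2⟩
    have he : Function.Injective e := fun a b hab => by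
      have := congrArg Subtype.val hab
      exact Subtype.ext this
    have := aux_core (p k) (fun i : Φ => (e i : ℕ → GZ κ)) (E N) (hδpos N)
      (fun m hm M => aux_li (hFli k) e he (E N) m hm M)
    filter_upwards [this] with n hn x y
    obtain ⟨x', h1, h2⟩ := hn x (fun i => y i)
    refine ⟨x', h1, fun i hi hik => ?_⟩
    exact h2 ⟨FF i, Finset.mem_filter.2 ⟨Finset.mem_image_of_mem _ (Finset.mem_range.2 (by omega)), hik⟩⟩
  obtain ⟨B, hB, hBdisj, hBA⟩ := aux_comb p hsel hinc A hA
  have hBinf : ∀ k, (B k).Infinite := by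
    intro k hfin
    exact Ultrafilter.compl_mem_iff_notMem.1 (aux_fin_notMem (hsel k).1 hfin) (hB k)
  have hSinf : (setOf fun n => ∃ k, n ∈ B k).Infinite :=
    (hBinf 0).mono fun n hn => ⟨0, hn⟩
  let s : ℕ → ℕ := Nat.nth fun n => ∃ k, n ∈ B k
  have hs : StrictMono s := Nat.nth_strictMono hSinf
  have hsm : ∀ i, ∃ k, s i ∈ B k := fun i => Nat.nth_mem_of_infinite hSinf i
  have hsr : ∀ n k, n ∈ B k → ∃ i, s i = n := by
    intro n k hn
    have : n ∈ Set.range s := by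
      rw [Nat.range_nth_of_infinite hSinf]; exact ⟨k, hn⟩
    exact this
  have hstep : ∀ i (x : Idx κ → AddCircle (1:ℝ)), ∃ x' : Idx κ → AddCircle (1:ℝ),
      (∀ ξ ∈ E (s i), ‖x' ξ - x ξ‖ ≤ δ (s i)) ∧ ∀ k, s (i+1) ∈ B k → ∀ a ≤ s i, FF a ∈ F k →
        ‖Finsupp.linearCombination ℤ x' (FF a (s (i+1))) - x (ξf (FF a))‖ ≤ δ (s i) := by
    intro i x
    obtain ⟨k, hk⟩ := hsm (i+1)
    obtain ⟨l, hl⟩ := hsm i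
    obtain ⟨x', h1, h2⟩ := hBA k l _ _ hk hl (hs (Nat.lt_succ_self i)) x (fun f => x (ξf f))
    refine ⟨x', h1, fun k' hk' => ?_⟩
    obtain rfl := hBdisj _ _ _ hk hk'
    exact h2
  choose step hstep1 hstep2 using hstep
  obtain ⟨x0, hx0d, hx0d'⟩ := aux_start d d' hd hd' hdd'
  let X : ℕ → Idx κ → AddCircle (1:ℝ) := fun i => Nat.rec x0 (fun i x => step i x) i
  have hXs : ∀ i, X (i+1) = step i (X i) := fun i => rfl
  obtain ⟨x, hx⟩ := aux_limit X (fun i => E (s i)) (fun i => δ (s i))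
    (hEm.comp hs.monotone) (fun i => hδ2 _ _ (hs (Nat.lt_succ_self i)))
    (fun i ξ hξ => by rw [hXs]; exact hstep1 i (X i) ξ hξ)
  have hnz : ∀ g : GZ κ, auxL1 g ≤ W (s 0) → g.support ⊆ E (s 0) →
      ‖Finsupp.linearCombination ℤ x0 g‖ = 1/2 → Finsupp.linearCombination ℤ x g ≠ 0 := by
    intro g h1 h2 h3 h0
    have h4 := auxL1_bound g x x0 (C := 2 * δ (s 0)) (fun ξ hξ => hx 0 ξ (h2 hξ))
    rw [h0, zero_sub, norm_neg, h3] at h4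
    have h5 : auxL1 g * (2 * δ (s 0)) ≤ W (s 0) * (2 * δ (s 0)) :=
      mul_le_mul_of_nonneg_right h1 (by linarith [hδpos (s 0)])
    have h6 := hδW (s 0)
    have h7 : (1/2:ℝ)^(s 0) ≤ 1 := pow_le_one₀ (by norm_num) (by norm_num)
    nlinarith
  refine ⟨x, ?_, ?_, ?_⟩
  · refine hnz d (hWd _) ?_ hx0d
    exact Finset.subset_union_left.trans Finset.subset_union_left
  · refine hnz d' (hWd' _) ?_ hx0d'
    exact Finset.subset_union_right.trans Finset.subset_union_left
  · intro k f hf U hU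
    obtain ⟨a, rfl⟩ : ∃ a, FF a = f := by
      have : f ∈ Set.range FF := by
        rw [← hFF]; exact Set.mem_insert_of_mem _ (Set.mem_iUnion.2 ⟨k, hf⟩)
      exact this
    obtain ⟨ε, hε, hεU⟩ := Metric.mem_nhds_iff.1 hU
    obtain ⟨i1, hi1⟩ := exists_pow_lt_of_lt_one hε (show (1/2:ℝ) < 1 by norm_num)
    have hcof := aux_fin_notMem (hsel k).1 (Set.finite_le_nat (s (max a i1)))
    filter_upwards [hB k, hcof] with n hn hn2
    obtain ⟨j, rfl⟩ := hsr n k hn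
    have hj : max a i1 < j := by
      simp only [Set.mem_compl_iff, Set.mem_setOf_eq, not_le] at hn2
      exact hs.lt_iff_lt.1 hn2
    obtain ⟨i, rfl⟩ : ∃ i, j = i + 1 := ⟨j - 1, by omega⟩
    have hid : i ≤ s i := hs.id_le i
    have hai : a ≤ s i := by omega
    have hss : s i < s (i+1) := hs (Nat.lt_succ_self i)
    apply hεU
    rw [Metric.mem_ball, dist_eq_norm]
    have b1 : ‖Finsupp.linearCombination ℤ x (FF a (s (i+1))) -
        Finsupp.linearCombination ℤ (X (i+1)) (FF a (s (i+1)))‖ ≤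
        auxL1 (FF a (s (i+1))) * (2 * δ (s (i+1))) :=
      auxL1_bound _ _ _ fun ξ hξ => hx (i+1) ξ (hEf _ a _ (by omega) le_rfl hξ)
    have b2 : ‖Finsupp.linearCombination ℤ (X (i+1)) (FF a (s (i+1))) - X i (ξf (FF a))‖ ≤ δ (s i) := by
      rw [hXs]; exact hstep2 i (X i) k hn a hai hf
    have b3 : ‖x (ξf (FF a)) - X i (ξf (FF a))‖ ≤ 2 * δ (s i) := hx i _ (hEξ _ a hai)
    have b4 : auxL1 (FF a (s (i+1))) * (2 * δ (s (i+1))) ≤ W (s (i+1)) * (2 * δ (s (i+1))) :=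
      mul_le_mul_of_nonneg_right (hWf _ _ _ (by omega) le_rfl) (by linarith [hδpos (s (i+1))])
    have b5 := hδW (s (i+1))
    have b6 := hδle (s i)
    have b7 : (1/2:ℝ)^(s i) ≤ (1/2)^i1 :=
      pow_le_pow_of_le_one (by norm_num) (by norm_num) (by omega)
    have b8 : (1/2:ℝ)^(s (i+1)) ≤ (1/2)^i1 :=
      pow_le_pow_of_le_one (by norm_num) (by norm_num)
        (by omega)
    have t : ‖Finsupp.linearCombination ℤ x (FF a (s (i+1))) - x (ξf (FF a))‖ ≤
        ‖Finsupp.linearCombination ℤ x (FF a (s (i+1))) -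
          Finsupp.linearCombination ℤ (X (i+1)) (FF a (s (i+1)))‖ +
        ‖Finsupp.linearCombination ℤ (X (i+1)) (FF a (s (i+1))) - X i (ξf (FF a))‖ +
        ‖x (ξf (FF a)) - X i (ξf (FF a))‖ := by
      simp only [← dist_eq_norm]
      rw [dist_comm (x (ξf (FF a))) (X i (ξf (FF a)))]
      exact dist_triangle4 _ _ _ _
    have hp0 : (0:ℝ) < (1/2)^i1 := by positivity
    have : W (s (i+1)) * (2 * δ (s (i+1))) = 2 * ((1/2)^(s (i+1)) / 16) := by rw [← b5]; ring
    linarith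

theorem statement13 (κ : Cardinal) (hκ : ℵ₀ ≤ κ) (hpow : κ ^ ℵ₀ = κ)
    (p : ℕ → Ultrafilter ℕ) (hsel : ∀ k, IsSelective (p k))
    (hinc : ∀ k l, k ≠ l → RKIncomp (p k) (p l))
    (F : ℕ → Set (ℕ → GZ κ)) (hFc : ∀ k, (F k).Countable)
    (hFdist : ∀ k, ∀ f ∈ F k, ∀ g ∈ F k, f ≠ g → cls κ (p k) f ≠ cls κ (p k) g)
    (hFli : ∀ k, LinearIndependent ℚ
      (Sum.elim (fun f : F k => cls κ (p k) ↑f) (fun ξ : Idx κ => clsChi κ (p k) ξ)))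
    (ξf : (ℕ → GZ κ) → Idx κ)
    (d d' : GZ κ) (hd : d ≠ 0) (hd' : d' ≠ 0)
    (hdd' : Disjoint d.support d'.support)
    (D : Set (Idx κ)) (hDc : D.Countable) (hDi : D.Infinite)
    (hωD : ∀ ξ : Idx κ, (ξ : Ordinal) < Ordinal.omega0 → ξ ∈ D)
    (hdD : ↑d.support ⊆ D) (hd'D : ↑d'.support ⊆ D)
    (hFD : ∀ k : ℕ, ∀ f ∈ F k, ∀ n : ℕ, ↑(f n).support ⊆ D)
    (hξD : ∀ k : ℕ, ∀ f ∈ F k, ξf f ∈ D) :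
    ∃ φ : ↥(Finsupp.supported ℤ ℤ D) →+ AddCircle (1 : ℝ),
      φ ⟨d, mem_suppD hdD⟩ ≠ 0 ∧
      φ ⟨d', mem_suppD hd'D⟩ ≠ 0 ∧
      ∀ k : ℕ, ∀ f : ℕ → GZ κ, ∀ hf : f ∈ F k,
        IsPLim (p k) (fun n => φ ⟨f n, mem_suppD (hFD k f hf n)⟩)
          (φ ⟨chi κ (ξf f), chi_mem_suppD (hξD k f hf)⟩) := by
  obtain ⟨x, h1, h2, h3⟩ := aux_main κ p hsel hinc F hFc hFli ξf d d' hd hd' hdd'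
  refine ⟨(Finsupp.linearCombination ℤ x).toAddMonoidHom.comp
    (Finsupp.supported ℤ ℤ D).subtype.toAddMonoidHom, h1, h2, ?_⟩
  intro k f hf
  have h4 : Finsupp.linearCombination ℤ x (chi κ (ξf f)) = x (ξf f) := by
    simp [chi, Finsupp.linearCombination_single]
  have h5 := h3 k f hf
  rw [← h4] at h5
  exact h5

end
end

section
/- Let κ be an infinite cardinal with κ^ω = κ and G = ℤ^(κ). Suppose: (i) (p_{T,n} : T ∈ 𝒯, n ∈ ω) is a family of pairwise Rudin–Keisler incomparable selective ultrafilters on ω with l(T) ∈ p_{T,n}; (ii) (h_ξ : ω ≤ ξ < κ) is an enumeration of G^ω with supp h_ξ(n) ⊆ ξ for all n ∈ ω and ω ≤ ξ < κ; (iii) (J_{T,n} : T ∈ 𝒯, n ∈ ω) is a family of pairwise disjoint subsets of κ \ ω such that for each (T,n) the classes [h_ξ]_{p_{T,n}} (ξ ∈ J_{T,n}) are pairwise distinct and {[h_ξ]_{p_{T,n}} : ξ ∈ J_{T,n}} ∪ {[χ⃗_ζ]_{p_{T,n}} : ζ < κ} is a ℚ-linearly independent subset of Ult(ℚ, p_{T,n}).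 Let d ∈ G be nonzero, let r be an injective sequence in G, and let D ⊆ κ be countably infinite with: (1) ω ∪ supp d ∪ ⋃_{n∈ω} supp r(n) ⊆ D; (2) D ∩ J_{T,n} ≠ ∅ for infinitely many pairs (T,n); (3) supp h_ξ(n) ⊆ D for all n ∈ ω and all ξ ∈ D \ ω. Then there exists a group homomorphism φ : ℤ^(D) → 𝕋 such that: φ(d) ≠ 0; for every T ∈ 𝒯, n ∈ ω and ξ ∈ D ∩ J_{T,n}, the sequence (φ(h_ξ(k)) : k ∈ ω) has p_{T,n}-limit φ(χ_ξ); and the sequence (φ(r(n)) : n ∈ ω) does not converge in 𝕋. -/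
open Cardinal Filter Set Pointwise

noncomputable section

section analytic
open MeasureTheory

lemma char_int {X : Type*} [AddCommGroup X] [TopologicalSpace X] [IsTopologicalAddGroup X]
    [MeasurableSpace X] [BorelSpace X] (μ : Measure X) [μ.IsAddLeftInvariant]
    (f : X → ℂ) (hf : ∀ x y, f (x + y) = f x * f y) (hne : ∃ x, f x ≠ 1) : ∫ x, f x ∂μ = 0 := by
  obtain ⟨g, hg⟩ := hne
  have h1 : ∫ x, f (g + x) ∂μ = ∫ x, f x ∂μ := integral_add_left_eq_self f g
  have h2 : ∫ x, f (g + x) ∂μ = f g * ∫ x, f x ∂μ := by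
    simp_rw [hf]; exact integral_const_mul _ _
  rw [h2] at h1
  have : (f g - 1) * ∫ x, f x ∂μ = 0 := by rw [sub_mul, h1, one_mul, sub_self]
  rcases mul_eq_zero.1 this with h | h
  · exact absurd (sub_eq_zero.1 h) hg
  · exact h

lemma mFourier_eq {ι : Type*} [Fintype ι] (n : ι → ℤ) (z : UnitAddTorus ι) :
    UnitAddTorus.mFourier n z = ((AddCircle.toCircle (∑ i, n i • z i) : Circle) : ℂ) := by
  simp only [UnitAddTorus.mFourier, ContinuousMap.coe_mk, fourier_apply]
  induction (Finset.univ : Finset ι) using Finset.cons_induction with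
  | empty => simp
  | cons a s ha ih => rw [Finset.prod_cons, Finset.sum_cons, AddCircle.toCircle_add, ih]; simp

lemma density_lemma {X : Type*} [AddCommGroup X] [TopologicalSpace X] [IsTopologicalAddGroup X]
    [CompactSpace X] {ι : Type*} [Fintype ι] (p : Filter ℕ)
    (Φ : ℕ → X →+ (ι → AddCircle (1 : ℝ))) (hΦ : ∀ k, Continuous (Φ k))
    (hn : ∀ n : ι → ℤ, n ≠ 0 → ∀ᶠ k in p, ∃ x, ∑ i, n i • Φ k x i ≠ 0)
    (O : Set (ι → AddCircle (1 : ℝ))) (hO : IsOpen O) (hne : O.Nonempty) :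
    ∀ᶠ k in p, ∃ x, Φ k x ∈ O := by
  let _ : MeasurableSpace X := borel X
  have : BorelSpace X := ⟨rfl⟩
  let μ : Measure X := Measure.addHaarMeasure (⊤ : TopologicalSpace.PositiveCompacts X)
  let ν : Measure (UnitAddTorus ι) :=
    Measure.addHaarMeasure (⊤ : TopologicalSpace.PositiveCompacts (UnitAddTorus ι))
  have : IsProbabilityMeasure μ := ⟨Measure.addHaarMeasure_self (K₀ := (⊤ : TopologicalSpace.PositiveCompacts X))⟩
  have : IsProbabilityMeasure ν := ⟨Measure.addHaarMeasure_self (K₀ := (⊤ : TopologicalSpace.PositiveCompacts (UnitAddTorus ι)))⟩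
  have intX : ∀ f : X → ℂ, Continuous f → Integrable f μ := fun f hf =>
    hf.integrable_of_hasCompactSupport (HasCompactSupport.of_compactSpace f)
  have intT : ∀ f : UnitAddTorus ι → ℂ, Continuous f → Integrable f ν := fun f hf =>
    hf.integrable_of_hasCompactSupport (HasCompactSupport.of_compactSpace f)
  have key : ∀ f : C(UnitAddTorus ι, ℂ),
      Tendsto (fun k => ∫ x, f (Φ k x) ∂μ) p (nhds (∫ z, f z ∂ν)) := by
    have hspan : ∀ f ∈ Submodule.span ℂ (range (UnitAddTorus.mFourier (d := ι))),
        Tendsto (fun k => ∫ x, f (Φ k x) ∂μ) p (nhds (∫ z, f z ∂ν)) := by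
      intro f hf
      induction hf using Submodule.span_induction with
      | mem f hf =>
        obtain ⟨n, rfl⟩ := hf
        by_cases h0 : n = 0
        · subst h0
          simpa [UnitAddTorus.mFourier_zero] using tendsto_const_nhds
        · have e1 : ∫ z, UnitAddTorus.mFourier n z ∂ν = 0 := by
            apply char_int ν
            · intro x y
              rw [mFourier_eq, mFourier_eq, mFourier_eq, ← Circle.coe_mul, ← AddCircle.toCircle_add]
              simp [Finset.sum_add_distrib]
            · obtain ⟨i, hi⟩ := Function.ne_iff.1 h0
              have hi' : n i ≠ 0 := hi
              classical
              refine ⟨Pi.single i (((1 / (2 * (n i : ℝ)) : ℝ)) : AddCircle (1 : ℝ)), ?_⟩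
              rw [mFourier_eq, Finset.sum_eq_single i]
              · rw [Pi.single_eq_same, ← AddCircle.coe_zsmul]
                intro h
                have h' := AddCircle.injective_toCircle (T := 1) one_ne_zero
                  (a₁ := ((n i • (1 / (2 * (n i : ℝ))) : ℝ) : AddCircle (1:ℝ))) (a₂ := 0)
                  (by rw [AddCircle.toCircle_zero]; exact Circle.ext h)
                rw [AddCircle.coe_eq_zero_iff] at h'
                obtain ⟨m, hm⟩ := h'
                have hr : (n i : ℝ) ≠ 0 := by exact_mod_cast hi'
                have : (m : ℝ) * 2 = 1 := by
                  simp only [zsmul_eq_mul, mul_one] at hm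
                  rw [hm]; field_simp
                have : m * 2 = 1 := by exact_mod_cast this
                omega
              · intro j _ hj; simp [Pi.single_eq_of_ne hj]
              · simp
          rw [e1]
          apply Tendsto.congr' _ tendsto_const_nhds
          filter_upwards [hn n h0] with k hk
          symm
          apply char_int μ (fun x => UnitAddTorus.mFourier n (Φ k x))
          · intro x y
            simp only [mFourier_eq]
            rw [← Circle.coe_mul, ← AddCircle.toCircle_add]
            simp [Finset.sum_add_distrib]
          · obtain ⟨x, hx⟩ := hk
            refine ⟨x, fun h => hx ?_⟩
            rw [mFourier_eq] at h
            apply AddCircle.injective_toCircle (T := 1) one_ne_zero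
            rw [AddCircle.toCircle_zero]; exact Circle.ext h
      | zero => simpa using tendsto_const_nhds
      | add f g _ _ hf hg =>
        simp only [ContinuousMap.add_apply]
        have : ∀ k, ∫ x, (f (Φ k x) + g (Φ k x)) ∂μ = ∫ x, f (Φ k x) ∂μ + ∫ x, g (Φ k x) ∂μ :=
          fun k => integral_add (intX _ (f.continuous.comp (hΦ k))) (intX _ (g.continuous.comp (hΦ k)))
        simp_rw [this]
        rw [integral_add (intT _ f.continuous) (intT _ g.continuous)]
        exact hf.add hg
      | smul c f _ hf =>
        simp only [ContinuousMap.smul_apply, integral_smul]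
        exact hf.const_smul c
    intro f
    have hf : f ∈ closure (Submodule.span ℂ (range (UnitAddTorus.mFourier (d := ι))) : Set C(UnitAddTorus ι, ℂ)) := by
      rw [← Submodule.topologicalClosure_coe, UnitAddTorus.span_mFourier_closure_eq_top]; trivial
    rw [Metric.tendsto_nhds]
    intro ε hε
    obtain ⟨g, hg, hgf⟩ := Metric.mem_closure_iff.1 hf (ε / 3) (by positivity)
    have hpt : ∀ z, ‖f z - g z‖ ≤ ε / 3 := fun z => by
      have := ContinuousMap.dist_apply_le_dist (f := f) (g := g) z
      rw [dist_eq_norm] at this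
      exact this.trans hgf.le
    have b1 : ‖∫ z, f z ∂ν - ∫ z, g z ∂ν‖ ≤ ε / 3 := by
      rw [← integral_sub (intT _ f.continuous) (intT _ g.continuous)]
      have := norm_integral_le_of_norm_le_const (μ := ν) (Eventually.of_forall hpt)
      simpa using this
    filter_upwards [Metric.tendsto_nhds.1 (hspan g hg) (ε / 3) (by positivity)] with k hk
    have b2 : ‖∫ x, f (Φ k x) ∂μ - ∫ x, g (Φ k x) ∂μ‖ ≤ ε / 3 := by
      have e : ∫ x, (f (Φ k x) - g (Φ k x)) ∂μ = ∫ x, f (Φ k x) ∂μ - ∫ x, g (Φ k x) ∂μ :=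
        integral_sub (intX _ (f.continuous.comp (hΦ k))) (intX _ (g.continuous.comp (hΦ k)))
      rw [← e]
      have := norm_integral_le_of_norm_le_const (μ := μ) (Eventually.of_forall fun x => hpt (Φ k x))
      simpa using this
    rw [← dist_eq_norm] at b1 b2
    rw [dist_comm] at b1
    have := dist_triangle4 (∫ x, f (Φ k x) ∂μ) (∫ x, g (Φ k x) ∂μ) (∫ z, g z ∂ν) (∫ z, f z ∂ν)
    linarith
  obtain ⟨z0, hz0⟩ := hne
  obtain ⟨ε, hε, hball⟩ := Metric.isOpen_iff.1 hO z0 hz0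
  let b : UnitAddTorus ι → ℝ := fun z => max 0 (ε - dist z z0)
  have hb : Continuous b := by fun_prop
  have hbpos : 0 < ∫ z, b z ∂ν := by
    apply hb.integral_pos_of_hasCompactSupport_nonneg_nonzero (x := z0)
      (HasCompactSupport.of_compactSpace b)
    · intro z; exact le_max_left _ _
    · simp only [b, dist_self, sub_zero]
      exact (lt_max_of_lt_right hε).ne'
  have hT := key ⟨fun z => (b z : ℂ), by fun_prop⟩
  simp only [ContinuousMap.coe_mk] at hT
  have : ∀ᶠ k in p, ((∫ x, b (Φ k x) ∂μ : ℝ) : ℂ) ≠ 0 := by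
    have h2 : (((∫ z, b z ∂ν : ℝ)) : ℂ) ≠ 0 := by exact_mod_cast hbpos.ne'
    rw [← integral_complex_ofReal] at h2
    have h3 := hT.eventually_ne h2
    filter_upwards [h3] with k hk
    rw [← integral_complex_ofReal]
    exact hk
  filter_upwards [this] with k hk
  by_contra hcon
  push Not at hcon
  apply hk
  have : ∀ x, b (Φ k x) = 0 := by
    intro x
    apply max_eq_left
    by_contra h
    exact hcon x (hball (by rw [Metric.mem_ball]; linarith))
  simp [this]

end analytic

section combi

lemma sel_dich {p : Ultrafilter ℕ} (hp : IsSelective p) (g : ℕ → ℕ) :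
    (∃ c, {k | g k = c} ∈ p) ∨ ∃ B ∈ p, InjOn g B := by
  by_cases hfin : (range g).Finite
  · left
    have : (⋃ c ∈ range g, {k | g k = c}) ∈ p := by
      have : (⋃ c ∈ range g, {k | g k = c}) = Set.univ := by
        ext k; simp
      rw [this]; exact univ_mem
    obtain ⟨c, _, hc⟩ := (Ultrafilter.finite_biUnion_mem_iff hfin).1 this
    exact ⟨c, hc⟩
  · have hinf : (range g).Infinite := hfin
    have := hinf.to_subtype
    let _ : Denumerable (range g) := (nonempty_denumerable (range g)).some
    let e : ℕ ≃ range g := (Denumerable.eqv (range g)).symm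
    have s0 : ∀ k, {n | g n = e k}.Nonempty := by
      intro k
      obtain ⟨n, hn⟩ := (e k).2
      exact ⟨n, hn⟩
    have s1 : Pairwise fun k l => Disjoint {n | g n = e k} {n | g n = e l} := by
      intro k l hkl
      rw [Set.disjoint_left]
      intro n hn hn'
      apply hkl
      apply e.injective
      apply Subtype.ext
      rw [← (hn : g n = e k), ← (hn' : g n = e l)]
    have s2 : (⋃ k, {n | g n = (e k : ℕ)}) = Set.univ := by
      ext n
      simp only [mem_iUnion, mem_ofPred_eq, mem_univ, iff_true]
      obtain ⟨k, hk⟩ := e.surjective ⟨g n, n, rfl⟩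
      exact ⟨k, by rw [hk]⟩
    rcases hp.2 (fun k => {n | g n = e k}) s0 s1 s2 with ⟨k, hk⟩ | ⟨B, hB, hB'⟩
    · exact Or.inl ⟨_, hk⟩
    · right
      refine ⟨B, hB, ?_⟩
      intro a ha b hb hab
      obtain ⟨k, hk⟩ := e.surjective ⟨g a, a, rfl⟩
      have hk' : (e k : ℕ) = g a := by rw [hk]
      exact (hB' k).unique ⟨ha, hk'.symm⟩ ⟨hb, by simp only [mem_ofPred_eq]; rw [hk', hab]⟩

lemma free_cofinite {p : Ultrafilter ℕ} (hp : IsFreeUltrafilter p) : (p : Filter ℕ) ≤ cofinite := by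
  rcases Ultrafilter.le_cofinite_or_eq_pure p with h | ⟨n, h⟩
  · exact h
  · exact absurd h (hp n)

lemma free_compl {p : Ultrafilter ℕ} (hp : IsFreeUltrafilter p) {S : Set ℕ} (hS : S.Finite) :
    Sᶜ ∈ p := free_cofinite hp hS.compl_mem_cofinite

lemma free_ge {p : Ultrafilter ℕ} (hp : IsFreeUltrafilter p) (m : ℕ) : {k | m ≤ k} ∈ p := by
  have := free_compl hp (finite_Iio m)
  filter_upwards [this] with k hk
  simpa using hk

lemma sel_fto {p : Ultrafilter ℕ} (hp : IsSelective p) (g : ℕ → ℕ)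
    (hg : ∀ c, {k | g k = c}.Finite) : ∃ B ∈ p, InjOn g B := by
  rcases sel_dich hp g with ⟨c, hc⟩ | h
  · exact absurd hc (Ultrafilter.compl_mem_iff_notMem.1 (free_compl hp.1 (hg c)))
  · exact h

lemma sel_ppoint {p : Ultrafilter ℕ} (hp : IsSelective p) (B : ℕ → Set ℕ) (hB : ∀ l, B l ∈ p) :
    ∃ C ∈ p, ∃ f : ℕ → ℕ, ∀ l, ∀ k ∈ C, f l ≤ k → k ∈ B l := by
  classical
  by_cases hI : (⋂ l, B l) ∈ p
  · exact ⟨_, hI, 0, fun l k hk _ => mem_iInter.1 hk l⟩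
  have hI' : (⋂ l, B l)ᶜ ∈ p := Ultrafilter.compl_mem_iff_notMem.2 hI
  have hex : ∀ k, k ∈ (⋂ l, B l)ᶜ → ∃ l, k ∉ B l := by
    intro k hk; simpa using hk
  let g : ℕ → ℕ := fun k => if hk : k ∈ (⋂ l, B l)ᶜ then Nat.find (hex k hk) else 0
  have hg1 : ∀ k, k ∈ (⋂ l, B l)ᶜ → k ∉ B (g k) := by
    intro k hk
    simp only [g, dif_pos hk]
    exact Nat.find_spec (hex k hk)
  have hg2 : ∀ k, k ∈ (⋂ l, B l)ᶜ → ∀ l, k ∉ B l → g k ≤ l := by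
    intro k hk l hl
    simp only [g, dif_pos hk]
    exact Nat.find_min' (hex k hk) hl
  rcases sel_dich hp g with ⟨c, hc⟩ | ⟨C, hC, hinj⟩
  · exfalso
    obtain ⟨k, ⟨hk1, hk2⟩, hk3⟩ := p.nonempty_of_mem (inter_mem (inter_mem hc hI') (hB c))
    have := hg1 k hk2
    rw [(hk1 : g k = c)] at this
    exact this hk3
  · have hfin : ∀ l, ∃ m, ∀ k ∈ C ∩ (⋂ l, B l)ᶜ, k ∉ B l → k < m := by
      intro l
      have hf : {k | k ∈ C ∧ g k ≤ l}.Finite := by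
        apply Set.Finite.of_finite_image (f := g)
        · apply (finite_Iic l).subset
          rintro _ ⟨k, ⟨_, h⟩, rfl⟩; exact h
        · exact hinj.mono fun k hk => hk.1
      obtain ⟨m, hm⟩ := hf.bddAbove
      refine ⟨m + 1, fun k hk hkl => Nat.lt_succ_of_le (hm ⟨hk.1, hg2 k hk.2 l hkl⟩)⟩
    choose f hf using hfin
    refine ⟨_, inter_mem hC hI', f, fun l k hk hlk => ?_⟩
    by_contra h
    exact absurd (hf l k hk h) (not_lt.2 hlk)

lemma sel_sep {p q : Ultrafilter ℕ} (hq : IsSelective q) (hpq : ¬ RKle p q) (u v : ℕ → ℕ)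
    (hv : ∀ c, {k | v k = c}.Finite) :
    ∃ X ∈ p, ∃ Y ∈ q, ∀ l ∈ X, ∀ k ∈ Y, u l ≠ v k := by
  have hne : Ultrafilter.map u p ≠ Ultrafilter.map v q := by
    intro h
    obtain ⟨B, hB, hinj⟩ := sel_fto hq v hv
    apply hpq
    refine ⟨Function.invFunOn v B ∘ u, ?_⟩
    rw [← Ultrafilter.map_map, h, Ultrafilter.map_map]
    apply Ultrafilter.coe_injective
    rw [Ultrafilter.coe_map]
    have : (Function.invFunOn v B ∘ v) =ᶠ[(q : Filter ℕ)] id := by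
      filter_upwards [hB] with k hk
      exact hinj.leftInvOn_invFunOn hk
    rw [Filter.map_congr this, Filter.map_id]
  have : ∃ Z, Z ∈ Ultrafilter.map u p ∧ Z ∉ Ultrafilter.map v q := by
    by_contra hcon
    push Not at hcon
    apply hne
    symm
    apply Ultrafilter.coe_injective
    exact Ultrafilter.unique (f := (Ultrafilter.map u p)) (g := (Ultrafilter.map v q : Filter ℕ)) (fun Z hZ => hcon Z hZ) inferInstance
  obtain ⟨Z, hZ1, hZ2⟩ := this
  refine ⟨u ⁻¹' Z, hZ1, v ⁻¹' Zᶜ, Ultrafilter.compl_mem_iff_notMem.2 hZ2, ?_⟩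
  intro l hl k hk h
  apply hk
  rw [← h]; exact hl

/-- interval index -/
lemma exists_intervals (f : ℕ → ℕ) (hf : Monotone f) :
    ∃ π : ℕ → ℕ, (∀ c, {k | π k ≤ c}.Finite) ∧ (∀ l k, π l + 2 ≤ π k → f l ≤ k) ∧ Monotone π := by
  let a : ℕ → ℕ := fun n => (fun x => f x + x + 1)^[n] 0
  have ha : ∀ n, a (n + 1) = f (a n) + a n + 1 := fun n => Function.iterate_succ_apply' _ _ _
  have hmono : StrictMono a := strictMono_nat_of_lt_succ fun n => by rw [ha]; omega
  classical
  let π : ℕ → ℕ := fun k => Nat.findGreatest (fun n : ℕ => a n ≤ k) k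
  have h1 : ∀ k, a (π k) ≤ k := fun k =>
    Nat.findGreatest_spec (P := fun n : ℕ => a n ≤ k) (m := 0) (Nat.zero_le _) (Nat.zero_le _)
  have h2 : ∀ k, k < a (π k + 1) := by
    intro k
    by_contra h
    push Not at h
    have : π k + 1 ≤ π k := Nat.le_findGreatest (P := fun n : ℕ => a n ≤ k) ((hmono.le_apply).trans h) h
    omega
  refine ⟨π, fun c => ?_, fun l k hlk => ?_, fun l k hlk => ?_⟩
  · apply (finite_Iio (a (c + 1))).subset
    intro k hk
    exact (h2 k).trans_le (hmono.monotone (by simpa using hk))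
  · calc f l ≤ f (a (π l + 1)) := hf (h2 l).le
      _ ≤ a (π l + 2) := by
          have e : a (π l + 2) = f (a (π l + 1)) + a (π l + 1) + 1 := ha (π l + 1)
          omega
      _ ≤ a (π k) := hmono.monotone hlk
      _ ≤ k := h1 k
  · have := hmono.lt_iff_lt.1 ((h1 l).trans_lt (hlk.trans_lt (h2 k)))
    omega

lemma sel_spread (q : ℕ → Ultrafilter ℕ) (hq : ∀ i, IsSelective (q i))
    (hinc : ∀ i j, i ≠ j → RKIncomp (q i) (q j))
    (B : ℕ → ℕ → Set ℕ) (hB : ∀ i l, B i l ∈ q i) (hBa : ∀ i, Antitone (B i)) :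
    ∃ A : ℕ → Set ℕ, (∀ i, A i ∈ q i) ∧ (∀ i, ∀ k ∈ A i, i ≤ k) ∧ (∀ i, A i ⊆ B i 0) ∧
      (∀ i j, i ≠ j → Disjoint (A i) (A j)) ∧
      ∀ i j, ∀ l ∈ A j, ∀ k ∈ A i, l < k → k ∈ B i l := by
  choose C hC f hf using fun i => sel_ppoint (hq i) (B i) (hB i)
  let F : ℕ → ℕ := fun l => ∑ i ∈ Finset.range (l + 1), ∑ m ∈ Finset.range (l + 1), f i m
  have hFm : Monotone F := by
    intro a b hab
    have hs : Finset.range (a + 1) ⊆ Finset.range (b + 1) := Finset.range_mono (by omega)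
    calc F a ≤ ∑ i ∈ Finset.range (a + 1), ∑ m ∈ Finset.range (b + 1), f i m :=
          Finset.sum_le_sum fun i _ => Finset.sum_le_sum_of_subset hs
      _ ≤ F b := Finset.sum_le_sum_of_subset hs
  have hFf : ∀ i l, i ≤ l → f i l ≤ F l := by
    intro i l hil
    calc f i l ≤ ∑ m ∈ Finset.range (l + 1), f i m :=
          Finset.single_le_sum (f := fun m => f i m) (fun _ _ => Nat.zero_le _) (by simp)
      _ ≤ F l := Finset.single_le_sum (f := fun i => ∑ m ∈ Finset.range (l + 1), f i m)
          (fun _ _ => Nat.zero_le _) (by simp; omega)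
  obtain ⟨π, hπ1, hπ2, hπ3⟩ := exists_intervals F hFm
  have hsep : ∀ i j, i ≠ j → ∃ X ∈ q i, ∃ Y ∈ q j, ∀ l ∈ X, ∀ k ∈ Y,
      π l + 2 ≤ π k ∨ π k + 2 ≤ π l := by
    intro i j hij
    have hrk := (hinc i j hij).1
    obtain ⟨X1, hX1, Y1, hY1, h1⟩ := sel_sep (hq j) hrk π π
      (fun c => (hπ1 c).subset fun k hk => le_of_eq hk)
    obtain ⟨X2, hX2, Y2, hY2, h2⟩ := sel_sep (hq j) hrk (fun k => π k + 1) π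
      (fun c => (hπ1 c).subset fun k hk => le_of_eq hk)
    obtain ⟨X3, hX3, Y3, hY3, h3⟩ := sel_sep (hq j) hrk π (fun k => π k + 1)
      (fun c => (hπ1 c).subset fun k (hk : π k + 1 = c) => show π k ≤ c by omega)
    refine ⟨_, inter_mem hX1 (inter_mem hX2 hX3), _, inter_mem hY1 (inter_mem hY2 hY3), ?_⟩
    intro l hl k hk
    have e1 := h1 l hl.1 k hk.1
    have e2 := h2 l hl.2.1 k hk.2.1
    have e3 := h3 l hl.2.2 k hk.2.2
    omega
  have hsep' : ∀ i j, ∃ XY : Set ℕ × Set ℕ, XY.1 ∈ q i ∧ XY.2 ∈ q j ∧ (i ≠ j → ∀ l ∈ XY.1, ∀ k ∈ XY.2,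
      π l + 2 ≤ π k ∨ π k + 2 ≤ π l) := by
    intro i j
    by_cases hij : i = j
    · exact ⟨(Set.univ, Set.univ), univ_mem, univ_mem, fun h => absurd hij h⟩
    · obtain ⟨X, hX, Y, hY, h⟩ := hsep i j hij
      exact ⟨(X, Y), hX, hY, fun _ => h⟩
  choose XY hXY1 hXY2 hXY using hsep'
  let W : ℕ → ℕ → Set ℕ := fun i j => (XY i j).1 ∩ (XY j i).2
  have hW : ∀ i j, W i j ∈ q i := fun i j => inter_mem (hXY1 i j) (hXY2 j i)
  have hWs : ∀ i j, i ≠ j → ∀ l ∈ W i j, ∀ k ∈ W j i, π l + 2 ≤ π k ∨ π k + 2 ≤ π l :=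
    fun i j hij l hl k hk => hXY i j hij l hl.1 k hk.2
  choose C' hC' g hg using fun i => sel_ppoint (hq i) (W i) (hW i)
  choose E hE hEinj using fun i => sel_fto (hq i) π
    (fun c => (hπ1 c).subset fun k hk => le_of_eq hk)
  have hpar : ∀ i, ∃ b, {k | π k % 2 = b} ∈ q i := by
    intro i
    by_cases h : {k | π k % 2 = 0} ∈ q i
    · exact ⟨0, h⟩
    · refine ⟨1, ?_⟩
      filter_upwards [Ultrafilter.compl_mem_iff_notMem.2 h] with k hk
      have : ¬ π k % 2 = 0 := hk
      show π k % 2 = 1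
      omega
  choose b hb using hpar
  have hbad : ∀ i, {k | ∀ j < i, ∀ m < g j i, π m + 2 ≤ π k} ∈ q i := by
    intro i
    have hfin : (⋃ j ∈ Iio i, ⋃ m ∈ Iio (g j i), {k | π k ≤ π m + 1}).Finite :=
      (finite_Iio i).biUnion fun j _ => (finite_Iio _).biUnion fun m _ => hπ1 _
    filter_upwards [free_compl (hq i).1 hfin] with k hk
    intro j hj m hm
    by_contra hcon
    apply hk
    simp only [mem_iUnion, mem_Iio, mem_ofPred_eq]
    exact ⟨j, hj, m, hm, by omega⟩
  have hWfin : ∀ i, (⋂ j ∈ Iio i, W i j) ∈ q i := fun i =>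
    (Filter.biInter_mem (finite_Iio i)).2 fun j _ => hW i j
  let A : ℕ → Set ℕ := fun i => (C i ∩ C' i ∩ E i ∩ B i i) ∩ ({k | π k % 2 = b i} ∩
    {k | ∀ j < i, ∀ m < g j i, π m + 2 ≤ π k} ∩ (⋂ j ∈ Iio i, W i j) ∩ {k | i ≤ k})
  have hsp1 : ∀ i j, j < i → ∀ l ∈ A j, ∀ k ∈ A i, π l + 2 ≤ π k ∨ π k + 2 ≤ π l := by
    intro i j hji l hl k hk
    by_cases hlg : g j i ≤ l
    · exact hWs j i hji.ne l (hg j i l hl.1.1.1.2 hlg) k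
        (by have := hk.2.1.2; simp only [mem_iInter] at this; exact this j hji)
    · left
      exact hk.2.1.1.2 j hji l (by omega)
  have hsp : ∀ i j, ∀ l ∈ A j, ∀ k ∈ A i, (l ≠ k ∨ i ≠ j) → π l + 2 ≤ π k ∨ π k + 2 ≤ π l := by
    intro i j l hl k hk hne
    rcases lt_trichotomy i j with hij | hij | hij
    · exact (hsp1 j i hij k hk l hl).symm
    · subst hij
      have hlk : l ≠ k := by simpa using hne
      have e1 : π l ≠ π k := fun h => hlk (hEinj i hl.1.1.2 hk.1.1.2 h)
      have e2 : π l % 2 = b i := hl.2.1.1.1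
      have e3 : π k % 2 = b i := hk.2.1.1.1
      omega
    · exact hsp1 i j hij l hl k hk
  refine ⟨A, ?_, ?_, ?_, ?_, ?_⟩
  · intro i
    exact inter_mem (inter_mem (inter_mem (inter_mem (hC i) (hC' i)) (hE i)) (hB i i))
      (inter_mem (inter_mem (inter_mem (hb i) (hbad i)) (hWfin i)) (free_ge (hq i).1 i))
  · intro i k hk; exact hk.2.2
  · intro i k hk; exact hBa i (Nat.zero_le i) hk.1.2
  · intro i j hij
    rw [Set.disjoint_left]
    intro k hk hk'
    have := hsp i j k hk' k hk (Or.inr hij)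
    omega
  · intro i j l hl k hk hlk
    have hbk : k ∈ B i i := hk.1.2
    rcases le_total l i with hli | hil
    · exact hBa i hli hbk
    · rcases hsp i j l hl k hk (Or.inl hlk.ne) with h | h
      · exact hf i l k hk.1.1.1.1 ((hFf i l hil).trans (hπ2 l k h))
      · have := hπ3 hlk.le
        omega

end combi
section fusion

lemma sel_fusion (q : ℕ → Ultrafilter ℕ) (hq : ∀ i, IsSelective (q i))
    (hinc : ∀ i j, i ≠ j → RKIncomp (q i) (q j))
    {St : Type*} (s0 : St) (step : St → ℕ → ℕ → St) (Good : St → ℕ → Set ℕ)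
    (hGood : ∀ s i, Good s i ∈ q i) :
    ∃ A : ℕ → Set ℕ, (∀ i, A i ∈ q i) ∧ ∃ st : ℕ → St, st 0 = s0 ∧
      (∀ k i, k ∈ A i → k ∈ Good (st k) i ∧ st (k + 1) = step (st k) k i) ∧
      (∀ k, (∀ i, k ∉ A i) → st (k + 1) = st k) := by
  classical
  let R : ℕ → Set St := fun n => Nat.rec (motive := fun _ => Set St) {s0}
    (fun l X => X ∪ ⋃ i ∈ Iic l, Set.image (fun s => step s l i) X) n
  have hR0 : R 0 = {s0} := rfl
  have hRs : ∀ l, R (l + 1) = R l ∪ ⋃ i ∈ Iic l, Set.image (fun s => step s l i) (R l) := fun l => rfl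
  have hRfin : ∀ l, (R l).Finite := by
    intro l
    induction l with
    | zero => rw [hR0]; exact finite_singleton _
    | succ l ih => rw [hRs]; exact ih.union ((finite_Iic l).biUnion fun i _ => ih.image _)
  have hRm : Monotone R := monotone_nat_of_le_succ fun l => by rw [hRs]; exact subset_union_left
  let B : ℕ → ℕ → Set ℕ := fun i l => ⋂ s ∈ R (l + 1), Good s i
  have hB : ∀ i l, B i l ∈ q i := fun i l =>
    (Filter.biInter_mem (hRfin (l + 1))).2 fun s _ => hGood s i
  have hBa : ∀ i, Antitone (B i) := fun i l m hlm =>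
    biInter_subset_biInter_left (hRm (Nat.succ_le_succ hlm))
  obtain ⟨A, hA, hAi, hA0, hdisj, hAB⟩ := sel_spread q hq hinc B hB hBa
  let nxt : ℕ → St → St := fun k s => if h : ∃ i, k ∈ A i then step s k h.choose else s
  let st : ℕ → St := fun n => Nat.rec (motive := fun _ => St) s0 nxt n
  have hst0 : st 0 = s0 := rfl
  have hsts : ∀ k, st (k + 1) = nxt k (st k) := fun k => rfl
  have hin : ∀ k i, k ∈ A i → st (k + 1) = step (st k) k i := by
    intro k i hki
    have hex : ∃ i, k ∈ A i := ⟨i, hki⟩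
    rw [hsts]
    simp only [nxt, dif_pos hex]
    have : hex.choose = i := by
      by_contra hne
      exact Set.disjoint_left.1 (hdisj _ _ hne) hex.choose_spec hki
    rw [this]
  have hout : ∀ k, (∀ i, k ∉ A i) → st (k + 1) = st k := by
    intro k hk
    rw [hsts]
    simp only [nxt]
    rw [dif_neg (by push Not; exact hk)]
  have hinv : ∀ k, st k ∈ R 0 ∨ ∃ l < k, (∃ j, l ∈ A j) ∧ st k ∈ R (l + 1) := by
    intro k
    induction k with
    | zero => left; rw [hR0, hst0]; rfl
    | succ k ih =>
      by_cases hk : ∃ i, k ∈ A i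
      · right
        obtain ⟨i, hi⟩ := hk
        refine ⟨k, by omega, ⟨i, hi⟩, ?_⟩
        have hstk : st k ∈ R k := by
          rcases ih with h | ⟨l, hl, _, h⟩
          · exact hRm (Nat.zero_le k) h
          · exact hRm hl h
        rw [hin k i hi, hRs]
        right
        simp only [mem_iUnion]
        exact ⟨i, hAi i k hi, st k, hstk, rfl⟩
      · rw [hout k (by push Not at hk; exact hk)]
        rcases ih with h | ⟨l, hl, h1, h2⟩
        · exact Or.inl h
        · exact Or.inr ⟨l, by omega, h1, h2⟩
  refine ⟨A, hA, st, hst0, fun k i hki => ⟨?_, hin k i hki⟩, hout⟩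
  rcases hinv k with h | ⟨l, hl, ⟨j, hj⟩, h⟩
  · have := hA0 i hki
    simp only [B, mem_iInter] at this
    exact this _ (hRm (Nat.zero_le (0 + 1)) h)
  · have := hAB i j l hj k hki hl
    simp only [B, mem_iInter] at this
    exact this _ h

end fusion

section core

variable {I : Type*}

/-- evaluation of `x ∈ ℤ^(I)` at a homomorphism given by its values on the basis -/
def evI (x : I →₀ ℤ) (φ : I → AddCircle (1 : ℝ)) : AddCircle (1 : ℝ) := x.sum fun a n => n • φ a

lemma evI_add_left (x y : I →₀ ℤ) (φ : I → AddCircle (1 : ℝ)) :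
    evI (x + y) φ = evI x φ + evI y φ := by
  classical
  exact Finsupp.sum_add_index' (fun a => zero_smul _ _) (fun a m n => add_smul _ _ _)

lemma evI_zero_left (φ : I → AddCircle (1 : ℝ)) : evI (0 : I →₀ ℤ) φ = 0 := Finsupp.sum_zero_index

lemma evI_add_right (x : I →₀ ℤ) (φ ψ : I → AddCircle (1 : ℝ)) :
    evI x (φ + ψ) = evI x φ + evI x ψ := by
  simp [evI, Finsupp.sum, Finset.sum_add_distrib]

/-- `evI` as a homomorphism in the first variable -/
def evHom (φ : I → AddCircle (1 : ℝ)) : (I →₀ ℤ) →+ AddCircle (1 : ℝ) where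
  toFun x := evI x φ
  map_zero' := evI_zero_left φ
  map_add' x y := evI_add_left x y φ

lemma evHom_apply (φ : I → AddCircle (1 : ℝ)) (x : I →₀ ℤ) : evHom φ x = evI x φ := rfl

lemma evI_single (a : I) (n : ℤ) (φ : I → AddCircle (1 : ℝ)) :
    evI (Finsupp.single a n) φ = n • φ a := by
  simp [evI]

lemma evI_cont (x : I →₀ ℤ) : Continuous (evI x) := by
  unfold evI Finsupp.sum
  fun_prop

lemma half_ne_zero : ((1 / 2 : ℝ) : AddCircle (1 : ℝ)) ≠ 0 := by
  intro h'
  rw [AddCircle.coe_eq_zero_iff] at h'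
  obtain ⟨m, hm⟩ := h'
  have : (m : ℝ) * 2 = 1 := by
    simp only [zsmul_eq_mul, mul_one] at hm
    rw [hm]; norm_num
  have : m * 2 = 1 := by exact_mod_cast this
  omega

lemma evI_exists_ne (x : I →₀ ℤ) (hx : x ≠ 0) : ∃ φ, evI x φ ≠ 0 := by
  classical
  obtain ⟨a, ha⟩ := Finsupp.ne_iff.1 hx
  have ha' : x a ≠ 0 := ha
  refine ⟨Pi.single a (((1 / 2 / (x a : ℝ)) : ℝ) : AddCircle (1 : ℝ)), ?_⟩
  have : evI x (Pi.single a (((1 / 2 / (x a : ℝ)) : ℝ) : AddCircle (1 : ℝ))) =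
      ((1 / 2 : ℝ) : AddCircle (1 : ℝ)) := by
    unfold evI
    rw [Finsupp.sum, Finset.sum_eq_single a]
    · rw [Pi.single_eq_same, ← AddCircle.coe_zsmul, zsmul_eq_mul]
      have hr : (x a : ℝ) ≠ 0 := by exact_mod_cast ha'
      congr 1
      field_simp
    · intro b _ hb; simp [Pi.single_eq_of_ne hb]
    · intro h; simp at h; exact absurd h ha'
  rw [this]
  exact half_ne_zero

/-- independence of finitely many sequences modulo constants -/
def IndepC (p : Ultrafilter ℕ) (F : Finset I) (g : I → ℕ → (I →₀ ℤ)) : Prop :=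
  ∀ (c : I → ℤ) (y : I →₀ ℤ), (∀ᶠ k in (p : Filter ℕ), ∑ ξ ∈ F, c ξ • g ξ k = y) →
    ∀ ξ ∈ F, c ξ = 0

lemma indep_dense {L : Type*} [Fintype L] (p : Ultrafilter ℕ) (g : L → ℕ → (I →₀ ℤ))
    (hg : ∀ (c : L → ℤ) (y : I →₀ ℤ), (∀ᶠ k in (p : Filter ℕ), ∑ ξ, c ξ • g ξ k = y) →
      ∀ ξ, c ξ = 0)
    (U : Set (I → AddCircle (1 : ℝ))) (hU : IsOpen U) (hne : U.Nonempty)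
    (V : Set (L → AddCircle (1 : ℝ))) (hV : IsOpen V) (hVne : V.Nonempty) :
    ∀ᶠ k in (p : Filter ℕ), ∃ φ ∈ U, (fun ξ => evI (g ξ k) φ) ∈ V := by
  classical
  obtain ⟨φ0, hφ0⟩ := hne
  obtain ⟨z0, hz0⟩ := hVne
  obtain ⟨S, u, hu, hS⟩ := isOpen_pi_iff.1 hU φ0 hφ0
  let Φ : ℕ → (I → AddCircle (1 : ℝ)) →+ (S ⊕ L → AddCircle (1 : ℝ)) := fun k =>
    { toFun := fun φ => Sum.elim (fun s => φ s) (fun ξ => evI (g ξ k) φ)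
      map_zero' := by
        ext s
        rcases s with s | ξ
        · simp
        · simp [evI]
      map_add' := by
        intro φ ψ
        ext s
        rcases s with s | ξ
        · simp
        · simp [evI_add_right] }
  have hΦ : ∀ k, Continuous (Φ k) := by
    intro k
    apply continuous_pi
    intro s
    rcases s with s | ξ
    · exact continuous_apply (s : I)
    · exact evI_cont (g ξ k)
  let O : Set (S ⊕ L → AddCircle (1 : ℝ)) :=
    (⋂ s : S, {z | z (Sum.inl s) ∈ u s}) ∩ {z | (fun ξ => z (Sum.inr ξ)) ∈ V}
  have hO : IsOpen O := by
    apply IsOpen.inter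
    · apply isOpen_iInter_of_finite
      intro s
      exact (hu s s.2).1.preimage (continuous_apply (Sum.inl s))
    · exact hV.preimage (by fun_prop)
  have hOne : O.Nonempty := by
    refine ⟨Sum.elim (fun s => φ0 s) z0, ?_, ?_⟩
    · simp only [mem_iInter]
      intro s; exact (hu s s.2).2
    · exact hz0
  have hn : ∀ n : S ⊕ L → ℤ, n ≠ 0 → ∀ᶠ k in (p : Filter ℕ), ∃ x, ∑ i, n i • Φ k x i ≠ 0 := by
    intro n hn
    let y : I →₀ ℤ := ∑ s : S, Finsupp.single (s : I) (n (Sum.inl s))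
    have hval : ∀ k φ, ∑ i, n i • Φ k φ i = evI (y + ∑ ξ, n (Sum.inr ξ) • g ξ k) φ := by
      intro k φ
      rw [Fintype.sum_sum_type, ← evHom_apply, map_add, map_sum, map_sum]
      congr 1
      · apply Finset.sum_congr rfl
        intro s _
        rw [evHom_apply, evI_single]; rfl
      · apply Finset.sum_congr rfl
        intro ξ _
        rw [map_zsmul, evHom_apply]; rfl
    have hne : ∀ᶠ k in (p : Filter ℕ), y + ∑ ξ, n (Sum.inr ξ) • g ξ k ≠ 0 := by
      by_contra hcon
      have hcon' : ∀ᶠ k in (p : Filter ℕ), y + ∑ ξ, n (Sum.inr ξ) • g ξ k = 0 := by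
        have := (Ultrafilter.eventually_not (f := p)
          (p := fun k => y + ∑ ξ, n (Sum.inr ξ) • g ξ k ≠ 0)).2 hcon
        filter_upwards [this] with k hk
        exact not_not.1 hk
      have hc := hg (fun ξ => n (Sum.inr ξ)) (-y) (by
        filter_upwards [hcon'] with k hk
        rw [eq_neg_iff_add_eq_zero, add_comm]; exact hk)
      have hy : y = 0 := by
        obtain ⟨k, hk⟩ := hcon'.exists
        simpa [hc] using hk
      apply hn
      ext s
      rcases s with s | ξ
      · have := DFunLike.congr_fun hy (s : I)
        simp only [y, Finsupp.finsetSum_apply, Finsupp.single_apply, Finsupp.coe_zero,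
          Pi.zero_apply] at this
        simpa [Subtype.coe_inj] using this
      · exact hc ξ
    filter_upwards [hne] with k hk
    obtain ⟨φ, hφ⟩ := evI_exists_ne _ hk
    exact ⟨φ, by rw [hval]; exact hφ⟩
  filter_upwards [density_lemma (p : Filter ℕ) Φ hΦ hn O hO hOne] with k hk
  obtain ⟨φ, h1, h2⟩ := hk
  refine ⟨φ, hS ?_, h2⟩
  intro s hs
  exact mem_iInter.1 h1 ⟨s, hs⟩

lemma step_mem (p : Ultrafilter ℕ) (F : Finset I) (g : I → ℕ → (I →₀ ℤ)) (hg : IndepC p F g)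
    (U : Set (I → AddCircle (1 : ℝ))) (hU : IsOpen U) (hne : U.Nonempty) (ε : ℝ) (hε : 0 < ε) :
    ∀ᶠ k in (p : Filter ℕ), ∃ φ ∈ U, ∀ ξ ∈ F, dist (evI (g ξ k) φ) (φ ξ) < ε := by
  classical
  obtain ⟨φ0, hφ0⟩ := hne
  let U1 : Set (I → AddCircle (1 : ℝ)) := U ∩ ⋂ ξ ∈ F, {φ | dist (φ ξ) (φ0 ξ) < ε / 2}
  have hU1 : IsOpen U1 := hU.inter (isOpen_biInter_finset fun ξ _ =>
    isOpen_lt (by fun_prop) continuous_const)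
  have hU1ne : U1.Nonempty := ⟨φ0, hφ0, by simp only [mem_iInter]; intro ξ _; simpa using hε⟩
  let V : Set (F → AddCircle (1 : ℝ)) := ⋂ ξ : F, {z | dist (z ξ) (φ0 ξ) < ε / 2}
  have hV : IsOpen V := isOpen_iInter_of_finite fun ξ =>
    isOpen_lt (by fun_prop) continuous_const
  have hVne : V.Nonempty := ⟨fun ξ => φ0 ξ, by simp only [V, mem_iInter]; intro ξ; simpa using hε⟩
  have hi : ∀ (c : F → ℤ) (y : I →₀ ℤ),
      (∀ᶠ k in (p : Filter ℕ), ∑ ξ, c ξ • (fun ξ : F => g ξ) ξ k = y) → ∀ ξ, c ξ = 0 := by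
    intro c y hy ξ
    have := hg (fun ξ => if h : ξ ∈ F then c ⟨ξ, h⟩ else 0) y (by
      filter_upwards [hy] with k hk
      rw [← hk, ← Finset.sum_coe_sort F]
      apply Finset.sum_congr rfl
      intro ξ _
      simp) ξ ξ.2
    simpa using this
  filter_upwards [indep_dense p (fun ξ : F => g ξ) hi U1 hU1 hU1ne V hV hVne] with k hk
  obtain ⟨φ, hφ, hφV⟩ := hk
  refine ⟨φ, hφ.1, fun ξ hξ => ?_⟩
  have h1 := hφ.2
  simp only [mem_iInter] at h1
  have h1' : dist (φ ξ) (φ0 ξ) < ε / 2 := h1 ξ hξ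
  have h2 : dist (evI (g ξ k) φ) (φ0 ξ) < ε / 2 := mem_iInter.1 hφV ⟨ξ, hξ⟩
  have := dist_triangle_right (evI (g ξ k) φ) (φ ξ) (φ0 ξ)
  linarith

lemma r_mem (p : Ultrafilter ℕ) (hp : IsFreeUltrafilter p) (r : ℕ → (I →₀ ℤ))
    (hr : Function.Injective r)
    (U : Set (I → AddCircle (1 : ℝ))) (hU : IsOpen U) (hne : U.Nonempty)
    (V : Set (AddCircle (1 : ℝ))) (hV : IsOpen V) (hVne : V.Nonempty) (m : ℕ) :
    ∃ n ≥ m, ∃ φ ∈ U, evI (r n) φ ∈ V := by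
  have := indep_dense p (fun _ : Unit => r) (by
    intro c y hy ξ
    by_contra hc
    have h2 := (hy.and (free_ge hp 0))
    obtain ⟨k, hk⟩ := hy.exists
    obtain ⟨l, hl, hkl⟩ := (hy.and (free_ge hp (k + 1))).exists
    simp only [Finset.univ_unique, Finset.sum_singleton] at hk hl
    have : r k = r l := by
      have h3 : c default • (r k - r l) = 0 := by rw [smul_sub, hk, hl, sub_self]
      rcases smul_eq_zero.1 h3 with h | h
      · exact absurd h hc
      · exact sub_eq_zero.1 h
    have := hr this
    have hkl' : k + 1 ≤ l := hkl
    omega) U hU hne {z | z () ∈ V} (hV.preimage (continuous_apply ()))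
    ⟨fun _ => hVne.some, hVne.some_mem⟩
  obtain ⟨n, ⟨φ, h1, h2⟩, hn⟩ := (this.and (free_ge hp m)).exists
  exact ⟨n, hn, φ, h1, h2⟩

/-- nonempty open set inside another with closure contained -/
lemma shrink {X : Type*} [TopologicalSpace X] [RegularSpace X] (W : Set X) (hW : IsOpen W)
    (hne : W.Nonempty) : ∃ U : Set X, IsOpen U ∧ U.Nonempty ∧ closure U ⊆ W := by
  obtain ⟨x, hx⟩ := hne
  obtain ⟨t, ht, hc, htW⟩ := exists_mem_nhds_isClosed_subset (hW.mem_nhds hx)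
  refine ⟨interior t, isOpen_interior, ⟨x, mem_interior_iff_mem_nhds.2 ht⟩, ?_⟩
  exact (closure_minimal interior_subset hc).trans htW

theorem core_thm (q : ℕ → Ultrafilter ℕ) (hq : ∀ i, IsSelective (q i))
    (hinc : ∀ i j, i ≠ j → RKIncomp (q i) (q j))
    (K : ℕ → Set I) (code : I → ℕ) (hcode : ∀ i, InjOn code (K i)) (h : I → ℕ → (I →₀ ℤ))
    (hind : ∀ i, ∀ F : Finset I, ↑F ⊆ K i → IndepC (q i) F h)
    (d : I →₀ ℤ) (hd : d ≠ 0) (r : ℕ → (I →₀ ℤ)) (hr : Function.Injective r) :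
    ∃ φ : I → AddCircle (1 : ℝ), evI d φ ≠ 0 ∧
      (∀ i, ∀ ξ ∈ K i, IsPLim (q i) (fun k => evI (h ξ k) φ) (φ ξ)) ∧
      ¬ ∃ l : AddCircle (1 : ℝ), Tendsto (fun n => evI (r n) φ) atTop (nhds l) := by
  classical
  have hFfin : ∀ i m, {ξ | ξ ∈ K i ∧ code ξ ≤ m}.Finite := by
    intro i m
    apply Set.Finite.of_finite_image (f := code)
    · apply (finite_Iic m).subset
      rintro _ ⟨k, ⟨_, h⟩, rfl⟩; exact h
    · exact (hcode i).mono fun k hk => hk.1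
  let F : ℕ → ℕ → Finset I := fun i m => (hFfin i m).toFinset
  have hF : ∀ i m ξ, ξ ∈ F i m ↔ ξ ∈ K i ∧ code ξ ≤ m := by
    intro i m ξ; simp [F]
  let OS := {U : Set (I → AddCircle (1 : ℝ)) // IsOpen U ∧ U.Nonempty}
  let Gl : ℕ → ℕ → ℕ → Set (I → AddCircle (1 : ℝ)) := fun m k i =>
    ⋂ ξ ∈ F i m, {φ | dist (evI (h ξ k) φ) (φ ξ) < 1 / ((m : ℝ) + 1)}
  have hGl : ∀ m k i, IsOpen (Gl m k i) := fun m k i => isOpen_biInter_finset fun ξ _ =>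
    isOpen_lt ((evI_cont _).dist (continuous_apply ξ)) continuous_const
  let z2 : AddCircle (1 : ℝ) := ((1 / 2 : ℝ) : AddCircle (1 : ℝ))
  let δ : ℝ := dist (0 : AddCircle (1 : ℝ)) z2 / 3
  have hδ : 0 < δ := div_pos (dist_pos.2 half_ne_zero.symm) (by norm_num)
  let Osc : ℕ → Set (I → AddCircle (1 : ℝ)) := fun m =>
    {φ | (∃ n ≥ m, dist (evI (r n) φ) 0 < δ) ∧ ∃ n ≥ m, dist (evI (r n) φ) z2 < δ}
  have hstep : ∀ (s : ℕ × OS) (k i : ℕ), ∃ U : OS, U.1 ⊆ s.2.1 ∧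
      ((s.2.1 ∩ Gl s.1 k i).Nonempty → closure U.1 ⊆ Gl s.1 k i) ∧ closure U.1 ⊆ Osc s.1 := by
    intro s k i
    have h1 : ∃ W : Set (I → AddCircle (1 : ℝ)), IsOpen W ∧ W.Nonempty ∧ W ⊆ s.2.1 ∧
        ((s.2.1 ∩ Gl s.1 k i).Nonempty → W ⊆ Gl s.1 k i) := by
      by_cases hc : (s.2.1 ∩ Gl s.1 k i).Nonempty
      · exact ⟨_, s.2.2.1.inter (hGl _ _ _), hc, inter_subset_left, fun _ => inter_subset_right⟩
      · exact ⟨_, s.2.2.1, s.2.2.2, subset_rfl, fun h => absurd h hc⟩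
    obtain ⟨W, hW, hWne, hWs, hWG⟩ := h1
    obtain ⟨n1, hn1, φ1, hφ1, hφ1'⟩ := r_mem (q 0) (hq 0).1 r hr W hW hWne (Metric.ball 0 δ)
      Metric.isOpen_ball ⟨0, Metric.mem_ball_self hδ⟩ s.1
    have hW1 : IsOpen (W ∩ evI (r n1) ⁻¹' Metric.ball 0 δ) :=
      hW.inter (Metric.isOpen_ball.preimage (evI_cont _))
    obtain ⟨n2, hn2, φ2, hφ2, hφ2'⟩ := r_mem (q 0) (hq 0).1 r hr _ hW1 ⟨φ1, hφ1, hφ1'⟩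
      (Metric.ball z2 δ) Metric.isOpen_ball ⟨z2, Metric.mem_ball_self hδ⟩ s.1
    have hW2 := hW1.inter (Metric.isOpen_ball.preimage (evI_cont (r n2)) :
      IsOpen (evI (r n2) ⁻¹' Metric.ball z2 δ))
    obtain ⟨U, hU, hUne, hUc⟩ := shrink _ hW2 ⟨φ2, hφ2, hφ2'⟩
    refine ⟨⟨U, hU, hUne⟩, ?_, ?_, ?_⟩
    · exact fun φ hφ => hWs (hUc (subset_closure hφ)).1.1
    · exact fun hc φ hφ => hWG hc (hUc hφ).1.1
    · exact fun φ hφ => ⟨⟨n1, hn1, (hUc hφ).1.2⟩, ⟨n2, hn2, (hUc hφ).2⟩⟩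
  choose nx hnx1 hnx2 hnx3 using hstep
  obtain ⟨U0, hU0, hU0ne, hU0c⟩ := shrink {φ : I → AddCircle (1 : ℝ) | evI d φ ≠ 0}
    (isOpen_ne.preimage (evI_cont d)) (evI_exists_ne d hd)
  obtain ⟨A, hA, st, hst0, hstA, hstN⟩ := sel_fusion q hq hinc
    ((0, ⟨U0, hU0, hU0ne⟩) : ℕ × OS) (fun s k i => (s.1 + 1, nx s k i))
    (fun s i => {k | (s.2.1 ∩ Gl s.1 k i).Nonempty}) (by
      intro s i
      have := step_mem (q i) (F i s.1) h (hind i _ (fun ξ hξ => ((hF _ _ _).1 hξ).1)) s.2.1 s.2.2.1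
        s.2.2.2 (1 / ((s.1 : ℝ) + 1)) (by positivity)
      filter_upwards [this] with k hk
      obtain ⟨φ, h1, h2⟩ := hk
      exact ⟨φ, h1, by simp only [Gl, mem_iInter]; exact h2⟩)
  have hanti : ∀ k, (st (k + 1)).2.1 ⊆ (st k).2.1 := by
    intro k
    by_cases hk : ∃ i, k ∈ A i
    · obtain ⟨i, hi⟩ := hk
      rw [(hstA k i hi).2]; exact hnx1 _ _ _
    · rw [hstN k (by push Not at hk; exact hk)]
  have hmono : Monotone fun k => (st k).1 := by
    apply monotone_nat_of_le_succ
    intro k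
    by_cases hk : ∃ i, k ∈ A i
    · obtain ⟨i, hi⟩ := hk
      rw [(hstA k i hi).2]; exact Nat.le_succ _
    · rw [hstN k (by push Not at hk; exact hk)]
  have hnext : ∀ m, ∃ l ≥ m, l ∈ A 0 := by
    intro m
    obtain ⟨l, h1, h2⟩ := (q 0).nonempty_of_mem (inter_mem (hA 0) (free_ge (hq 0).1 m))
    exact ⟨l, h2, h1⟩
  have hunb : ∀ M, ∃ k, M ≤ (st k).1 := by
    intro M
    induction M with
    | zero => exact ⟨0, Nat.zero_le _⟩
    | succ M ih =>
      obtain ⟨k, hk⟩ := ih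
      obtain ⟨l, hl, hlA⟩ := hnext k
      refine ⟨l + 1, ?_⟩
      rw [(hstA l 0 hlA).2]
      exact Nat.succ_le_succ (hk.trans (hmono hl))
  obtain ⟨φ, hφ⟩ : (⋂ k, closure (st k).2.1).Nonempty := by
    apply IsCompact.nonempty_iInter_of_sequence_nonempty_isCompact_isClosed
    · intro k; exact closure_mono (hanti k)
    · intro k; exact (st k).2.2.2.closure
    · exact isClosed_closure.isCompact
    · intro k; exact isClosed_closure
  rw [mem_iInter] at hφ
  refine ⟨φ, ?_, ?_, ?_⟩
  · have := hφ 0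
    rw [hst0] at this
    exact hU0c this
  · intro i ξ hξ V hV
    obtain ⟨ε, hε, hball⟩ := Metric.mem_nhds_iff.1 hV
    obtain ⟨N, hN⟩ := exists_nat_one_div_lt hε
    obtain ⟨k0, hk0⟩ := hunb (max N (code ξ))
    filter_upwards [hA i, free_ge (hq i).1 k0] with k hkA hk
    apply hball
    have hm : max N (code ξ) ≤ (st k).1 := hk0.trans (hmono hk)
    have h1 := hφ (k + 1)
    rw [(hstA k i hkA).2] at h1
    have h2 := hnx2 _ _ _ (hstA k i hkA).1 h1
    simp only [Gl, mem_iInter] at h2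
    have h3 : dist (evI (h ξ k) φ) (φ ξ) < 1 / (((st k).1 : ℝ) + 1) :=
      h2 ξ ((hF _ _ _).2 ⟨hξ, (le_max_right _ _).trans hm⟩)
    have h4 : 1 / (((st k).1 : ℝ) + 1) ≤ 1 / ((N : ℝ) + 1) := by
      apply one_div_le_one_div_of_le (by positivity)
      have : N ≤ (st k).1 := (le_max_left _ _).trans hm
      have : (N : ℝ) ≤ ((st k).1 : ℝ) := by exact_mod_cast this
      linarith
    rw [Metric.mem_ball]
    linarith
  · rintro ⟨l, hl⟩
    have hosc : ∀ m, φ ∈ Osc m := by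
      intro m
      obtain ⟨k, hk⟩ := hunb m
      obtain ⟨l, hl, hlA⟩ := hnext k
      have h1 := hφ (l + 1)
      rw [(hstA l 0 hlA).2] at h1
      have hm : m ≤ (st l).1 := hk.trans (hmono hl)
      obtain ⟨⟨n1, hn1, h3⟩, ⟨n2, hn2, h4⟩⟩ := hnx3 _ _ _ h1
      exact ⟨⟨n1, hm.trans hn1, h3⟩, ⟨n2, hm.trans hn2, h4⟩⟩
    obtain ⟨N, hN⟩ := Metric.tendsto_atTop.1 hl (δ / 2) (by positivity)
    obtain ⟨⟨n1, hn1, h3⟩, ⟨n2, hn2, h4⟩⟩ := hosc N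
    have e1 := hN n1 hn1
    have e2 := hN n2 hn2
    have t1 := dist_triangle_left (0 : AddCircle (1 : ℝ)) l (evI (r n1) φ)
    have t2 := dist_triangle_left l z2 (evI (r n2) φ)
    have t3 := dist_triangle (0 : AddCircle (1 : ℝ)) l z2
    have : dist (0 : AddCircle (1 : ℝ)) z2 = 3 * δ := by simp only [δ]; ring
    linarith

end core

lemma cls_smul (κ : Cardinal) (p : Ultrafilter ℕ) (c : ℤ) (f : ℕ → GZ κ) :
    (c : ℚ) • cls κ p f = clsHom κ p (c • f) := by
  have h1 : clsHom κ p (c • f) = cls κ p (c • f) := rfl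
  rw [h1]
  unfold cls
  rw [← Filter.Germ.coe_smul]
  congr 1
  funext n
  ext a
  simp [toQ]

lemma indepC_of_li (κ : Cardinal) (p : Ultrafilter ℕ) (h : Idx κ → (ℕ → GZ κ)) (J : Set (Idx κ))
    (hli : LinearIndependent ℚ (Sum.elim (fun ξ : J => cls κ p (h ↑ξ))
        (fun ζ : Idx κ => clsChi κ p ζ)))
    (F : Finset (Idx κ)) (hF : ∀ ξ ∈ F, ξ ∈ J) : IndepC p F h := by
  classical
  intro c y hy ξ hξ
  let F' : Finset J := F.subtype (· ∈ J)
  have hkey := linearIndependent_iff'.1 hli (F'.disjSum y.support)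
    (Sum.elim (fun ξ => (c ξ : ℚ)) (fun α => ((-y α : ℤ) : ℚ))) (by
      rw [Finset.sum_disjSum]
      simp only [Sum.elim_inl, Sum.elim_inr]
      have e1 : ∑ x ∈ F', (c x : ℚ) • cls κ p (h x) = clsHom κ p (∑ ξ ∈ F, c ξ • h ξ) := by
        rw [map_sum, ← Finset.sum_subtype_of_mem (p := (· ∈ J)) _ hF]
        exact Finset.sum_congr rfl fun x _ => cls_smul _ _ _ _
      have e2 : ∑ α ∈ y.support, ((-y α : ℤ) : ℚ) • clsChi κ p α =
          clsHom κ p (∑ α ∈ y.support, (-y α) • (fun _ => chi κ α : ℕ → GZ κ)) := by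
        rw [map_sum]
        exact Finset.sum_congr rfl fun x _ => cls_smul _ _ _ _
      rw [e1, e2, ← map_add]
      have e3 : ∀ᶠ k in (p : Filter ℕ), toQ κ ((∑ ξ ∈ F, c ξ • h ξ +
          ∑ α ∈ y.support, (-y α) • (fun _ => chi κ α : ℕ → GZ κ) : ℕ → GZ κ) k) = 0 := by
        filter_upwards [hy] with k hk
        have h2 : ∑ α ∈ y.support, y α • chi κ α = y := by
          conv_rhs => rw [← Finsupp.sum_single y]
          unfold Finsupp.sum chi
          exact Finset.sum_congr rfl fun α _ => by simp
        have h3 : (∑ ξ ∈ F, c ξ • h ξ + ∑ α ∈ y.support, (-y α) • (fun _ => chi κ α : ℕ → GZ κ) : ℕ → GZ κ) k = 0 := by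
          simp only [Pi.add_apply, Finset.sum_apply, Pi.smul_apply, neg_smul,
            Finset.sum_neg_distrib, Pi.neg_apply]
          rw [hk, h2, add_neg_cancel]
        rw [h3]
        exact Finsupp.mapRange_zero
      exact Filter.Germ.coe_eq.2 e3) (Sum.inl ⟨ξ, hF ξ hξ⟩) (by simp [F', hξ])
  simpa using hkey

theorem statement14 (κ : Cardinal) (hκ : ℵ₀ ≤ κ) (hpow : κ ^ ℵ₀ = κ)
    (p : List (Set ℕ) → ℕ → Ultrafilter ℕ)
    (hsel : ∀ T, IsTower T → ∀ n, IsSelective (p T n))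
    (hinc : ∀ T T', IsTower T → IsTower T' → ∀ n n' : ℕ, (T, n) ≠ (T', n') →
      RKIncomp (p T n) (p T' n'))
    (hlast : ∀ T, IsTower T → ∀ n, lastOf T ∈ p T n)
    (h : Idx κ → (ℕ → GZ κ))
    (henum : ∀ g : ℕ → GZ κ, ∃ ξ : Idx κ, Ordinal.omega0 ≤ (ξ : Ordinal) ∧ h ξ = g)
    (hsupp : ∀ ξ : Idx κ, Ordinal.omega0 ≤ (ξ : Ordinal) → ∀ n : ℕ,
      ∀ α ∈ (h ξ n).support, (α : Ordinal) < (ξ : Ordinal))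
    (J : List (Set ℕ) → ℕ → Set (Idx κ))
    (hJω : ∀ T, IsTower T → ∀ n : ℕ, ∀ ξ ∈ J T n, Ordinal.omega0 ≤ (ξ : Ordinal))
    (hJdisj : ∀ T T', IsTower T → IsTower T' → ∀ n n' : ℕ, (T, n) ≠ (T', n') →
      Disjoint (J T n) (J T' n'))
    (hJdist : ∀ T, IsTower T → ∀ n : ℕ, ∀ ξ ∈ J T n, ∀ ζ ∈ J T n, ξ ≠ ζ →
      cls κ (p T n) (h ξ) ≠ cls κ (p T n) (h ζ))
    (hJli : ∀ T, IsTower T → ∀ n : ℕ, LinearIndependent ℚ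
      (Sum.elim (fun ξ : J T n => cls κ (p T n) (h ↑ξ))
        (fun ζ : Idx κ => clsChi κ (p T n) ζ)))
    (d : GZ κ) (hd : d ≠ 0) (r : ℕ → GZ κ) (hr : Function.Injective r)
    (D : Set (Idx κ)) (hDc : D.Countable) (hDi : D.Infinite)
    (hωD : ∀ ξ : Idx κ, (ξ : Ordinal) < Ordinal.omega0 → ξ ∈ D)
    (hdD : ↑d.support ⊆ D) (hrD : ∀ n : ℕ, ↑(r n).support ⊆ D)
    (hDJ : {Tn : List (Set ℕ) × ℕ | IsTower Tn.1 ∧ (D ∩ J Tn.1 Tn.2).Nonempty}.Infinite)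
    (hDcl : ∀ ξ ∈ D, Ordinal.omega0 ≤ (ξ : Ordinal) → ∀ n : ℕ, ↑(h ξ n).support ⊆ D) :
    ∃ φ : ↥(Finsupp.supported ℤ ℤ D) →+ AddCircle (1 : ℝ),
      φ ⟨d, mem_suppD hdD⟩ ≠ 0 ∧
      (∀ T : List (Set ℕ), ∀ hT : IsTower T, ∀ n : ℕ, ∀ ξ : Idx κ,
        ∀ hξD : ξ ∈ D, ∀ hξJ : ξ ∈ J T n,
        IsPLim (p T n)
          (fun k => φ ⟨h ξ k, mem_suppD (hDcl ξ hξD (hJω T hT n ξ hξJ) k)⟩)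
          (φ ⟨chi κ ξ, chi_mem_suppD hξD⟩)) ∧
      ¬ ∃ l : AddCircle (1 : ℝ),
        Filter.Tendsto (fun n => φ ⟨r n, mem_suppD (hrD n)⟩) Filter.atTop (nhds l) := by
  classical
  let P : Set (List (Set ℕ) × ℕ) :=
    {Tn : List (Set ℕ) × ℕ | IsTower Tn.1 ∧ (D ∩ J Tn.1 Tn.2).Nonempty}
  have hPc : P.Countable := by
    have hch : ∀ x : P, ∃ ξ : D, (ξ : Idx κ) ∈ J x.1.1 x.1.2 := fun x => by
      obtain ⟨ξ, h1, h2⟩ := x.2.2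
      exact ⟨⟨ξ, h1⟩, h2⟩
    choose w hw using hch
    have := hDc.to_subtype
    have hinj : Function.Injective w := by
      intro x y hxy
      by_contra hne
      have hne' : (x.1.1, x.1.2) ≠ (y.1.1, y.1.2) := fun e => hne (Subtype.ext e)
      refine Set.disjoint_left.1 (hJdisj _ _ x.2.1 y.2.1 _ _ hne') (hw x) ?_
      rw [hxy]; exact hw y
    exact Set.countable_coe_iff.1 hinj.countable
  have := hPc.to_subtype
  have : Infinite P := hDJ.to_subtype
  let _ : Denumerable P := (nonempty_denumerable P).some
  let e : ℕ ≃ P := (Denumerable.eqv P).symm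
  obtain ⟨code, hcode⟩ := Set.countable_iff_exists_injOn.1 hDc
  obtain ⟨φ, hφd, hφp, hφr⟩ := core_thm (fun i => p (e i).1.1 (e i).1.2)
    (fun i => hsel _ (e i).2.1 _)
    (fun i j hij => hinc _ _ (e i).2.1 (e j).2.1 _ _
      (fun he => hij (e.injective (Subtype.ext he))))
    (fun i => D ∩ J (e i).1.1 (e i).1.2) code (fun i => hcode.mono inter_subset_left) h
    (fun i F hF => indepC_of_li κ _ h _ (hJli _ (e i).2.1 _) F (fun ξ hξ => (hF hξ).2))
    d hd r hr
  refine ⟨(evHom φ).comp (Finsupp.supported ℤ ℤ D).subtype.toAddMonoidHom, hφd, ?_, hφr⟩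
  intro T hT n ξ hξD hξJ
  obtain ⟨i, hi⟩ := e.surjective ⟨(T, n), hT, ξ, hξD, hξJ⟩
  have hchi : evI (chi κ ξ) φ = φ ξ := by
    unfold chi
    rw [evI_single, one_smul]
  have hp := hφp i ξ (by rw [hi]; exact ⟨hξD, hξJ⟩)
  simp only [hi] at hp
  rw [← hchi] at hp
  exact hp

end
end

section
/- Let κ be an infinite cardinal with κ^ω = κ and G = ℤ^(κ). Suppose: (i) (p_{T,n} : T ∈ 𝒯, n ∈ ω) is a family of pairwise Rudin–Keisler incomparable selective ultrafilters on ω with l(T) ∈ p_{T,n}; (ii) (h_ξ : ω ≤ ξ < κ) is an enumeration of G^ω with supp h_ξ(n) ⊆ ξ for all n ∈ ω and ω ≤ ξ < κ; (iii) (J_{T,n} : T ∈ 𝒯, n ∈ ω) is a family of pairwise disjoint subsets of κ \ ω, infinitely many of which are nonempty, such that for each (T,n) the classes [h_ξ]_{p_{T,n}} (ξ ∈ J_{T,n}) are pairwise distinct and {[h_ξ]_{p_{T,n}} : ξ ∈ J_{T,n}} ∪ {[χ⃗_ζ]_{p_{T,n}} : ζ < κ} is a ℚ-linearly independent subset of Ult(ℚ,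 p_{T,n}). Let d ∈ G be nonzero and let r be an injective sequence in G. Then there exists a group homomorphism φ : ℤ^(κ) → 𝕋 such that: φ(d) ≠ 0; for every T ∈ 𝒯, n ∈ ω and ξ ∈ J_{T,n}, the sequence (φ(h_ξ(k)) : k ∈ ω) has p_{T,n}-limit φ(χ_ξ); and the sequence (φ(r(n)) : n ∈ ω) does not converge in 𝕋. -/
open Cardinal Filter Set Pointwise

noncomputable section

/-- For nonzero integer vectors there is a torus point where the character equals `-1`. -/
lemma aux_mFourier_toCircle {ι : Type*} [Fintype ι] (m : ι → ℤ) (z : ι → AddCircle (1 : ℝ)) :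
    UnitAddTorus.mFourier m z = ((∑ i, m i • z i).toCircle : ℂ) := by
  have key : ∀ s : Finset ι, ∏ i ∈ s, fourier (m i) (z i)
      = ((∑ i ∈ s, m i • z i).toCircle : ℂ) := by
    classical
    intro s
    induction s using Finset.induction_on with
    | empty => simp
    | insert a s ha ih =>
      rw [Finset.prod_insert ha, Finset.sum_insert ha, ih, AddCircle.toCircle_add, fourier_apply]
      simp
  exact key Finset.univ

lemma aux_half_s15 :
    (AddCircle.toCircle (((1 / 2 : ℝ) : ℝ) : AddCircle (1 : ℝ)) : ℂ) = -1 := by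
  rw [AddCircle.toCircle_apply_mk]
  rw [Circle.coe_exp]
  have : ((2 * Real.pi / 1 * (1 / 2) : ℝ) : ℂ) * Complex.I = Real.pi * Complex.I := by
    push_cast; ring
  rw [this, Complex.exp_pi_mul_I]

lemma aux_zsmul_half (a : ℤ) (ha : a ≠ 0) :
    a • (((1 / (2 * a) : ℝ)) : AddCircle (1 : ℝ)) = ((1 / 2 : ℝ) : AddCircle (1 : ℝ)) := by
  rw [← AddCircle.coe_zsmul]
  congr 1
  have : (a : ℝ) ≠ 0 := by exact_mod_cast ha
  simp only [zsmul_eq_mul]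
  field_simp

lemma torus_hit {ι β : Type*} [Fintype ι] (ε : ℝ) (hε : 0 < ε) :
    ∃ M : Finset (ι → ℤ), 0 ∉ M ∧ ∀ (B : Finset β), B.Nonempty →
      ∀ z : β → (ι → AddCircle (1 : ℝ)),
      (∀ m ∈ M, ∑ b ∈ B, UnitAddTorus.mFourier m (z b) = 0) → ∃ b ∈ B, ∀ i, ‖z b i‖ < ε := by
  classical
  let μ : MeasureTheory.Measure (ι → AddCircle (1 : ℝ)) := MeasureTheory.Measure.addHaar
  let u : (ι → AddCircle (1 : ℝ)) → ℝ := fun z => max 0 (ε - ‖z‖)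
  have hu : Continuous u := by fun_prop
  have hupos : 0 < ∫ z, u z ∂μ := by
    apply Continuous.integral_pos_of_hasCompactSupport_nonneg_nonzero (x := 0) hu
    · exact HasCompactSupport.of_compactSpace u
    · intro z; exact le_max_left _ _
    · simp [u, hε.ne', hε.le]
  let uc : C(ι → AddCircle (1 : ℝ), ℂ) := ⟨fun z => (u z : ℂ), by fun_prop⟩
  set I := ∫ z, u z ∂μ with hI
  set V := μ.real Set.univ with hV
  have hV0 : 0 ≤ V := MeasureTheory.measureReal_nonneg
  obtain ⟨η, hη, hη2⟩ : ∃ η : ℝ, 0 < η ∧ 2 * η * V < I := by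
    refine ⟨I / (2 * (V + 1)), by positivity, ?_⟩
    rw [show 2 * (I / (2 * (V + 1))) * V = I * (V / (V + 1)) by field_simp]
    have : V / (V + 1) < 1 := by rw [div_lt_one (by positivity)]; linarith
    nlinarith
  have hmem : uc ∈ closure ((Submodule.span ℂ (Set.range (UnitAddTorus.mFourier (d := ι))) :
      Submodule ℂ C(ι → AddCircle (1 : ℝ), ℂ)) : Set C(ι → AddCircle (1 : ℝ), ℂ)) := by
    have := UnitAddTorus.span_mFourier_closure_eq_top (d := ι)
    rw [← Submodule.topologicalClosure_coe]
    erw [this]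
    trivial
  rw [Metric.mem_closure_iff] at hmem
  obtain ⟨v, hv, hvd⟩ := hmem η hη
  obtain ⟨c, rfl⟩ := Finsupp.mem_span_range_iff_exists_finsupp.1 hv
  set v := c.sum fun i a => a • UnitAddTorus.mFourier (d := ι) i with hvdef
  have hvapp : ∀ z, v z = ∑ m ∈ c.support, c m * UnitAddTorus.mFourier m z := by
    intro z
    rw [hvdef, Finsupp.sum]
    erw [ContinuousMap.sum_apply]
    rfl
  have hclose : ∀ z, ‖uc z - v z‖ < η := by
    intro z
    rw [← dist_eq_norm]
    exact lt_of_le_of_lt (ContinuousMap.dist_apply_le_dist z) hvd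
  have hcharint : ∀ m : ι → ℤ, m ≠ 0 → ∫ z, UnitAddTorus.mFourier m z ∂μ = 0 := by
    intro m hm
    obtain ⟨i, hi⟩ : ∃ i, m i ≠ 0 := by
      by_contra hcon; push Not at hcon; exact hm (funext hcon)
    apply MeasureTheory.integral_eq_zero_of_add_right_eq_neg
      (g := Pi.single i (((1 / (2 * (m i)) : ℝ)) : AddCircle (1 : ℝ)))
    intro z
    erw [aux_mFourier_toCircle, aux_mFourier_toCircle]
    have : ∑ j, m j • (z + (Pi.single i (((1 / (2 * (m i)) : ℝ)) : AddCircle (1 : ℝ))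
        : ι → AddCircle (1 : ℝ))) j
        = ∑ j, m j • z j + ((1 / 2 : ℝ) : AddCircle (1 : ℝ)) := by
      simp only [Pi.add_apply, smul_add, Finset.sum_add_distrib]
      congr 1
      rw [Finset.sum_eq_single i]
      · rw [Pi.single_eq_same, aux_zsmul_half _ hi]
      · intro j _ hj; rw [Pi.single_eq_of_ne hj]; simp
      · simp
    rw [this, AddCircle.toCircle_add, Circle.coe_mul, aux_half_s15]
    ring
  have hint : ∀ f : C(ι → AddCircle (1 : ℝ), ℂ), MeasureTheory.Integrable (fun z => f z) μ := by
    intro f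
    exact f.continuous.integrable_of_hasCompactSupport (HasCompactSupport.of_compactSpace _)
  have hvint : ∫ z, v z ∂μ = c 0 * V := by
    simp_rw [hvapp]
    rw [MeasureTheory.integral_finsetSum]
    · simp_rw [MeasureTheory.integral_const_mul]
      rw [Finset.sum_eq_single 0]
      · rw [UnitAddTorus.mFourier_zero]
        simp [V]
      · intro m _ hm; rw [hcharint m hm, mul_zero]
      · intro hm; rw [Finsupp.notMem_support_iff.1 hm, zero_mul]
    · intro m _
      exact (hint (UnitAddTorus.mFourier m)).const_mul _
  have hucint : ∫ z, uc z ∂μ = (I : ℂ) := by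
    rw [hI, ← integral_complex_ofReal]; rfl
  have hdiff : ‖(I : ℂ) - c 0 * V‖ ≤ η * V := by
    rw [← hucint, ← hvint, ← MeasureTheory.integral_sub (hint uc) (hint v)]
    have := MeasureTheory.norm_integral_le_of_norm_le_const (μ := μ)
      (f := fun z => uc z - v z) (C := η) (Eventually.of_forall fun z => (hclose z).le)
    exact this
  refine ⟨c.support.erase 0, by simp, ?_⟩
  intro B hB z hz
  by_contra hcon
  push Not at hcon
  have hu0 : ∀ b ∈ B, uc (z b) = 0 := by
    intro b hb
    obtain ⟨i, hi⟩ := hcon b hb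
    have : ε ≤ ‖z b‖ := hi.trans (norm_le_pi_norm (z b) i)
    have : u (z b) = 0 := by simp [u, this]
    simp [uc, this]
  have hsum : ∑ b ∈ B, v (z b) = B.card * c 0 := by
    simp_rw [hvapp]
    rw [Finset.sum_comm]
    simp_rw [← Finset.mul_sum]
    rw [Finset.sum_eq_single 0]
    · rw [UnitAddTorus.mFourier_zero]; simp [mul_comm]
    · intro m hm hm0
      rw [hz m (by simp [hm0, Finsupp.mem_support_iff.1 hm]), mul_zero]
    · intro hm; rw [Finsupp.notMem_support_iff.1 hm, zero_mul]
  have hc0 : ‖c 0‖ ≤ η := by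
    have h1 : ‖∑ b ∈ B, v (z b)‖ ≤ B.card * η := by
      refine (norm_sum_le_of_le B (f := fun b => v (z b)) (n := fun _ => η) ?_).trans ?_
      · intro b hb
        have := hclose (z b)
        rw [hu0 b hb, zero_sub, norm_neg] at this
        exact this.le
      · simp
    rw [hsum, norm_mul] at h1
    have hpos : (0 : ℝ) < B.card := by exact_mod_cast hB.card_pos
    simp only [Complex.norm_natCast] at h1
    exact le_of_mul_le_mul_left h1 hpos
  have h2 : I ≤ ‖(I : ℂ) - c 0 * V‖ + ‖c 0 * V‖ := by
    have := norm_add_le ((I : ℂ) - c 0 * V) (c 0 * V)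
    rw [sub_add_cancel, Complex.norm_real, Real.norm_of_nonneg hupos.le] at this
    exact this
  have h3 : ‖c 0 * (V : ℂ)‖ ≤ η * V := by
    rw [norm_mul, Complex.norm_real, Real.norm_of_nonneg hV0]
    gcongr
  linarith


/-- The homomorphism `ℤ^(C) → 𝕋` with prescribed values on the generators. -/
def evT {C : Type*} (x : C → AddCircle (1 : ℝ)) : (C →₀ ℤ) →+ AddCircle (1 : ℝ) :=
  Finsupp.liftAddHom fun c => (zmultiplesHom (AddCircle (1 : ℝ))) (x c)

lemma evT_apply {C : Type*} (x : C → AddCircle (1 : ℝ)) (g : C →₀ ℤ) :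
    evT x g = ∑ c ∈ g.support, g c • x c := by
  simp [evT, Finsupp.sum]

lemma evT_single {C : Type*} (x : C → AddCircle (1 : ℝ)) (c : C) (a : ℤ) :
    evT x (Finsupp.single c a) = a • x c := by
  simp [evT]

lemma evT_add {C : Type*} (x y : C → AddCircle (1 : ℝ)) (g : C →₀ ℤ) :
    evT (x + y) g = evT x g + evT y g := by
  simp [evT_apply, Finset.sum_add_distrib]

lemma evT_zero {C : Type*} (g : C →₀ ℤ) :
    evT (0 : C → AddCircle (1 : ℝ)) g = 0 := by
  simp [evT_apply]

lemma evT_sum {C β : Type*} (s : Finset β) (x : β → C → AddCircle (1 : ℝ)) (g : C →₀ ℤ) :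
    evT (∑ b ∈ s, x b) g = ∑ b ∈ s, evT (x b) g := by
  classical
  induction s using Finset.induction_on with
  | empty => simp [evT_zero]
  | insert a s ha ih => rw [Finset.sum_insert ha, Finset.sum_insert ha, evT_add, ih]

lemma evT_pi_single {C : Type*} [DecidableEq C] (c : C) (a : AddCircle (1 : ℝ)) (g : C →₀ ℤ) :
    evT (Pi.single c a) g = g c • a := by
  rw [evT_apply]
  by_cases hc : c ∈ g.support
  · rw [Finset.sum_eq_single c]
    · simp
    · intro b _ hb; simp [Pi.single_eq_of_ne hb]
    · intro h; exact absurd hc h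
  · rw [Finset.sum_eq_zero]
    · simp [Finsupp.notMem_support_iff.1 hc]
    · intro b hb
      have : b ≠ c := by rintro rfl; exact hc hb
      simp [Pi.single_eq_of_ne this]

lemma evT_continuous {C : Type*} (g : C →₀ ℤ) :
    Continuous fun x : C → AddCircle (1 : ℝ) => evT x g := by
  simp_rw [evT_apply]
  fun_prop

/-- Non-constant sequences can be moved by `1/2` by small perturbations. -/
lemma move_half {C : Type*} (p : Ultrafilter ℕ) (g : ℕ → C →₀ ℤ)
    (hg : ∀ a, ¬ ∀ᶠ n in (p : Filter ℕ), g n = a) (E : Finset C) (δ : ℝ) (hδ : 0 < δ) :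
    ∀ᶠ n in (p : Filter ℕ), ∃ t : C → AddCircle (1 : ℝ), (∀ c ∈ E, ‖t c‖ < δ) ∧
      evT t (g n) = ((1 / 2 : ℝ) : AddCircle (1 : ℝ)) := by
  classical
  by_contra hcon
  rw [← Ultrafilter.eventually_not] at hcon
  obtain ⟨N, hN⟩ := exists_nat_gt (1 / δ)
  let b : C →₀ ℤ := ∑ c ∈ E, Finsupp.single c (N : ℤ)
  have hb : ∀ c, b c = if c ∈ E then (N : ℤ) else 0 := by
    intro c
    simp [b, Finsupp.finsetSum_apply, Finsupp.single_apply]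
  have hfin : (Set.Icc (-b) b).Finite := Set.finite_Icc _ _
  have hin : ∀ᶠ n in (p : Filter ℕ), g n ∈ Set.Icc (-b) b := by
    filter_upwards [hcon] with n hn
    have key : ∀ c, |g n c| ≤ b c := by
      intro c
      by_contra hc
      push Not at hc
      have hb0 : 0 ≤ b c := by rw [hb]; split_ifs <;> simp
      have hne : g n c ≠ 0 := by
        intro h0; rw [h0] at hc; simp at hc; omega
      apply hn
      refine ⟨Pi.single c (((1 / (2 * (g n c)) : ℝ)) : AddCircle (1 : ℝ)), ?_, ?_⟩
      · intro c' hc'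
        by_cases hcc : c' = c
        · subst hcc
          rw [Pi.single_eq_same]
          rw [hb, if_pos hc'] at hc
          have h1 : (N : ℝ) < |(g n c' : ℝ)| := by exact_mod_cast hc
          have hpos : 0 < |(g n c' : ℝ)| := lt_of_le_of_lt (Nat.cast_nonneg N) h1
          have h3 : ‖(((1 / (2 * (g n c')) : ℝ)) : AddCircle (1 : ℝ))‖
              ≤ |(1 / (2 * (g n c')) : ℝ)| := by
            exact QuotientAddGroup.norm_mk_le_norm
          refine lt_of_le_of_lt h3 ?_
          rw [abs_div, abs_mul, abs_one, abs_two, div_lt_iff₀ (by positivity)]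
          have h4 : 1 < δ * |(g n c' : ℝ)| := by
            rw [div_lt_iff₀ hδ] at hN
            nlinarith
          nlinarith
        · rw [Pi.single_eq_of_ne hcc]; simpa using hδ
      · rw [evT_pi_single, aux_zsmul_half _ hne]
    refine ⟨fun c => ?_, fun c => ?_⟩
    · have := (abs_le.1 (key c)).1
      simpa using this
    · exact (abs_le.1 (key c)).2
  obtain ⟨a, -, ha⟩ := Ultrafilter.eq_pure_of_finite_mem (f := p.map g) hfin hin
  apply hg a
  have : ({a} : Set (C →₀ ℤ)) ∈ p.map g := by rw [ha]; exact Set.mem_singleton a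
  exact this

lemma step_lemma {C ι : Type*} [Fintype ι] (p : Ultrafilter ℕ) (f : ι → ℕ → C →₀ ℤ)
    (hf : ∀ m : ι → ℤ, m ≠ 0 → ∀ a, ¬ ∀ᶠ n in (p : Filter ℕ), ∑ i, m i • f i n = a)
    (t : ι → C →₀ ℤ) (ε : ℝ) (hε : 0 < ε) (U : Set (C → AddCircle (1 : ℝ))) (hU : IsOpen U)
    (hne : U.Nonempty) :
    ∀ᶠ n in (p : Filter ℕ), ∃ x ∈ U, ∀ i, dist (evT x (f i n)) (evT x (t i)) < ε := by
  classical
  obtain ⟨x0, hx0⟩ := hne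
  let W : Set (C → AddCircle (1 : ℝ)) :=
    U ∩ ⋂ i, {x | dist (evT x (t i)) (evT x0 (t i)) < ε / 2}
  have hW : IsOpen W := by
    refine hU.inter (isOpen_iInter_of_finite fun i => ?_)
    exact isOpen_lt ((evT_continuous (t i)).dist continuous_const) continuous_const
  have hx0W : x0 ∈ W := ⟨hx0, by simp [hε]⟩
  obtain ⟨E, u, hu, hsub⟩ := isOpen_pi_iff.1 hW x0 hx0W
  obtain ⟨δ, hδ, hball⟩ : ∃ δ : ℝ, 0 < δ ∧ ∀ c ∈ E, Metric.ball (x0 c) δ ⊆ u c := by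
    have : ∀ c ∈ E, ∀ᶠ δ in nhdsWithin (0 : ℝ) (Set.Ioi 0), Metric.ball (x0 c) δ ⊆ u c := by
      intro c hc
      obtain ⟨r, hr, hrs⟩ := Metric.isOpen_iff.1 (hu c hc).1 _ (hu c hc).2
      filter_upwards [Ioo_mem_nhdsGT hr] with δ hδ
      exact (Metric.ball_subset_ball hδ.2.le).trans hrs
    have h2 := (Filter.eventually_all_finset E).2 this
    obtain ⟨δ, h3, h4⟩ := (h2.and self_mem_nhdsWithin).exists
    exact ⟨δ, h4, h3⟩
  obtain ⟨M, hM0, hM⟩ := torus_hit (ι := ι) (β := Finset (ι → ℤ)) (ε / 2) (half_pos hε)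
  let δ' := δ / (M.card + 1)
  have hδ' : 0 < δ' := by positivity
  have hmove : ∀ m ∈ M, ∀ᶠ n in (p : Filter ℕ), ∃ t : C → AddCircle (1 : ℝ),
      (∀ c ∈ E, ‖t c‖ < δ') ∧
      evT t (∑ i, m i • f i n) = ((1 / 2 : ℝ) : AddCircle (1 : ℝ)) := by
    intro m hm
    refine move_half p (fun n => ∑ i, m i • f i n) (hf m ?_) E δ' hδ'
    rintro rfl; exact hM0 hm
  filter_upwards [(Filter.eventually_all_finset M).2 hmove] with n hn
  choose! s hsE hs using hn
  let xb : Finset (ι → ℤ) → C → AddCircle (1 : ℝ) := fun b => x0 + ∑ m ∈ b, s m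
  obtain ⟨b, hb, hbi⟩ := hM M.powerset ⟨∅, by simp⟩
    (fun b i => evT (xb b) (f i n) - evT x0 (t i)) (by
      intro m hm
      simp_rw [aux_mFourier_toCircle]
      have hexp : ∀ b, ∑ i, m i • (evT (xb b) (f i n) - evT x0 (t i))
          = ∑ i, m i • (evT x0 (f i n) - evT x0 (t i))
            + ∑ m' ∈ b, evT (s m') (∑ i, m i • f i n) := by
        intro b
        simp only [xb, evT_add, evT_sum, map_sum, map_zsmul]
        rw [Finset.sum_comm, ← Finset.sum_add_distrib]
        refine Finset.sum_congr rfl fun i _ => ?_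
        rw [← Finset.smul_sum, ← smul_add]
        congr 1
        abel
      have htc : ∀ b : Finset (ι → ℤ),
          ((AddCircle.toCircle (∑ m' ∈ b, evT (s m') (∑ i, m i • f i n))) : ℂ)
          = ∏ m' ∈ b, ((AddCircle.toCircle (evT (s m') (∑ i, m i • f i n))) : ℂ) := by
        intro b
        induction b using Finset.induction_on with
        | empty => simp
        | insert a s ha ih =>
          rw [Finset.sum_insert ha, Finset.prod_insert ha, AddCircle.toCircle_add,
            Circle.coe_mul, ih]
      simp_rw [hexp, AddCircle.toCircle_add, Circle.coe_mul, htc]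
      rw [← Finset.mul_sum, ← Finset.prod_one_add, Finset.prod_eq_zero hm, mul_zero]
      rw [hs m hm, aux_half_s15]
      ring)
  have hbM : b ⊆ M := Finset.mem_powerset.1 hb
  have hxW : xb b ∈ W := by
    apply hsub
    intro c hc
    apply hball c hc
    rw [Metric.mem_ball, dist_eq_norm]
    simp only [xb, Pi.add_apply, add_sub_cancel_left, Finset.sum_apply]
    calc ‖∑ m ∈ b, s m c‖ ≤ ∑ m ∈ b, ‖s m c‖ := norm_sum_le _ _
      _ ≤ ∑ m ∈ b, δ' := Finset.sum_le_sum fun m hm => (hsE m (hbM hm) c hc).le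
      _ = b.card * δ' := by simp
      _ ≤ M.card * δ' := by gcongr
      _ < (M.card + 1) * δ' := by nlinarith
      _ = δ := by simp only [δ']; field_simp
  refine ⟨xb b, hxW.1, fun i => ?_⟩
  have h1 := hbi i
  have h2 : dist (evT (xb b) (t i)) (evT x0 (t i)) < ε / 2 := by
    have := hxW.2
    simp only [Set.mem_iInter] at this
    exact this i
  rw [← dist_eq_norm] at h1
  have h3 := dist_triangle_right (evT (xb b) (f i n)) (evT (xb b) (t i)) (evT x0 (t i))
  linarith


lemma free_le_atTop {p : Ultrafilter ℕ} (hp : IsFreeUltrafilter p) : (p : Filter ℕ) ≤ atTop := by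
  rw [← Nat.cofinite_eq_atTop, Filter.le_cofinite_iff_compl_singleton_mem]
  intro n
  rw [Ultrafilter.mem_coe, Ultrafilter.compl_mem_iff_notMem]
  intro h
  obtain ⟨a, ha, hpa⟩ := Ultrafilter.eq_pure_of_finite_mem (Set.finite_singleton n) h
  exact hp a hpa

lemma finite_notMem {p : Ultrafilter ℕ} (hp : (p : Filter ℕ) ≤ atTop) {s : Set ℕ}
    (hs : s.Finite) : s ∉ p := by
  intro h
  rw [← Nat.cofinite_eq_atTop] at hp
  have h2 : sᶜ ∈ p := hp (by simpa using hs)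
  exact (Ultrafilter.compl_mem_iff_notMem.1 h2) h

lemma sel_const_or_inj {p : Ultrafilter ℕ} (hp : IsSelective p) (f : ℕ → ℕ) :
    (∃ c, f ⁻¹' {c} ∈ p) ∨ ∃ B ∈ p, Set.InjOn f B := by
  by_cases hfin : (Set.range f).Finite
  · left
    have : Set.range f ∈ p.map f := by
      show f ⁻¹' (Set.range f) ∈ p
      rw [Set.preimage_range]; exact Filter.univ_mem
    obtain ⟨c, _, hc⟩ := Ultrafilter.eq_pure_of_finite_mem hfin this
    refine ⟨c, ?_⟩
    have h2 : ({c} : Set ℕ) ∈ p.map f := by rw [hc]; exact Set.mem_singleton c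
    exact h2
  · have : Infinite (Set.range f) := Set.infinite_coe_iff.2 hfin
    let e := Nat.Subtype.orderIsoOfNat (Set.range f)
    have h1 : ∀ k, (f ⁻¹' {(e k : ℕ)}).Nonempty := by
      intro k
      obtain ⟨n, hn⟩ := (e k).2
      exact ⟨n, hn⟩
    have h2 : Pairwise fun k l => Disjoint (f ⁻¹' {(e k : ℕ)}) (f ⁻¹' {(e l : ℕ)}) := by
      intro k l hkl
      rw [Set.disjoint_left]
      intro a ha hb
      simp only [Set.mem_preimage, Set.mem_singleton_iff] at ha hb
      apply hkl
      apply e.injective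
      exact Subtype.ext (ha.symm.trans hb)
    have h3 : (⋃ k, f ⁻¹' {(e k : ℕ)}) = Set.univ := by
      ext a
      simp only [Set.mem_iUnion, Set.mem_preimage, Set.mem_singleton_iff, Set.mem_univ, iff_true]
      obtain ⟨k, hk⟩ := e.surjective ⟨f a, a, rfl⟩
      exact ⟨k, by simp [hk]⟩
    rcases hp.2 _ h1 h2 h3 with ⟨k, hk⟩ | ⟨B, hB, hBk⟩
    · exact Or.inl ⟨_, hk⟩
    · right
      refine ⟨B, hB, ?_⟩
      intro a ha b hb hab
      obtain ⟨k, hk⟩ := e.surjective ⟨f a, a, rfl⟩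
      refine (hBk k).unique ⟨ha, ?_⟩ ⟨hb, ?_⟩
      · simp [hk]
      · simp [hk, hab]

lemma sel_ppoint_s15 {p : Ultrafilter ℕ} (hp : IsSelective p) (X : ℕ → Set ℕ) (hX : ∀ i, X i ∈ p) :
    ∃ Y ∈ p, ∀ i, (Y \ X i).Finite := by
  classical
  by_cases hI : (⋂ i, X i) ∈ p
  · refine ⟨_, hI, fun i => ?_⟩
    rw [Set.sdiff_eq_empty.2 (Set.iInter_subset X i)]
    exact Set.finite_empty
  · have hI' : (⋂ i, X i)ᶜ ∈ p := Ultrafilter.compl_mem_iff_notMem.2 hI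
    have hex : ∀ n ∈ (⋂ i, X i)ᶜ, ∃ i, n ∉ X i := by
      intro n hn; simpa using hn
    let f : ℕ → ℕ := fun n => sInf {i | n ∉ X i}
    have hf : ∀ n ∈ (⋂ i, X i)ᶜ, n ∉ X (f n) := fun n hn => Nat.sInf_mem (hex n hn)
    rcases sel_const_or_inj hp f with ⟨c, hc⟩ | ⟨B, hB, hinj⟩
    · exfalso
      obtain ⟨n, ⟨hn1, hn2⟩, hn3⟩ :=
        p.nonempty_of_mem (Filter.inter_mem (Filter.inter_mem hc hI') (hX c))
      have := hf n hn2
      simp only [Set.mem_preimage, Set.mem_singleton_iff] at hn1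
      rw [hn1] at this
      exact this hn3
    · refine ⟨B ∩ (⋂ i, X i)ᶜ, Filter.inter_mem hB hI', fun i => ?_⟩
      apply Set.Finite.of_finite_image (f := f)
      · apply (Set.finite_Iic i).subset
        rintro _ ⟨n, ⟨_, hn⟩, rfl⟩
        exact Nat.sInf_le hn
      · exact hinj.mono (fun n hn => hn.1.1)

/-- The combinatorial selection lemma for pairwise incomparable selective ultrafilters. -/
lemma selection (q : ℕ → Ultrafilter ℕ) (hq : ∀ k, IsSelective (q k))
    (hinc : ∀ k l, k ≠ l → RKIncomp (q k) (q l)) (A : ℕ → ℕ → Set ℕ) (hA : ∀ k s, A k s ∈ q k) :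
    ∃ (D : ℕ → Set ℕ) (σ : ℕ → ℕ), (∀ k, D k ∈ q k) ∧ Tendsto σ atTop atTop ∧
      (∀ k, ∀ n ∈ D k, n ∈ A k (σ n) ∧ k ≤ σ n ∧ σ n ≤ n) ∧
      (∀ k l n, n ∈ D k → n ∈ D l → k = l) ∧
      (∀ k l n n', n ∈ D k → n' ∈ D l → n' < n → n' < σ n) := by
  classical
  have hfree : ∀ k, (q k : Filter ℕ) ≤ atTop := fun k => free_le_atTop (hq k).1
  have hpp : ∀ k, ∃ Y ∈ q k, ∃ g : ℕ → ℕ, ∀ s, ∀ n ∈ Y, g s ≤ n → n ∈ A k s := by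
    intro k
    obtain ⟨Y, hY, hfin⟩ := sel_ppoint_s15 (hq k) (A k) (hA k)
    have : ∀ s, ∃ b, ∀ n ∈ Y, b ≤ n → n ∈ A k s := by
      intro s
      obtain ⟨b, hb⟩ := (hfin s).bddAbove
      refine ⟨b + 1, fun n hn hbn => ?_⟩
      by_contra hcon
      have := hb ⟨hn, hcon⟩
      omega
    choose g hg using this
    exact ⟨Y, hY, g, hg⟩
  choose Y hY g hg using hpp
  let G : ℕ → ℕ := fun s => s + 1 + ∑ k ∈ Finset.range (s + 1), g k s
  have hGg : ∀ k s, k ≤ s → g k s ≤ G s := by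
    intro k s hks
    have : g k s ≤ ∑ k ∈ Finset.range (s + 1), g k s :=
      Finset.single_le_sum (f := fun k => g k s) (fun _ _ => Nat.zero_le _)
        (Finset.mem_range.2 (by omega))
    simp only [G]; omega
  obtain ⟨m, hm0, hms⟩ : ∃ m : ℕ → ℕ, m 0 = 0 ∧ ∀ i, m (i + 1) = G (m i) :=
    ⟨fun i => Nat.rec 0 (fun _ r => G r) i, rfl, fun _ => rfl⟩
  have hmono : StrictMono m := strictMono_nat_of_lt_succ fun i => by
    rw [hms]; simp only [G]; omega
  let blk : ℕ → ℕ := fun n => Nat.findGreatest (fun i => m i ≤ n) n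
  have hblk1 : ∀ n, m (blk n) ≤ n := fun n =>
    Nat.findGreatest_spec (m := 0) (P := fun i => m i ≤ n) (Nat.zero_le n) (by simp [hm0])
  have hblk2 : ∀ n, n < m (blk n + 1) := by
    intro n
    by_contra hcon
    push Not at hcon
    have h1 : blk n + 1 ≤ n := (hmono.le_apply).trans hcon
    have := Nat.le_findGreatest (P := fun i => m i ≤ n) h1 hcon
    simp only [blk] at this
    omega
  have hblkmono : ∀ a b, a ≤ b → blk a ≤ blk b := by
    intro a b hab
    by_contra hcon
    push Not at hcon
    have h1 := hblk1 a
    have h2 := hblk2 b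
    have h3 : m (blk b + 1) ≤ m (blk a) := hmono.monotone hcon
    omega
  have hblkge : ∀ i n, m i ≤ n → i ≤ blk n := by
    intro i n h
    by_contra hcon
    push Not at hcon
    have h3 : m (blk n + 1) ≤ m i := hmono.monotone hcon
    have := hblk2 n
    omega
  have hblktop : Tendsto blk atTop atTop :=
    tendsto_atTop_atTop.2 fun b => ⟨m b, fun a ha => hblkge b a ha⟩
  let σ : ℕ → ℕ := fun n => m (blk n - 1)
  have hσtop : Tendsto σ atTop atTop :=
    hmono.tendsto_atTop.comp ((tendsto_sub_atTop_nat 1).comp hblktop)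
  -- each q k has a set on which blk is injective
  have hinj : ∀ k, ∃ B ∈ q k, Set.InjOn blk B := by
    intro k
    rcases sel_const_or_inj (hq k) blk with ⟨c, hc⟩ | h
    · exfalso
      refine finite_notMem (hfree k) ((Set.finite_Iio (m (c + 1))).subset ?_) hc
      intro n hn
      simp only [Set.mem_preimage, Set.mem_singleton_iff] at hn
      have := hblk2 n
      rw [hn] at this
      exact this
    · exact h
  choose B hB hBinj using hinj
  let S : ℕ → ℕ → ℕ := fun j => if j = 0 then id else if j = 1 then Nat.succ else Nat.pred
  have hStop : ∀ j, Tendsto (S j) atTop atTop := by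
    intro j
    simp only [S]
    split_ifs
    · exact tendsto_id
    · exact tendsto_add_atTop_nat 1
    · exact tendsto_sub_atTop_nat 1
  have hne : ∀ k l j, k ≠ l → (q k).map (S j ∘ blk) ≠ (q l).map blk := by
    intro k l j hkl heq
    apply (hinc k l hkl).1
    refine ⟨Function.invFunOn blk (B l) ∘ (S j ∘ blk), ?_⟩
    rw [← Ultrafilter.map_map, heq, Ultrafilter.map_map]
    have h1 : (q l : Filter ℕ).map (Function.invFunOn blk (B l) ∘ blk) = (q l : Filter ℕ) := by
      have : (Function.invFunOn blk (B l) ∘ blk) =ᶠ[(q l : Filter ℕ)] id := by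
        filter_upwards [hB l] with n hn
        exact (hBinj l).leftInvOn_invFunOn hn
      rw [Filter.map_congr this, Filter.map_id]
    exact Ultrafilter.coe_injective h1
  have hsep : ∀ l k j, ∃ X : Set ℕ, k ≠ l → X ∈ (q l).map blk ∧ X ∉ (q k).map (S j ∘ blk) := by
    intro l k j
    by_cases hkl : k = l
    · exact ⟨∅, fun h => absurd hkl h⟩
    · by_contra hcon
      push Not at hcon
      apply hne k l j hkl
      apply Ultrafilter.coe_injective
      apply Ultrafilter.unique
      · intro X hX
        exact (hcon X).2 hX
      · infer_instance
  choose X0 hX0 using hsep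
  have hXl : ∀ l, ∃ X : Set ℕ, X ∈ (q l).map blk ∧ ∀ k j, k ≠ l → X ∉ (q k).map (S j ∘ blk) := by
    intro l
    obtain ⟨Z, hZ, hZfin⟩ := sel_ppoint_s15 (hq l)
      (fun i => if (Nat.unpair i).1 = l then Set.univ
        else blk ⁻¹' (X0 l (Nat.unpair i).1 (Nat.unpair i).2)) (by
        intro i
        split_ifs with h
        · exact Filter.univ_mem
        · exact (hX0 l _ _ h).1)
    refine ⟨blk '' Z, ?_, ?_⟩
    · exact Filter.image_mem_map hZ
    · intro k j hkl hmem
      have hfin := hZfin (Nat.pair k j)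
      simp only [Nat.unpair_pair, if_neg hkl] at hfin
      have h1 : (blk '' (Z \ blk ⁻¹' (X0 l k j))).Finite := hfin.image _
      have h2 : X0 l k j ∪ (blk '' (Z \ blk ⁻¹' (X0 l k j))) ∈ (q k).map (S j ∘ blk) := by
        refine Filter.mem_of_superset hmem ?_
        rintro _ ⟨z, hz, rfl⟩
        by_cases hzx : blk z ∈ X0 l k j
        · exact Or.inl hzx
        · exact Or.inr ⟨z, ⟨hz, hzx⟩, rfl⟩
      rcases Ultrafilter.union_mem_iff.1 h2 with h3 | h3
      · exact (hX0 l k j hkl).2 h3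
      · refine finite_notMem ?_ h1 h3
        exact Filter.Tendsto.mono_left ((hStop j).comp hblktop) (hfree k)
  choose X hX hXn using hXl
  -- parity
  have hpar : ∀ k, ∃ e : ℕ, {n | blk n % 2 = e} ∈ q k := by
    intro k
    by_cases h : {n | blk n % 2 = 0} ∈ q k
    · exact ⟨0, h⟩
    · refine ⟨1, ?_⟩
      have := Ultrafilter.compl_mem_iff_notMem.2 h
      refine Filter.mem_of_superset this ?_
      intro n hn
      simp only [Set.mem_compl_iff, Set.mem_ofPred_eq] at hn ⊢
      omega
  choose e he using hpar
  let D : ℕ → Set ℕ := fun k =>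
    {n | n ∈ Y k ∧ n ∈ B k ∧ blk n % 2 = e k ∧ blk n ∈ X k ∧
      (∀ l < k, ∀ j < 3, S j (blk n) ∉ X l) ∧ 1 ≤ blk n ∧ k ≤ σ n}
  have hD : ∀ k, D k ∈ q k := by
    intro k
    have h1 : ∀ᶠ n in (q k : Filter ℕ), ∀ l < k, ∀ j < 3, S j (blk n) ∉ X l := by
      have : ∀ l ∈ Finset.range k, ∀ᶠ n in (q k : Filter ℕ), ∀ j ∈ Finset.range 3,
          S j (blk n) ∉ X l := by
        intro l hl
        rw [Filter.eventually_all_finset]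
        intro j _
        have := Ultrafilter.compl_mem_iff_notMem.2 (hXn l k j (by
          have := Finset.mem_range.1 hl; omega))
        exact this
      have h2 := (Filter.eventually_all_finset _).2 this
      filter_upwards [h2] with n hn l hl j hj
      exact hn l (Finset.mem_range.2 hl) j (Finset.mem_range.2 hj)
    have h2 : ∀ᶠ n in (q k : Filter ℕ), 1 ≤ blk n :=
      (hfree k) (hblktop.eventually_ge_atTop 1)
    have h3 : ∀ᶠ n in (q k : Filter ℕ), k ≤ σ n := (hfree k) (hσtop.eventually_ge_atTop k)
    have h4 : ∀ᶠ n in (q k : Filter ℕ), blk n ∈ X k := hX k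
    filter_upwards [hY k, hB k, he k, h4, h1, h2, h3] with n a b c d e f g
    exact ⟨a, b, c, d, e, f, g⟩
  -- no two points of different D's are in the same or adjacent blocks
  have hfar : ∀ k l n n', l < k → n ∈ D k → n' ∈ D l →
      blk n' ≠ blk n ∧ blk n' ≠ blk n + 1 ∧ blk n' + 1 ≠ blk n := by
    intro k l n n' hlk hn hn'
    have hx := hn'.2.2.2.1
    have hs := hn.2.2.2.2.1 l hlk
    refine ⟨?_, ?_, ?_⟩
    · intro h
      have := hs 0 (by norm_num)
      simp only [S, if_true, id] at this
      rw [h] at hx; exact this hx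
    · intro h
      have := hs 1 (by norm_num)
      simp only [S, if_true, one_ne_zero, if_false] at this
      rw [h] at hx; exact this hx
    · intro h
      have := hs 2 (by norm_num)
      have h22 : S 2 (blk n) = blk n' := by
        simp only [S]; norm_num; omega
      rw [h22] at this
      exact this hx
  have hsame : ∀ k n n', n ∈ D k → n' ∈ D k → n ≠ n' →
      blk n' ≠ blk n ∧ blk n' ≠ blk n + 1 ∧ blk n' + 1 ≠ blk n := by
    intro k n n' hn hn' hnn
    have h1 := hn.2.2.1
    have h2 := hn'.2.2.1
    refine ⟨?_, by omega, by omega⟩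
    intro h
    exact hnn (hBinj k hn.2.1 hn'.2.1 h.symm)
  refine ⟨D, σ, hD, hσtop, ?_, ?_, ?_⟩
  · intro k n hn
    have hb : 1 ≤ blk n := hn.2.2.2.2.2.1
    have hk : k ≤ σ n := hn.2.2.2.2.2.2
    refine ⟨?_, hk, ?_⟩
    · apply hg k _ n hn.1
      refine (hGg k _ hk).trans ?_
      have : G (σ n) = m (blk n) := by
        simp only [σ]
        rw [← hms, Nat.sub_add_cancel hb]
      rw [this]
      exact hblk1 n
    · exact (hmono.monotone (Nat.sub_le _ _)).trans (hblk1 n)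
  · intro k l n hk hl
    rcases lt_trichotomy k l with h | h | h
    · exact absurd rfl (hfar l k n n h hl hk).1
    · exact h
    · exact absurd rfl (hfar k l n n h hk hl).1
  · intro k l n n' hn hn' hlt
    have h : blk n' ≠ blk n ∧ blk n' ≠ blk n + 1 ∧ blk n' + 1 ≠ blk n := by
      rcases lt_trichotomy k l with h | h | h
      · have := hfar l k n' n h hn' hn
        omega
      · subst h; exact hsame k n n' hn hn' hlt.ne'
      · exact hfar k l n n' h hn hn'
    have h2 := hblkmono n' n hlt.le
    have h3 : blk n' + 1 ≤ blk n - 1 := by omega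
    exact (hblk2 n').trans_le (hmono.monotone h3)

lemma shrink_s15 {C : Type*} (U : Set (C → AddCircle (1 : ℝ))) (hU : IsOpen U) (hne : U.Nonempty) :
    ∃ V : Set (C → AddCircle (1 : ℝ)), IsOpen V ∧ V.Nonempty ∧ closure V ⊆ U := by
  obtain ⟨x, hx⟩ := hne
  obtain ⟨K, hK, hKc, hKU⟩ := exists_mem_nhds_isClosed_subset (hU.mem_nhds hx)
  refine ⟨interior K, isOpen_interior, ⟨x, mem_interior_iff_mem_nhds.2 hK⟩, ?_⟩
  exact (closure_minimal interior_subset hKc).trans hKU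

lemma main_countable {C ι : Type*} [Countable ι] (q : ℕ → Ultrafilter ℕ)
    (hq : ∀ k, IsSelective (q k)) (hinc : ∀ k l, k ≠ l → RKIncomp (q k) (q l))
    (own : ι → ℕ) (f : ι → ℕ → C →₀ ℤ) (t : ι → C →₀ ℤ)
    (hf : ∀ k (m : ι →₀ ℤ), (∀ i ∈ m.support, own i = k) → m ≠ 0 →
      ∀ a, ¬ ∀ᶠ n in (q k : Filter ℕ), (m.sum fun i c => c • f i n) = a)
    (d : C →₀ ℤ) (hd : d ≠ 0) :
    ∃ x : C → AddCircle (1 : ℝ), evT x d ≠ 0 ∧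
      ∀ i, IsPLim (q (own i)) (fun n => evT x (f i n)) (evT x (t i)) := by
  classical
  obtain ⟨enc, henc⟩ := Countable.exists_injective_nat ι
  let St := {U : Set (C → AddCircle (1 : ℝ)) // IsOpen U ∧ U.Nonempty}
  let Good : St → ℕ → ℕ → ℕ → St → Prop := fun U k n s V => V.1 ⊆ U.1 ∧
    ∀ x ∈ closure V.1, ∀ i, enc i < s → own i = k →
      dist (evT x (f i n)) (evT x (t i)) < 1 / ((s : ℝ) + 1)
  have hgood : ∀ (U : St) k s, ∀ᶠ n in (q k : Filter ℕ), ∃ V, Good U k n s V := by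
    intro U k s
    have hfinset : {i | enc i < s ∧ own i = k}.Finite := by
      apply Set.Finite.of_finite_image (f := enc) _ henc.injOn
      apply (Set.finite_Iio s).subset
      rintro _ ⟨i, hi, rfl⟩
      exact hi.1
    have : Fintype {i // enc i < s ∧ own i = k} := hfinset.fintype
    have := step_lemma (q k) (fun i : {i // enc i < s ∧ own i = k} => f i.1) (by
      intro m hm a hev
      let m' : ι →₀ ℤ := Finsupp.embDomain (Function.Embedding.subtype _)
        (Finsupp.equivFunOnFinite.symm m)
      refine hf k m' ?_ ?_ a ?_
      · intro i hi
        simp only [m', Finsupp.support_embDomain, Finset.mem_map] at hi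
        obtain ⟨j, _, rfl⟩ := hi
        exact j.2.2
      · intro h0
        apply hm
        have : Finsupp.equivFunOnFinite.symm m = 0 := by
          rwa [Finsupp.embDomain_eq_zero] at h0
        exact funext fun i => DFunLike.congr_fun this i
      · filter_upwards [hev] with n hn
        rw [← hn]
        simp only [m', Finsupp.sum_embDomain]
        rw [Finsupp.sum_fintype]
        · rfl
        · intro i; simp) (fun i => t i.1) (1 / ((s : ℝ) + 1)) (by positivity) U.1 U.2.1 U.2.2
    filter_upwards [this] with n hn
    obtain ⟨x, hxU, hx⟩ := hn
    obtain ⟨V, hV, hVne, hVs⟩ := shrink_s15 (U.1 ∩ ⋂ i : {i // enc i < s ∧ own i = k},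
      {x | dist (evT x (f i.1 n)) (evT x (t i.1)) < 1 / ((s : ℝ) + 1)})
      (U.2.1.inter (isOpen_iInter_of_finite fun i =>
        isOpen_lt ((evT_continuous _).dist (evT_continuous _)) continuous_const))
      ⟨x, hxU, Set.mem_iInter.2 hx⟩
    refine ⟨⟨V, hV, hVne⟩, fun y hy => (hVs (subset_closure hy)).1, ?_⟩
    intro y hy i hi hik
    exact Set.mem_iInter.1 (hVs hy).2 ⟨i, hi, hik⟩
  let mv : St → ℕ → ℕ → ℕ → St := fun U k n s =>
    if h : ∃ V, Good U k n s V then h.choose else U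
  have hmv : ∀ U k n s, (∃ V, Good U k n s V) → Good U k n s (mv U k n s) := by
    intro U k n s h
    simp only [mv, dif_pos h]
    exact h.choose_spec
  have hmvsub : ∀ U k n s, (mv U k n s).1 ⊆ U.1 := by
    intro U k n s
    by_cases h : ∃ V, Good U k n s V
    · exact (hmv U k n s h).1
    · simp only [mv, dif_neg h]; exact subset_rfl
  -- initial state
  obtain ⟨U0, hU0, hU0ne, hU0d⟩ := shrink_s15 {x : C → AddCircle (1 : ℝ) | evT x d ≠ 0}
    (isOpen_ne_fun (evT_continuous d) continuous_const) (by
      obtain ⟨c, hc⟩ : ∃ c, d c ≠ 0 := by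
        by_contra hcon; push Not at hcon; exact hd (Finsupp.ext hcon)
      refine ⟨Pi.single c (((1 / (2 * (d c)) : ℝ)) : AddCircle (1 : ℝ)), ?_⟩
      show evT _ d ≠ 0
      rw [evT_pi_single, aux_zsmul_half _ hc]
      intro h0
      have := aux_half_s15
      rw [h0] at this
      norm_num at this)
  let R : ℕ → Set St := fun n => Nat.rec {⟨U0, hU0, hU0ne⟩}
    (fun n r => r ∪ (fun a : St × ℕ × ℕ => mv a.1 a.2.1 n a.2.2) ''
      (r ×ˢ (Set.Iic n ×ˢ Set.Iic n))) n
  have hRs : ∀ n, R (n + 1) = R n ∪ (fun a : St × ℕ × ℕ => mv a.1 a.2.1 n a.2.2) ''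
      (R n ×ˢ (Set.Iic n ×ˢ Set.Iic n)) := fun n => rfl
  have hRfin : ∀ n, (R n).Finite := by
    intro n
    induction n with
    | zero => exact Set.finite_singleton _
    | succ n ih =>
      rw [hRs]
      exact ih.union ((ih.prod ((Set.finite_Iic n).prod (Set.finite_Iic n))).image _)
  let A : ℕ → ℕ → Set ℕ := fun k s => {n | ∀ U ∈ R s, ∃ V, Good U k n s V}
  have hA : ∀ k s, A k s ∈ q k := by
    intro k s
    have := (Filter.eventually_all_finite (hRfin s)).2 (fun U _ => hgood U k s)
    exact this
  obtain ⟨D, σ, hD, hσ, hDA, hDuniq, hDsep⟩ := selection q hq hinc A hA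
  let st : ℕ → St := fun n => Nat.rec ⟨U0, hU0, hU0ne⟩
    (fun n U => if h : ∃ k, n ∈ D k then mv U h.choose n (σ n) else U) n
  have hsts : ∀ n, st (n + 1) = if h : ∃ k, n ∈ D k then mv (st n) h.choose n (σ n) else st n :=
    fun n => rfl
  have hstD : ∀ k n, n ∈ D k → st (n + 1) = mv (st n) k n (σ n) := by
    intro k n hn
    have hex : ∃ k, n ∈ D k := ⟨k, hn⟩
    rw [hsts, dif_pos hex, hDuniq _ _ n hex.choose_spec hn]
  have hstN : ∀ n, (¬ ∃ k, n ∈ D k) → st (n + 1) = st n := by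
    intro n hn
    rw [hsts, dif_neg hn]
  have hstR : ∀ n, st n ∈ R n := by
    intro n
    induction n with
    | zero => exact Set.mem_singleton _
    | succ n ih =>
      rw [hRs]
      by_cases hn : ∃ k, n ∈ D k
      · obtain ⟨k, hk⟩ := hn
        rw [hstD k n hk]
        right
        obtain ⟨-, h1, h2⟩ := hDA k n hk
        exact ⟨(st n, k, σ n), ⟨ih, h1.trans h2, h2⟩, rfl⟩
      · rw [hstN n hn]; exact Or.inl ih
  have hsub : ∀ n, (st (n + 1)).1 ⊆ (st n).1 := by
    intro n
    by_cases hn : ∃ k, n ∈ D k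
    · obtain ⟨k, hk⟩ := hn
      rw [hstD k n hk]; exact hmvsub _ _ _ _
    · rw [hstN n hn]
  have hconst : ∀ k n, n ∈ D k → ∀ j, σ n ≤ j → j ≤ n → st j = st (σ n) := by
    intro k n hn j hj
    induction j, hj using Nat.le_induction with
    | base => intro _; rfl
    | succ j hj ih =>
      intro hjn
      rw [← ih (by omega)]
      apply hstN
      rintro ⟨l, hl⟩
      have := hDsep k l n j hn hl (by omega)
      omega
  have hmain : ∀ k n, n ∈ D k → Good (st n) k n (σ n) (st (n + 1)) := by
    intro k n hn
    rw [hstD k n hn]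
    apply hmv
    obtain ⟨h0, h1, h2⟩ := hDA k n hn
    rw [hconst k n hn n h2 le_rfl]
    exact h0 _ (hstR _)
  obtain ⟨x, hx⟩ := IsCompact.nonempty_iInter_of_sequence_nonempty_isCompact_isClosed
    (fun n => closure (st n).1) (fun n => closure_mono (hsub n)) (fun n => (st n).2.2.closure)
    isClosed_closure.isCompact (fun n => isClosed_closure)
  rw [Set.mem_iInter] at hx
  refine ⟨x, hU0d (hx 0), fun i => ?_⟩
  intro W hW
  obtain ⟨ε, hε, hεW⟩ := Metric.mem_nhds_iff.1 hW
  have hfree : (q (own i) : Filter ℕ) ≤ atTop := free_le_atTop (hq _).1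
  have h1 : ∀ᶠ n in (q (own i) : Filter ℕ), enc i < σ n :=
    hfree (hσ.eventually_gt_atTop (enc i))
  have h2 : ∀ᶠ n in (q (own i) : Filter ℕ), 1 / ((σ n : ℝ) + 1) < ε :=
    hfree ((tendsto_one_div_add_atTop_nhds_zero_nat.comp hσ).eventually (gt_mem_nhds hε))
  have h3 : ∀ᶠ n in (q (own i) : Filter ℕ), n ∈ D (own i) := hD (own i)
  have h4 : ∀ᶠ n in (q (own i) : Filter ℕ), evT x (f i n) ∈ W := by
    filter_upwards [h1, h2, h3] with n h1 h2 h3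
    apply hεW
    exact ((hmain _ n h3).2 x (hx (n + 1)) i h1 rfl).trans h2
  exact h4
lemma countable_closed {C : Type*} (h : C → ℕ → C →₀ ℤ) (S0 : Set C) (hS0 : S0.Countable) :
    ∃ S : Set C, S.Countable ∧ S0 ⊆ S ∧ ∀ ξ ∈ S, ∀ k, ∀ α ∈ (h ξ k).support, α ∈ S := by
  classical
  let R : ℕ → Set C := fun n => Nat.rec S0
    (fun _ r => ⋃ ξ ∈ r, ⋃ k : ℕ, ((h ξ k).support : Set C)) n
  have hR : ∀ n, (R n).Countable := by
    intro n
    induction n with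
    | zero => exact hS0
    | succ n ih =>
      exact ih.biUnion fun ξ _ => Set.countable_iUnion fun k => Finset.countable_toSet _
  refine ⟨⋃ n, R n, Set.countable_iUnion hR, Set.subset_iUnion R 0, ?_⟩
  intro ξ hξ k α hα
  obtain ⟨n, hn⟩ := Set.mem_iUnion.1 hξ
  refine Set.mem_iUnion.2 ⟨n + 1, ?_⟩
  show α ∈ ⋃ ξ ∈ R n, ⋃ k : ℕ, ((h ξ k).support : Set C)
  exact Set.mem_biUnion hn (Set.mem_iUnion.2 ⟨k, hα⟩)

lemma extend_lim {C : Type*} [LinearOrder C] [WellFoundedLT C] (h : C → ℕ → C →₀ ℤ) (S : Set C)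
    (x : C → AddCircle (1 : ℝ)) (u : C → Ultrafilter ℕ) :
    ∃ y : C → AddCircle (1 : ℝ), (∀ ξ ∈ S, y ξ = x ξ) ∧
      ∀ ξ, ξ ∉ S → (∀ k, ∀ α ∈ (h ξ k).support, α < ξ) →
        IsPLim (u ξ) (fun k => evT y (h ξ k)) (y ξ) := by
  classical
  let F : (ξ : C) → ((α : C) → α < ξ → AddCircle (1 : ℝ)) → AddCircle (1 : ℝ) := fun ξ rec =>
    if ξ ∈ S then x ξ else
      ((u ξ).map (fun k => ∑ α ∈ (h ξ k).support,
        (h ξ k) α • (if hα : α < ξ then rec α hα else 0))).lim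
  let y : C → AddCircle (1 : ℝ) := (wellFounded_lt (α := C)).fix F
  have hy : ∀ ξ, y ξ = F ξ (fun α _ => y α) := fun ξ => WellFounded.fix_eq _ F ξ
  refine ⟨y, ?_, ?_⟩
  · intro ξ hξ
    rw [hy]
    simp only [F, if_pos hξ]
  · intro ξ hξ hlt
    have h1 : y ξ = ((u ξ).map (fun k => evT y (h ξ k))).lim := by
      rw [hy]
      simp only [F, if_neg hξ]
      congr 2
      funext k
      rw [evT_apply]
      refine Finset.sum_congr rfl fun α hα => ?_
      rw [dif_pos (hlt k α hα)]
    intro W hW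
    rw [h1] at hW
    exact Ultrafilter.le_nhds_lim ((u ξ).map (fun k => evT y (h ξ k))) hW

lemma exists_infinite_notMem (B : Set (Set ℕ)) (hB : B.Countable) :
    ∃ A : Set ℕ, A.Infinite ∧ A ∉ B := by
  by_contra hcon
  push Not at hcon
  have h1 : {A : Set ℕ | A.Finite}.Countable := Set.Countable.ofPred_finite
  have h2 : (Set.univ : Set (Set ℕ)).Countable := by
    refine (h1.union hB).mono fun A _ => ?_
    by_cases hA : A.Finite
    · exact Or.inl hA
    · exact Or.inr (hcon A hA)
  have h3 : Countable (Set ℕ) := Set.countable_univ_iff.1 h2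
  obtain ⟨f, hf⟩ := Countable.exists_injective_nat (Set ℕ)
  exact Function.cantor_injective f hf

lemma isTower_singleton (A : Set ℕ) (hA : A.Infinite) : IsTower [A] := by
  refine ⟨by simpa using hA, ?_⟩
  intro i hi
  simp at hi

lemma nonconst_of_li (κ : Cardinal) (p : Ultrafilter ℕ) (Jn : Set (Idx κ))
    (h : Idx κ → (ℕ → GZ κ))
    (hli : LinearIndependent ℚ
      (Sum.elim (fun ξ : Jn => cls κ p (h ↑ξ)) (fun ζ : Idx κ => clsChi κ p ζ)))
    (m : Jn →₀ ℤ) (hm : m ≠ 0) (a : GZ κ) :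
    ¬ ∀ᶠ n in (p : Filter ℕ), (m.sum fun i c => c • h i n) = a := by
  classical
  intro hev
  rw [linearIndependent_sum] at hli
  obtain ⟨h1, -, h3⟩ := hli
  simp only [Sum.elim_comp_inl, Sum.elim_comp_inr] at h1 h3
  have e1 : clsHom κ p (∑ i ∈ m.support, m i • h i) = clsHom κ p (fun _ => a) := by
    show cls κ p _ = cls κ p _
    unfold cls
    rw [Filter.Germ.coe_eq]
    filter_upwards [hev] with n hn
    rw [← hn]
    simp [Finsupp.sum, Finset.sum_apply]
  have e2 : (fun _ => a : ℕ → GZ κ) = ∑ ζ ∈ a.support, a ζ • (fun _ => chi κ ζ : ℕ → GZ κ) := by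
    funext n
    rw [Finset.sum_apply]
    conv_lhs => rw [← Finsupp.sum_single a]
    rw [Finsupp.sum]
    refine Finset.sum_congr rfl fun ζ _ => ?_
    simp [chi]
  rw [e2] at e1
  simp only [map_sum, map_zsmul] at e1
  have e3 : ∑ i ∈ m.support, m i • clsHom κ p (h i)
      ∈ Submodule.span ℚ (Set.range fun ξ : Jn => cls κ p (h ↑ξ)) := by
    refine Submodule.sum_mem _ fun i _ => ?_
    have hmem : clsHom κ p (h i) ∈ Submodule.span ℚ (Set.range fun ξ : Jn => cls κ p (h ↑ξ)) :=
      Submodule.subset_span ⟨i, rfl⟩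
    exact zsmul_mem hmem _
  have e4 : ∑ ζ ∈ a.support, a ζ • clsHom κ p (fun _ => chi κ ζ)
      ∈ Submodule.span ℚ (Set.range fun ζ : Idx κ => clsChi κ p ζ) := by
    refine Submodule.sum_mem _ fun i _ => ?_
    have hmem : clsHom κ p (fun _ => chi κ i)
        ∈ Submodule.span ℚ (Set.range fun ζ : Idx κ => clsChi κ p ζ) :=
      Submodule.subset_span ⟨i, rfl⟩
    exact zsmul_mem hmem _
  have e5 := Submodule.disjoint_def.1 h3 _ e3 (by rw [e1]; exact e4)
  apply hm
  rw [linearIndependent_iff'] at h1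
  ext i
  by_cases hi : i ∈ m.support
  · have := h1 m.support (fun i => (m i : ℚ)) (by
      rw [← e5]
      refine Finset.sum_congr rfl fun j _ => ?_
      rw [Int.cast_smul_eq_zsmul]; rfl) i hi
    simpa using this
  · simpa using hi

theorem statement15 (κ : Cardinal) (hκ : ℵ₀ ≤ κ) (hpow : κ ^ ℵ₀ = κ)
    (p : List (Set ℕ) → ℕ → Ultrafilter ℕ)
    (hsel : ∀ T, IsTower T → ∀ n, IsSelective (p T n))
    (hinc : ∀ T T', IsTower T → IsTower T' → ∀ n n' : ℕ, (T, n) ≠ (T', n') →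
      RKIncomp (p T n) (p T' n'))
    (hlast : ∀ T, IsTower T → ∀ n, lastOf T ∈ p T n)
    (h : Idx κ → (ℕ → GZ κ))
    (henum : ∀ g : ℕ → GZ κ, ∃ ξ : Idx κ, Ordinal.omega0 ≤ (ξ : Ordinal) ∧ h ξ = g)
    (hsupp : ∀ ξ : Idx κ, Ordinal.omega0 ≤ (ξ : Ordinal) → ∀ n : ℕ,
      ∀ α ∈ (h ξ n).support, (α : Ordinal) < (ξ : Ordinal))
    (J : List (Set ℕ) → ℕ → Set (Idx κ))
    (hJω : ∀ T, IsTower T → ∀ n : ℕ, ∀ ξ ∈ J T n, Ordinal.omega0 ≤ (ξ : Ordinal))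
    (hJdisj : ∀ T T', IsTower T → IsTower T' → ∀ n n' : ℕ, (T, n) ≠ (T', n') →
      Disjoint (J T n) (J T' n'))
    (hJne : {Tn : List (Set ℕ) × ℕ | IsTower Tn.1 ∧ (J Tn.1 Tn.2).Nonempty}.Infinite)
    (hJdist : ∀ T, IsTower T → ∀ n : ℕ, ∀ ξ ∈ J T n, ∀ ζ ∈ J T n, ξ ≠ ζ →
      cls κ (p T n) (h ξ) ≠ cls κ (p T n) (h ζ))
    (hJli : ∀ T, IsTower T → ∀ n : ℕ, LinearIndependent ℚ
      (Sum.elim (fun ξ : J T n => cls κ (p T n) (h ↑ξ))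
        (fun ζ : Idx κ => clsChi κ (p T n) ζ)))
    (d : GZ κ) (hd : d ≠ 0) (r : ℕ → GZ κ) (hr : Function.Injective r) :
    ∃ φ : GZ κ →+ AddCircle (1 : ℝ),
      φ d ≠ 0 ∧
      (∀ T : List (Set ℕ), IsTower T → ∀ n : ℕ, ∀ ξ ∈ J T n,
        IsPLim (p T n) (fun k => φ (h ξ k)) (φ (chi κ ξ))) ∧
      ¬ ∃ l : AddCircle (1 : ℝ),
        Filter.Tendsto (fun n => φ (r n)) Filter.atTop (nhds l) := by


  classical
  obtain ⟨S, hSc, hS0, hScl⟩ := countable_closed h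
    ((d.support : Set (Idx κ)) ∪ ⋃ k, ((r k).support : Set (Idx κ)))
    ((Finset.countable_toSet _).union (Set.countable_iUnion fun k => Finset.countable_toSet _))
  -- the relevant ultrafilters
  let Bad : Set (List (Set ℕ) × ℕ) := {Tn | IsTower Tn.1 ∧ (J Tn.1 Tn.2 ∩ S).Nonempty}
  have hBad : Bad.Countable := by
    have h1 : (⋃ ξ ∈ S, {Tn : List (Set ℕ) × ℕ | IsTower Tn.1 ∧ ξ ∈ J Tn.1 Tn.2}).Countable := by
      refine hSc.biUnion fun ξ _ => Set.Subsingleton.countable ?_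
      rintro ⟨T, n⟩ ⟨hT, hn⟩ ⟨T', n'⟩ ⟨hT', hn'⟩
      by_contra hne
      exact Set.disjoint_left.1 (hJdisj T T' hT hT' n n' hne) hn hn'
    refine h1.mono ?_
    rintro Tn ⟨hT, ξ, hξJ, hξS⟩
    exact Set.mem_biUnion hξS ⟨hT, hξJ⟩
  obtain ⟨A, hAinf, hAB⟩ := exists_infinite_notMem ((fun Tn : List (Set ℕ) × ℕ => lastOf Tn.1) '' Bad)
    (hBad.image _)
  have hAtower := isTower_singleton A hAinf
  have hspare : ∀ n, ∀ ξ ∈ J [A] n, ξ ∉ S := by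
    intro n ξ hξ hξS
    apply hAB
    exact ⟨([A], n), ⟨hAtower, ξ, hξ, hξS⟩, by simp [lastOf]⟩
  let L : Set (List (Set ℕ) × ℕ) := Bad ∪ Set.range fun n : ℕ => ([A], n)
  have hLc : L.Countable := hBad.union (Set.countable_range _)
  have hLinf : L.Infinite := by
    refine Set.Infinite.mono Set.subset_union_right (Set.infinite_range_of_injective ?_)
    intro a b hab
    exact (Prod.mk.inj hab).2
  have hLtower : ∀ Tn ∈ L, IsTower Tn.1 := by
    rintro Tn (hTn | ⟨n, rfl⟩)
    · exact hTn.1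
    · exact hAtower
  have : Countable L := hLc.to_subtype
  have : Infinite L := hLinf.to_subtype
  obtain ⟨hden⟩ := nonempty_denumerable L
  let ν : L ≃ ℕ := Denumerable.eqv L
  let q : ℕ → Ultrafilter ℕ := fun k => p (ν.symm k).1.1 (ν.symm k).1.2
  have hνne : ∀ k l, k ≠ l → ((ν.symm k).1.1, (ν.symm k).1.2) ≠ ((ν.symm l).1.1, (ν.symm l).1.2) := by
    intro k l hkl heq
    exact hkl (ν.symm.injective (Subtype.ext heq))
  let I := {ξ : Idx κ // ξ ∈ S ∧ ∃ Tn : L, ξ ∈ J Tn.1.1 Tn.1.2}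
  have : Countable I := by
    have : Countable S := hSc.to_subtype
    exact Function.Injective.countable (f := fun i : I => (⟨i.1, i.2.1⟩ : S))
      (fun a b hab => Subtype.ext (congrArg (fun z : S => z.1) hab))
  let sp : Bool → L := fun b => ⟨([A], if b then 1 else 0), Or.inr ⟨_, rfl⟩⟩
  have hspinj : Function.Injective sp := by
    intro a b hab
    have : (if a then 1 else 0 : ℕ) = if b then 1 else 0 := (Prod.mk.inj (Subtype.ext_iff.1 hab)).2
    revert this
    cases a <;> cases b <;> simp
  let own : I ⊕ Bool → ℕ := Sum.elim (fun i => ν i.2.2.choose) (fun b => ν (sp b))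
  have hownI : ∀ i : I, i.1 ∈ J (ν.symm (own (Sum.inl i))).1.1 (ν.symm (own (Sum.inl i))).1.2 := by
    intro i
    simp only [own, Sum.elim_inl, Equiv.symm_apply_apply]
    exact i.2.2.choose_spec
  let f : I ⊕ Bool → ℕ → GZ κ := Sum.elim (fun i => h i.1) (fun _ => r)
  let t : I ⊕ Bool → GZ κ := Sum.elim (fun i => chi κ i.1) (fun b => if b then d else 0)
  have hqsel : ∀ k, IsSelective (q k) := fun k => hsel _ (hLtower _ (ν.symm k).2) _
  obtain ⟨x, hxd, hx⟩ := main_countable q hqsel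
    (fun k l hkl => hinc _ _ (hLtower _ (ν.symm k).2) (hLtower _ (ν.symm l).2) _ _ (hνne k l hkl))
    own f t (by
      intro k m hmk hm a hev
      by_cases hb : ∃ b, own (Sum.inr b) = k
      · obtain ⟨b, hb⟩ := hb
        have hk : ν.symm k = sp b := by rw [← hb]; simp [own]
        have hsupp' : ∀ i ∈ m.support, i = Sum.inr b := by
          intro i hi
          have hi' := hmk i hi
          rcases i with i | b'
          · exfalso
            have := hownI i
            rw [hi', hk] at this
            exact hspare _ _ this i.2.1
          · congr 1
            apply hspinj
            apply ν.injective
            exact hi'.trans hb.symm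
        have hmb : m = Finsupp.single (Sum.inr b) (m (Sum.inr b)) := by
          rw [Finsupp.eq_single_iff]
          refine ⟨fun i hi => ?_, rfl⟩
          simpa using hsupp' i hi
        have hmb0 : m (Sum.inr b) ≠ 0 := by
          intro h0
          rw [h0, Finsupp.single_zero] at hmb
          exact hm hmb
        rw [hmb] at hev
        simp only [zero_smul, Finsupp.sum_single_index] at hev
        refine finite_notMem (free_le_atTop (hqsel k).1) (s := {n | m (Sum.inr b) • r n = a}) ?_ hev
        apply Set.Subsingleton.finite
        intro n hn n' hn'
        apply hr
        exact smul_right_injective _ hmb0 (Eq.trans hn hn'.symm)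
      · push Not at hb
        have hT := hLtower _ (ν.symm k).2
        have hin : ∀ i ∈ m.support, ∃ j : J (ν.symm k).1.1 (ν.symm k).1.2,
            ∃ hj, i = Sum.inl (⟨j.1, hj⟩ : I) := by
          intro i hi
          have hi' := hmk i hi
          rcases i with i | b'
          · refine ⟨⟨i.1, ?_⟩, i.2, rfl⟩
            rw [← hi']; exact hownI i
          · exact absurd hi' (hb b')
        let g : I ⊕ Bool → Option (J (ν.symm k).1.1 (ν.symm k).1.2) := fun i =>
          Sum.elim (fun i : I => if hi : i.1 ∈ J (ν.symm k).1.1 (ν.symm k).1.2 then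
            some ⟨i.1, hi⟩ else none) (fun _ => none) i
        let m' : J (ν.symm k).1.1 (ν.symm k).1.2 →₀ ℤ :=
          m.sum fun i c => (g i).elim 0 fun j => Finsupp.single j c
        have hgk : ∀ (j : J (ν.symm k).1.1 (ν.symm k).1.2) (hj), g (Sum.inl (⟨j.1, hj⟩ : I)) = some j := by
          intro j hj
          simp [g, j.2]
        have hm' : ∀ (j : J (ν.symm k).1.1 (ν.symm k).1.2) (hj),
            m' j = m (Sum.inl (⟨j.1, hj⟩ : I)) := by
          intro j hj
          simp only [m', Finsupp.sum, Finsupp.finsetSum_apply]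
          rw [Finset.sum_eq_single (Sum.inl (⟨j.1, hj⟩ : I))]
          · rw [hgk]; simp
          · intro i hi hne
            obtain ⟨j', hj', rfl⟩ := hin i hi
            rw [hgk]
            simp only [Option.elim_some]
            rw [Finsupp.single_apply, if_neg]
            rintro rfl
            exact hne rfl
          · intro hi
            rw [hgk]
            simp [Finsupp.notMem_support_iff.1 hi]
        refine nonconst_of_li κ (q k) _ h (hJli _ hT _) m' ?_ a ?_
        · intro h0
          apply hm
          ext i
          by_cases hi : i ∈ m.support
          · obtain ⟨j, hj, rfl⟩ := hin i hi
            rw [← hm' j hj, h0]; rfl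
          · simpa using hi
        · filter_upwards [hev] with n hn
          rw [← hn]
          simp only [m']
          rw [Finsupp.sum_sum_index (by simp) (by intros; rw [add_smul])]
          refine Finset.sum_congr rfl fun i hi => ?_
          obtain ⟨j, hj, rfl⟩ := hin i hi
          beta_reduce
          rw [hgk]
          simp [f])
    d hd
  -- extension
  let u : Idx κ → Ultrafilter ℕ := fun ξ =>
    if hξ : ∃ Tn : List (Set ℕ) × ℕ, IsTower Tn.1 ∧ ξ ∈ J Tn.1 Tn.2 then
      p hξ.choose.1 hξ.choose.2 else p [] 0
  have hu : ∀ T, IsTower T → ∀ n, ∀ ξ ∈ J T n, u ξ = p T n := by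
    intro T hT n ξ hξ
    have hex : ∃ Tn : List (Set ℕ) × ℕ, IsTower Tn.1 ∧ ξ ∈ J Tn.1 Tn.2 := ⟨(T, n), hT, hξ⟩
    have heq : hex.choose = (T, n) := by
      by_contra hne
      exact Set.disjoint_left.1 (hJdisj _ T hex.choose_spec.1 hT _ n hne) hex.choose_spec.2 hξ
    simp only [u, dif_pos hex]
    rw [heq]
  obtain ⟨y, hyS, hy⟩ := extend_lim h S x u
  have hagree : ∀ g : GZ κ, (∀ α ∈ g.support, α ∈ S) → evT y g = evT x g := by
    intro g hg
    rw [evT_apply, evT_apply]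
    exact Finset.sum_congr rfl fun α hα => by rw [hyS α (hg α hα)]
  have hdS : evT y d = evT x d := hagree d fun α hα => hS0 (Or.inl hα)
  have hrS : ∀ n, evT y (r n) = evT x (r n) := fun n =>
    hagree (r n) fun α hα => hS0 (Or.inr (Set.mem_iUnion.2 ⟨n, hα⟩))
  have hchi : ∀ (z : Idx κ → AddCircle (1 : ℝ)) ξ, evT z (chi κ ξ) = z ξ := by
    intro z ξ
    rw [chi, evT_single, one_smul]
  refine ⟨evT y, by rw [hdS]; exact hxd, ?_, ?_⟩
  · intro T hT n ξ hξ
    by_cases hξS : ξ ∈ S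
    · have hTL : (T, n) ∈ L := Or.inl ⟨hT, ξ, hξ, hξS⟩
      let i : I := ⟨ξ, hξS, ⟨(T, n), hTL⟩, hξ⟩
      have hqi : q (own (Sum.inl i)) = p T n := by
        have h1 := hownI i
        have h2 : (ν.symm (own (Sum.inl i))).1 = (T, n) := by
          by_contra hne
          exact Set.disjoint_left.1 (hJdisj _ T (hLtower _ (ν.symm _).2) hT _ n hne) h1 hξ
        simp only [q]
        rw [h2]
      have := hx (Sum.inl i)
      rw [hqi] at this
      rw [hchi, hyS ξ hξS, ← hchi x]
      have h3 : (fun k => evT y (h ξ k)) = fun k => evT x (h ξ k) :=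
        funext fun k => hagree _ (hScl ξ hξS k)
      rw [h3]
      exact this
    · rw [hchi, ← hu T hT n ξ hξ]
      exact hy ξ hξS fun k α hα => hsupp ξ (hJω T hT n ξ hξ) k α hα
  · rintro ⟨l, hl⟩
    simp only [hrS] at hl
    have key : ∀ b, l = evT x (t (Sum.inr b)) := by
      intro b
      have h1 : Tendsto (fun n => evT x (r n)) (q (own (Sum.inr b)) : Filter ℕ)
          (nhds (evT x (t (Sum.inr b)))) := fun W hW => hx (Sum.inr b) W hW
      have h2 := hl.mono_left (free_le_atTop (hqsel (own (Sum.inr b))).1)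
      exact tendsto_nhds_unique h2 h1
    have h1 := key true
    have h2 := key false
    simp only [t, Sum.elim_inr, if_true, map_zero, Bool.false_eq_true, if_false] at h1 h2
    exact hxd (h1.symm.trans h2)

end
end
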